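/- Let G ⊆ ℝ^n be a connected definable group in an o-minimal expansion of the real ordered field, regarded as a topological group with the subspace topology. Let σ₀, σ₁ : [0,1] → G be continuous definable paths with the same endpoints which are homotopic relative to their endpoints. Then there exists a continuous definable homotopy F : [0,1] × [0,1] → G relative to the endpoints with F(0, ·) = σ₀ and F(1, ·) = σ₁. -/

import Mathlib

open FirstOrder

/-- A set of reals is a finite union of singletons and open intervals (possibly unbounded). -/
def IsFiniteUnionOfPointsAndIntervals (s : Set ℝ) : Prop :=
  ∃ (k : ℕ) (f : Fin k → Set ℝ),
    (∀ i, (∃ a, f i = {a}) ∨ (∃ a b, f i = Set.Ioo a b) ∨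
      (∃ a, f i = Set.Iio a) ∨ (∃ a, f i = Set.Ioi a) ∨ f i = Set.univ) ∧
    s = ⋃ i, f i

/-- An o-minimal expansion of the real ordered field: a first-order language together with
an interpretation on `ℝ` in which the graphs of addition and multiplication and the order
relation are definable without parameters, and every subset of `ℝ` definable with parameters
is a finite union of singletons and open intervals. -/
structure OMinimalRealExpansion : Type 1 where
  L : FirstOrder.Language.{0, 0}
  str : L.Structure ℝ
  definable_add : @Set.Definable ℝ (∅ : Set ℝ) L str _ {x : Fin 3 → ℝ | x 0 + x 1 = x 2}
  definable_mul : @Set.Definable ℝ (∅ : Set ℝ) L str _ {x : Fin 3 → ℝ | x 0 * x 1 = x 2}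
  definable_lt : @Set.Definable ℝ (∅ : Set ℝ) L str _ {x : Fin 2 → ℝ | x 0 < x 1}
  o_minimal : ∀ s : Set ℝ,
    @Set.Definable ℝ (Set.univ : Set ℝ) L str _ {x : Fin 1 → ℝ | x 0 ∈ s} →
    IsFiniteUnionOfPointsAndIntervals s

/-- `S.DefSet s` : the set `s` is definable with parameters in the o-minimal structure `S`. -/
def OMinimalRealExpansion.DefSet (S : OMinimalRealExpansion) {α : Type} (s : Set (α → ℝ)) :
    Prop :=
  @Set.Definable ℝ (Set.univ : Set ℝ) S.L S.str α s

/-- A definable group in an o-minimal expansion of the reals: a definable subset of `ℝⁿ`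
together with a group structure whose multiplication has definable graph.  It is regarded as a
topological group with the subspace topology from `ℝⁿ`. -/
def IsDefinableGroup (S : OMinimalRealExpansion) {n : ℕ} (c : Set (Fin n → ℝ)) [Group c] :
    Prop :=
  S.DefSet {x : Fin n → ℝ | x ∈ c} ∧
  S.DefSet {x : Fin 3 × Fin n → ℝ | ∃ a b : c,
    ((a : Fin n → ℝ) = fun j => x (0, j)) ∧ ((b : Fin n → ℝ) = fun j => x (1, j)) ∧
    ((↑(a * b) : Fin n → ℝ) = fun j => x (2, j))}

/-- A topological group (in particular, a Lie group) is Lie-isomorphic to a definable group if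
there is a group isomorphism with a definable group in some o-minimal expansion of the real
ordered field which is also a homeomorphism. -/
def IsLieIsomorphicToDefinableGroup (G : Type*) [Group G] [TopologicalSpace G] : Prop :=
  ∃ (S : OMinimalRealExpansion) (n : ℕ) (c : Set (Fin n → ℝ)) (grp : Group c),
    letI := grp
    IsDefinableGroup S c ∧ ∃ e : G ≃* c, Continuous e ∧ Continuous e.symm

/-- A subgroup of `GL_m(ℝ)` which is a definable subset of the matrix space `M_m(ℝ)` in the
o-minimal structure `S`. -/
def IsDefinableSubgroupOfGL (S : OMinimalRealExpansion) (m : ℕ)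
    (G₁ : Subgroup (GL (Fin m) ℝ)) : Prop :=
  S.DefSet {x : Fin m × Fin m → ℝ | ∃ g : GL (Fin m) ℝ, g ∈ G₁ ∧
    ∀ p : Fin m × Fin m, (g : Matrix (Fin m) (Fin m) ℝ) p.1 p.2 = x p}

/-- A topological group is Lie-isomorphic to a definably linear group if there are `m`, an
o-minimal expansion of the real ordered field, a subgroup `G₁` of `GL_m(ℝ)` which is a
definable subset of `M_m(ℝ)`, and a group isomorphism onto `G₁` that is a homeomorphism. -/
def IsLieIsomorphicToDefinablyLinearGroup (G : Type*) [Group G] [TopologicalSpace G] : Prop :=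
  ∃ (m : ℕ) (S : OMinimalRealExpansion) (G₁ : Subgroup (GL (Fin m) ℝ)),
    IsDefinableSubgroupOfGL S m G₁ ∧ ∃ e : G ≃* G₁, Continuous e ∧ Continuous e.symm



open FirstOrder Set Filter Topology

/-- Coordinate spaces: metric spaces isometric to a finite power of `ℝ`. -/
class DSp (E : Type) [MetricSpace E] where
  ι : Type
  fin : Fintype ι
  coord : E ≃ᵢ (ι → ℝ)

attribute [reducible, instance] DSp.fin

instance instDSpReal : DSp ℝ where
  ι := Unit
  fin := inferInstance
  coord := (IsometryEquiv.funUnique Unit ℝ).symm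

instance instDSpPi {κ : Type} [Fintype κ] : DSp (κ → ℝ) where
  ι := κ
  fin := inferInstance
  coord := IsometryEquiv.refl _

section calculus

variable {E F G H : Type} [MetricSpace E] [DSp E] [MetricSpace F] [DSp F] [MetricSpace G] [DSp G]
  [MetricSpace H] [DSp H]

noncomputable def prodCoord : E × F ≃ᵢ (DSp.ι E ⊕ DSp.ι F → ℝ) where
  toFun p := Sum.elim (DSp.coord p.1) (DSp.coord p.2)
  invFun v := (DSp.coord.symm (v ∘ Sum.inl), DSp.coord.symm (v ∘ Sum.inr))
  left_inv p := by simp [Sum.elim_comp_inl, Sum.elim_comp_inr]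
  right_inv v := by simp
  isometry_toFun := by
    have h := (IsometryEquiv.sumArrowIsometryEquivProdArrow (α := DSp.ι E) (β := DSp.ι F) (γ := ℝ)).symm.isometry
    refine h.comp (f := fun p : E × F => (DSp.coord p.1, DSp.coord p.2)) ?_
    exact (DSp.coord (E := E)).isometry.prodMap (DSp.coord (E := F)).isometry

noncomputable instance instDSpProd : DSp (E × F) where
  ι := DSp.ι E ⊕ DSp.ι F
  fin := inferInstance
  coord := prodCoord

/-- Definable predicates. -/
def D (St : OMinimalRealExpansion) (P : E → Prop) : Prop :=
  St.DefSet {v : DSp.ι E → ℝ | P (DSp.coord.symm v)}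

/-- Definable functions. -/
@[fun_prop]
def DF (St : OMinimalRealExpansion) (f : E → F) : Prop :=
  D St (fun p : E × F => f p.1 = p.2)

variable {St : OMinimalRealExpansion}

theorem DefSet_congr {α : Type} {s t : Set (α → ℝ)}
    (h : @Set.Definable ℝ (Set.univ : Set ℝ) St.L St.str α s) (hst : s = t) : St.DefSet t :=
  hst ▸ h

theorem D.and {P Q : E → Prop} (hP : D St P) (hQ : D St Q) : D St (fun x => P x ∧ Q x) := by
  let _ := St.str
  exact Set.Definable.inter hP hQ

theorem D.or {P Q : E → Prop} (hP : D St P) (hQ : D St Q) : D St (fun x => P x ∨ Q x) := by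
  let _ := St.str
  exact Set.Definable.union hP hQ

theorem D.not {P : E → Prop} (hP : D St P) : D St (fun x => ¬ P x) := by
  let _ := St.str
  exact Set.Definable.compl hP

theorem D.congr {P Q : E → Prop} (hP : D St P) (h : ∀ x, Q x ↔ P x) : D St Q := by
  have : Q = P := funext fun x => propext (h x)
  rwa [this]

theorem D.imp {P Q : E → Prop} (hP : D St P) (hQ : D St Q) : D St (fun x => P x → Q x) :=
  (hP.not.or hQ).congr fun x => by tauto

theorem D.iff {P Q : E → Prop} (hP : D St P) (hQ : D St Q) : D St (fun x => P x ↔ Q x) :=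
  ((hP.imp hQ).and (hQ.imp hP)).congr fun x => by tauto

theorem D.const (p : Prop) : D St (fun _ : E => p) := by
  let _ := St.str
  by_cases h : p
  · simp only [h]
    exact Set.definable_univ
  · simp only [h]
    exact Set.definable_empty

theorem D.allFin {κ : Type} [Finite κ] {P : κ → E → Prop} (hP : ∀ i, D St (P i)) :
    D St (fun x => ∀ i, P i x) := by
  let _ := St.str
  have := Set.definable_iInter_of_finite (L := St.L) (A := (Set.univ : Set ℝ)) hP
  refine DefSet_congr this ?_
  ext v; simp

theorem D.exFin {κ : Type} [Finite κ] {P : κ → E → Prop} (hP : ∀ i, D St (P i)) :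
    D St (fun x => ∃ i, P i x) :=
  (D.allFin fun i => (hP i).not).not.congr fun x => by simp

/-- Maps that only permute/copy/forget coordinates. -/
theorem D.reindex {P : F → Prop} (hP : D St P) (f : E → F) (g : DSp.ι F → DSp.ι E)
    (h : ∀ v : DSp.ι E → ℝ, f (DSp.coord.symm v) = DSp.coord.symm (v ∘ g)) :
    D St (fun x => P (f x)) := by
  let _ := St.str
  have := Set.Definable.preimage_comp g hP
  refine DefSet_congr this ?_
  ext v
  simp [h]

theorem D.exists {P : E → F → Prop} (hP : D St (fun p : E × F => P p.1 p.2)) :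
    D St (fun x => ∃ y, P x y) := by
  let _ := St.str
  have := Set.Definable.exists_of_finite hP
  refine DefSet_congr this ?_
  ext v
  simp only [mem_ofPred_eq]
  constructor
  · rintro ⟨u, hu⟩
    exact ⟨DSp.coord.symm u, hu⟩
  · rintro ⟨y, hy⟩
    refine ⟨DSp.coord y, ?_⟩
    change P (DSp.coord.symm v) (DSp.coord.symm (DSp.coord y))
    simpa using hy

theorem D.forall {P : E → F → Prop} (hP : D St (fun p : E × F => P p.1 p.2)) :
    D St (fun x => ∀ y, P x y) := by
  have := (D.exists (P := fun x y => ¬ P x y) hP.not).not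
  exact this.congr fun x => by simp

theorem D.fst {P : E → Prop} (hP : D St P) : D St (fun p : E × F => P p.1) :=
  hP.reindex (fun p : E × F => p.1) Sum.inl (fun _ => rfl)

theorem D.snd {P : F → Prop} (hP : D St P) : D St (fun p : E × F => P p.2) :=
  hP.reindex (fun p : E × F => p.2) Sum.inr (fun _ => rfl)

theorem D.eqCoord : D St (fun p : E × E => p.1 = p.2) := by
  let _ := St.str
  have h : ∀ i : DSp.ι E, (Set.univ : Set ℝ).Definable St.L
      {v : DSp.ι E ⊕ DSp.ι E → ℝ | v (Sum.inl i) = v (Sum.inr i)} := by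
    intro i
    have := (Set.Definable.diagonal (M := ℝ) (L := St.L) (A := (Set.univ : Set ℝ)))
    exact this.preimage_comp ![Sum.inl i, Sum.inr i]
  have := Set.definable_iInter_of_finite h
  refine DefSet_congr this ?_
  ext v
  simp only [mem_iInter, mem_ofPred_eq]
  change _ ↔ DSp.coord.symm (v ∘ Sum.inl) = DSp.coord.symm (v ∘ Sum.inr)
  rw [(DSp.coord (E := E)).symm.injective.eq_iff, funext_iff]
  rfl

theorem D.comp {P : F → Prop} {f : E → F} (hP : D St P) (hf : DF St f) :
    D St (fun x => P (f x)) :=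
  (D.exists (P := fun x y => f x = y ∧ P y) (D.and hf hP.snd)).congr fun x => by simp

theorem DF.of_graph {f : E → F} (h : D St (fun p : E × F => f p.1 = p.2)) : DF St f := h

@[fun_prop]
theorem DF.id' : DF St (fun x : E => x) := D.eqCoord

@[fun_prop]
theorem DF.comp' {f : F → G} {g : E → F} (hf : DF St f) (hg : DF St g) :
    DF St (fun x => f (g x)) := by
  refine (D.exists (P := fun (p : E × G) y => g p.1 = y ∧ f y = p.2) (D.and ?_ ?_)).congr
    fun x => by simp
  · exact D.reindex hg (fun p : (E × G) × F => (p.1.1, p.2))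
      (Sum.elim (Sum.inl ∘ Sum.inl) Sum.inr) (fun _ => rfl)
  · exact D.reindex hf (fun p : (E × G) × F => (p.2, p.1.2))
      (Sum.elim Sum.inr (Sum.inl ∘ Sum.inr)) (fun _ => rfl)

@[fun_prop]
theorem DF.const' (c : F) : DF St (fun _ : E => c) := by
  let _ := St.str
  have h : ∀ i : DSp.ι F, (Set.univ : Set ℝ).Definable St.L
      {v : DSp.ι E ⊕ DSp.ι F → ℝ | v (Sum.inr i) = DSp.coord c i} := by
    intro i
    have := (Set.Definable.singleton_of_mem (M := ℝ) (L := St.L) (A := (Set.univ : Set ℝ))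
      (a := DSp.coord c i) (mem_univ _))
    exact (this.preimage_comp (fun _ => Sum.inr i))
  have := Set.definable_iInter_of_finite h
  refine DefSet_congr this ?_
  ext v
  simp only [mem_iInter, mem_ofPred_eq]
  change _ ↔ c = DSp.coord.symm (v ∘ Sum.inr)
  rw [IsometryEquiv.eq_symm_apply, funext_iff]
  exact forall_congr' fun i => eq_comm

@[fun_prop]
theorem DF.prodMk {f : E → F} {g : E → G} (hf : DF St f) (hg : DF St g) :
    DF St (fun x => (f x, g x)) := by
  refine (D.and (P := fun p : E × (F × G) => f p.1 = p.2.1)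
    (Q := fun p : E × (F × G) => g p.1 = p.2.2) ?_ ?_).congr fun x => by simp [Prod.ext_iff]
  · exact D.reindex hf (fun p : E × (F × G) => (p.1, p.2.1))
      (Sum.elim Sum.inl (Sum.inr ∘ Sum.inl)) (fun _ => rfl)
  · exact D.reindex hg (fun p : E × (F × G) => (p.1, p.2.2))
      (Sum.elim Sum.inl (Sum.inr ∘ Sum.inr)) (fun _ => rfl)

theorem DF.reindex (f : E → F) (g : DSp.ι F → DSp.ι E)
    (h : ∀ v : DSp.ι E → ℝ, f (DSp.coord.symm v) = DSp.coord.symm (v ∘ g)) : DF St f := by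
  refine D.reindex (D.eqCoord (E := F)) (fun p : E × F => (f p.1, p.2))
    (Sum.elim (Sum.inl ∘ g) Sum.inr) (fun v => ?_)
  have := h (v ∘ Sum.inl)
  change (f (DSp.coord.symm (v ∘ Sum.inl)), _) = _
  rw [this]; rfl

theorem DF.fst' : DF St (fun p : E × F => p.1) := DF.reindex _ Sum.inl (fun _ => rfl)
theorem DF.snd' : DF St (fun p : E × F => p.2) := DF.reindex _ Sum.inr (fun _ => rfl)

@[fun_prop]
theorem DF.fst {f : E → F × G} (hf : DF St f) : DF St (fun p => (f p).1) :=
  DF.comp' (f := Prod.fst) DF.fst' hf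
@[fun_prop]
theorem DF.snd {f : E → F × G} (hf : DF St f) : DF St (fun p => (f p).2) :=
  DF.comp' (f := Prod.snd) DF.snd' hf

@[fun_prop]
theorem DF.eval' {κ : Type} [Fintype κ] (i : κ) : DF St (fun v : κ → ℝ => v i) :=
  DF.reindex _ (fun _ => i) (fun _ => rfl)

theorem DF.eval {κ : Type} [Fintype κ] (i : κ) {f : E → κ → ℝ} (hf : DF St f) :
    DF St (fun x => f x i) := DF.comp' (DF.eval' i) hf

theorem D.eq {f g : E → F} (hf : DF St f) (hg : DF St g) : D St (fun x => f x = g x) :=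
  D.comp (P := fun p : F × F => p.1 = p.2) D.eqCoord (hf.prodMk hg)

@[fun_prop]
theorem DF.pi {κ : Type} [Fintype κ] {f : E → κ → ℝ} (hf : ∀ i, DF St (fun x => f x i)) :
    DF St f := by
  refine (D.allFin (P := fun i (p : E × (κ → ℝ)) => f p.1 i = p.2 i) fun i => ?_).congr
    fun x => funext_iff
  have := hf i
  exact D.eq (by fun_prop) (by fun_prop)

theorem DF.coordi {f : E → F} (hf : DF St f) : DF St (fun x => DSp.coord (f x)) := by
  refine DF.comp' (f := fun y : F => DSp.coord y) ?_ hf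
  exact DF.reindex _ (fun i => i) (fun v => by simp; rfl)

theorem D.lt' : D St (fun p : ℝ × ℝ => p.1 < p.2) := by
  let _ := St.str
  exact (St.definable_lt.mono (Set.empty_subset _)).preimage_comp ![Sum.inl (), Sum.inr ()]

theorem D.lt {f g : E → ℝ} (hf : DF St f) (hg : DF St g) : D St (fun x => f x < g x) :=
  D.comp (P := fun p : ℝ × ℝ => p.1 < p.2) D.lt' (hf.prodMk hg)

theorem D.le {f g : E → ℝ} (hf : DF St f) (hg : DF St g) : D St (fun x => f x ≤ g x) :=
  (D.lt hg hf).not.congr fun x => by simp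

theorem DF.add' : DF St (fun p : ℝ × ℝ => p.1 + p.2) := by
  let _ := St.str
  exact (St.definable_add.mono (Set.empty_subset _)).preimage_comp
    ![Sum.inl (Sum.inl ()), Sum.inl (Sum.inr ()), Sum.inr ()]

theorem DF.mul' : DF St (fun p : ℝ × ℝ => p.1 * p.2) := by
  let _ := St.str
  exact (St.definable_mul.mono (Set.empty_subset _)).preimage_comp
    ![Sum.inl (Sum.inl ()), Sum.inl (Sum.inr ()), Sum.inr ()]

@[fun_prop]
theorem DF.add {f g : E → ℝ} (hf : DF St f) (hg : DF St g) : DF St (fun x => f x + g x) :=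
  DF.comp' (f := fun p : ℝ × ℝ => p.1 + p.2) DF.add' (hf.prodMk hg)

@[fun_prop]
theorem DF.mul {f g : E → ℝ} (hf : DF St f) (hg : DF St g) : DF St (fun x => f x * g x) :=
  DF.comp' (f := fun p : ℝ × ℝ => p.1 * p.2) DF.mul' (hf.prodMk hg)

@[fun_prop]
theorem DF.neg {f : E → ℝ} (hf : DF St f) : DF St (fun x => - f x) := by
  have : (fun x => - f x) = fun x => (-1) * f x := by ext; ring
  rw [this]; fun_prop

@[fun_prop]
theorem DF.sub {f g : E → ℝ} (hf : DF St f) (hg : DF St g) : DF St (fun x => f x - g x) := by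
  have : (fun x => f x - g x) = fun x => f x + - g x := by ext; ring
  rw [this]; fun_prop

open Classical in
theorem DF.ite {P : E → Prop} {f g : E → F} (hP : D St P) (hf : DF St f) (hg : DF St g) :
    DF St (fun x => if P x then f x else g x) := by
  refine ((hP.fst.and hf).or (hP.not.fst.and hg)).congr fun p => ?_
  by_cases h : P p.1 <;> simp [h]

theorem DF.ite' {P : E → Prop} [DecidablePred P] {f g : E → F} (hP : D St P) (hf : DF St f)
    (hg : DF St g) : DF St (fun x => if P x then f x else g x) := by
  convert DF.ite hP hf hg

@[fun_prop]
theorem DF.inv {f : E → ℝ} (hf : DF St f) : DF St (fun x => (f x)⁻¹) := by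
  have hE : DF St (fun x : ℝ => x⁻¹) := by
    refine (((D.eq (f := fun p : ℝ × ℝ => p.1 * p.2) (g := fun _ => 1) (by fun_prop)
      (by fun_prop))).or ((D.eq (f := fun p : ℝ × ℝ => p.1) (g := fun _ => 0) (by fun_prop)
      (by fun_prop)).and (D.eq (f := fun p : ℝ × ℝ => p.2) (g := fun _ => 0) (by fun_prop)
      (by fun_prop)))).congr fun p => ?_
    by_cases h : p.1 = 0
    · simp [h, eq_comm]
    · simp only [h, false_and, or_false]
      rw [← one_div, div_eq_iff h, mul_comm, eq_comm]
  exact DF.comp' hE hf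

@[fun_prop]
theorem DF.div {f g : E → ℝ} (hf : DF St f) (hg : DF St g) : DF St (fun x => f x / g x) := by
  simp only [div_eq_mul_inv]; fun_prop

@[fun_prop]
theorem DF.max {f g : E → ℝ} (hf : DF St f) (hg : DF St g) : DF St (fun x => max (f x) (g x)) := by
  simp only [max_def]
  exact DF.ite' (D.le hf hg) hg hf

@[fun_prop]
theorem DF.min {f g : E → ℝ} (hf : DF St f) (hg : DF St g) : DF St (fun x => min (f x) (g x)) := by
  simp only [min_def]
  exact DF.ite' (D.le hf hg) hf hg

@[fun_prop]
theorem DF.abs {f : E → ℝ} (hf : DF St f) : DF St (fun x => |f x|) := by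
  change DF St (fun x => Max.max (f x) (-(f x)))
  fun_prop

theorem DF.dist' : DF St (fun p : F × F => dist p.1 p.2) := by
  have key : D St (fun p : (F × F) × ℝ => dist p.1.1 p.1.2 ≤ p.2) := by
    refine ((D.le (f := fun _ : (F × F) × ℝ => (0 : ℝ)) (g := fun p => p.2) (by fun_prop)
      (by fun_prop)).and (D.allFin (P := fun (i : DSp.ι F) (p : (F × F) × ℝ) =>
        |DSp.coord p.1.1 i - DSp.coord p.1.2 i| ≤ p.2) fun i => ?_)).congr fun p => ?_
    · have h1 : DF St (fun p : (F × F) × ℝ => DSp.coord p.1.1) := DF.coordi (by fun_prop)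
      have h2 : DF St (fun p : (F × F) × ℝ => DSp.coord p.1.2) := DF.coordi (by fun_prop)
      exact D.le (by fun_prop) (by fun_prop)
    · by_cases h : 0 ≤ p.2
      · rw [← (DSp.coord (E := F)).isometry.dist_eq, dist_pi_le_iff h]
        simp [Real.dist_eq, h]
      · simp only [h, false_and, iff_false]
        intro h'; exact h (dist_nonneg.trans h')
  refine (key.and (D.forall (P := fun (p : (F × F) × ℝ) (r : ℝ) => dist p.1.1 p.1.2 ≤ r → p.2 ≤ r)
    (D.imp ?_ (D.le (by fun_prop) (by fun_prop))))).congr fun p => ?_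
  · exact D.comp (f := fun q : ((F × F) × ℝ) × ℝ => (q.1.1, q.2)) key (by fun_prop)
  · constructor
    · intro h; exact ⟨h.le, fun r hr => h ▸ hr⟩
    · rintro ⟨h1, h2⟩; exact le_antisymm h1 (h2 _ le_rfl)

@[fun_prop]
theorem DF.dist {f g : E → F} (hf : DF St f) (hg : DF St g) :
    DF St (fun x => dist (f x) (g x)) :=
  DF.comp' (f := fun p : F × F => Dist.dist p.1 p.2) DF.dist' (hf.prodMk hg)

theorem D.omin {P : ℝ → Prop} (hP : D St P) : IsFiniteUnionOfPointsAndIntervals {x | P x} := by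
  let _ := St.str
  refine St.o_minimal _ ?_
  exact Set.Definable.preimage_comp (fun _ => (0 : Fin 1)) hP

end calculus

attribute [irreducible] DF


open FirstOrder Set Filter Topology

section iso

variable {E F G H : Type} [MetricSpace E] [DSp E] [MetricSpace F] [DSp F] [MetricSpace G] [DSp G]
  [MetricSpace H] [DSp H] {St : OMinimalRealExpansion}

/-- dimension of a coordinate space -/
noncomputable def ddim (E : Type) [MetricSpace E] [DSp E] : ℕ := Fintype.card (DSp.ι E)

theorem ddim_prod : ddim (E × F) = ddim E + ddim F := by
  unfold ddim
  exact Fintype.card_sum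

theorem ddim_real : ddim ℝ = 1 := by
  unfold ddim
  exact Fintype.card_unit

theorem ddim_fin (k : ℕ) : ddim (Fin k → ℝ) = k := by
  unfold ddim
  exact Fintype.card_fin k

/-- definable isometries. -/
structure DIso (St : OMinimalRealExpansion) (E F : Type) [MetricSpace E] [DSp E]
    [MetricSpace F] [DSp F] where
  e : E ≃ᵢ F
  df : DF St e
  df' : DF St e.symm

def DIso.symm (i : DIso St E F) : DIso St F E := ⟨i.e.symm, i.df', i.df⟩

theorem exists_iso (E : Type) [MetricSpace E] [DSp E] {m : ℕ} (h : ddim E = m) :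
    Nonempty (DIso St E (Fin m → ℝ)) := by
  let g : DSp.ι E ≃ Fin m := Fintype.equivFinOfCardEq h
  let e₂ : (DSp.ι E → ℝ) ≃ᵢ (Fin m → ℝ) := IsometryEquiv.piCongrLeft (Y := fun _ => ℝ) g
  have h2 : ∀ v i, e₂ v i = v (g.symm i) := by
    intro v i
    obtain ⟨j, rfl⟩ := g.surjective i
    simp [e₂, IsometryEquiv.piCongrLeft]
  refine ⟨⟨(DSp.coord (E := E)).trans e₂, ?_, ?_⟩⟩
  · refine DF.reindex _ g.symm fun v => ?_
    ext i
    simp [h2]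
    rfl
  · refine DF.reindex _ g fun v => ?_
    rw [IsometryEquiv.symm_apply_eq]
    ext i
    simp [h2]
    rfl

noncomputable def snocIso (m : ℕ) : (Fin m → ℝ) × ℝ ≃ᵢ (Fin (m + 1) → ℝ) where
  toFun p := Fin.snoc p.1 p.2
  invFun v := (fun i => v i.castSucc, v (Fin.last m))
  left_inv p := by simp
  right_inv v := by
    ext i
    refine Fin.lastCases ?_ (fun i => ?_) i <;> simp
  isometry_toFun := by
    refine Isometry.of_dist_eq fun p q => ?_
    apply le_antisymm
    · rw [dist_pi_le_iff dist_nonneg]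
      intro i
      refine Fin.lastCases ?_ (fun i => ?_) i
      · simp [Prod.dist_eq]
      · simp only [Fin.snoc_castSucc, Prod.dist_eq]
        exact (dist_le_pi_dist p.1 q.1 i).trans (le_max_left _ _)
    · rw [Prod.dist_eq]
      refine max_le ?_ ?_
      · rw [dist_pi_le_iff dist_nonneg]
        intro i
        have := dist_le_pi_dist (Fin.snoc p.1 p.2 : Fin (m + 1) → ℝ) (Fin.snoc q.1 q.2) i.castSucc
        simpa using this
      · have := dist_le_pi_dist (Fin.snoc p.1 p.2 : Fin (m + 1) → ℝ) (Fin.snoc q.1 q.2) (Fin.last m)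
        simpa using this

theorem exists_iso_succ (E : Type) [MetricSpace E] [DSp E] {m : ℕ} (h : ddim E = m + 1) :
    Nonempty (DIso St ((Fin m → ℝ) × ℝ) E) := by
  obtain ⟨i⟩ := exists_iso (St := St) E h
  refine ⟨⟨(snocIso m).trans i.e.symm, ?_, ?_⟩⟩
  · have : DF St (snocIso m) → DF St ((snocIso m).trans i.e.symm) := fun h => DF.comp' (f := i.e.symm) i.df' h
    refine this ?_
    refine DF.pi fun j => ?_
    refine Fin.lastCases ?_ (fun j => ?_) j
    · simp [snocIso]; fun_prop
    · simp [snocIso]; fun_prop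
  · have : DF St (snocIso m).symm → DF St ((snocIso m).trans i.e.symm).symm :=
      fun h => DF.comp' (f := (snocIso m).symm) h i.df
    refine this ?_
    change DF St fun v : Fin (m + 1) → ℝ => ((fun i => v i.castSucc, v (Fin.last m)) : (Fin m → ℝ) × ℝ)
    fun_prop

/-- Induction principle over coordinate spaces. -/
theorem DSp.induct (St : OMinimalRealExpansion) (P : ∀ (E : Type) [MetricSpace E] [DSp E], Prop)
    (transfer : ∀ (E F : Type) [MetricSpace E] [DSp E] [MetricSpace F] [DSp F],
      DIso St E F → P E → P F)
    (base : P (Fin 0 → ℝ))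
    (step : ∀ (E : Type) [MetricSpace E] [DSp E], P E → P (E × ℝ))
    (E : Type) [MetricSpace E] [DSp E] : P E := by
  have h : ∀ m, ∀ (E : Type) [MetricSpace E] [DSp E], ddim E = m → P E := by
    intro m
    induction m with
    | zero =>
      intro E _ _ h
      obtain ⟨i⟩ := exists_iso (St := St) E h
      exact transfer _ _ i.symm base
    | succ m ih =>
      intro E _ _ h
      obtain ⟨i⟩ := exists_iso_succ (St := St) E h
      exact transfer _ _ i (step _ (ih _ (ddim_fin m)))
  exact h _ E rfl

instance : CompleteSpace E := by
  have := (DSp.coord (E := E)).completeSpace_iff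
  exact this.2 inferInstance

instance : SecondCountableTopology E :=
  (DSp.coord (E := E)).toHomeomorph.secondCountableTopology

end iso

section baire

variable {E F G H : Type} [MetricSpace E] [DSp E] [MetricSpace F] [DSp F] [MetricSpace G] [DSp G]
  [MetricSpace H] [DSp H] {St : OMinimalRealExpansion}

theorem D.interior {X : Set E} (hX : D St (fun x => x ∈ X)) : D St (fun x => x ∈ interior X) := by
  have : D St (fun x => ∃ ε > (0 : ℝ), ∀ y, Dist.dist y x < ε → y ∈ X) := by
    apply_rules [D.exists, D.and, D.forall, D.imp, D.lt, hX.comp] <;> fun_prop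
  refine this.congr fun x => ?_
  rw [mem_interior_iff_mem_nhds, Metric.mem_nhds_iff]
  rfl

theorem D.closure {X : Set E} (hX : D St (fun x => x ∈ X)) : D St (fun x => x ∈ closure X) := by
  have : D St (fun x => ∀ ε > (0 : ℝ), ∃ y, y ∈ X ∧ Dist.dist x y < ε) := by
    apply_rules [D.exists, D.and, D.forall, D.imp, D.lt, hX.comp] <;> fun_prop
  exact this.congr fun x => Metric.mem_closure_iff

theorem D.ball (c : E) (r : ℝ) : D St (fun x => x ∈ Metric.ball c r) := by
  have : D St (fun x : E => Dist.dist x c < r) := by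
    apply_rules [D.lt] <;> fun_prop
  exact this

theorem D.omin_cases {P : ℝ → Prop} (hP : D St P) :
    (∃ c d : ℚ, c < d ∧ ∀ x : ℝ, (c : ℝ) < x → x < d → P x) ∨ {x | P x}.Finite := by
  obtain ⟨k, f, hf, hs⟩ := hP.omin
  by_cases h : ∀ i, (f i).Finite
  · right; rw [hs]; exact finite_iUnion h
  · left
    push Not at h
    obtain ⟨i, hi⟩ := h
    have hsub : ∀ x ∈ f i, P x := fun x hx => by
      have : x ∈ {x | P x} := by rw [hs]; exact mem_iUnion.2 ⟨i, hx⟩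
      exact this
    have key : ∃ a b : ℝ, a < b ∧ Ioo a b ⊆ f i := by
      rcases hf i with ⟨a, ha⟩ | ⟨a, b, hab⟩ | ⟨a, ha⟩ | ⟨a, ha⟩ | ha
      · rw [ha] at hi; exact absurd (finite_singleton a) hi
      · refine ⟨a, b, ?_, hab.ge⟩
        by_contra hlt
        rw [hab, Ioo_eq_empty hlt] at hi
        exact hi finite_empty
      · exact ⟨a - 1, a, by linarith, by rw [ha]; exact fun x hx => hx.2⟩
      · exact ⟨a, a + 1, by linarith, by rw [ha]; exact fun x hx => hx.1⟩
      · exact ⟨0, 1, by norm_num, by rw [ha]; exact subset_univ _⟩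
    obtain ⟨a, b, hab, hsub'⟩ := key
    obtain ⟨c, hc1, hc2⟩ := exists_rat_btwn hab
    obtain ⟨d, hd1, hd2⟩ := exists_rat_btwn hc2
    exact ⟨c, d, by exact_mod_cast hd1, fun x h1 h2 => hsub x (hsub' ⟨by linarith, by linarith⟩)⟩

/-- definable sets with empty interior are nowhere dense -/
def DI (St : OMinimalRealExpansion) (E : Type) [MetricSpace E] [DSp E] : Prop :=
  ∀ X : Set E, D St (fun x => x ∈ X) → interior X = ∅ → interior (closure X) = ∅

theorem DI.plus (h : DI St E) {κ : Type} [Countable κ] {X : κ → Set E}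
    (hX : ∀ k, D St (fun x => x ∈ X k)) {U : Set E} (hU : IsOpen U) (hne : U.Nonempty)
    (hcov : ∀ x ∈ U, ∃ k, x ∈ X k) : ∃ k, (interior (X k) ∩ U).Nonempty := by
  by_contra hcon
  push Not at hcon
  obtain ⟨x, hx⟩ := hne
  obtain ⟨r, hr, hB⟩ := Metric.isOpen_iff.1 hU x hx
  have hm : IsMeagre (Metric.ball x r) := by
    have hsub : Metric.ball x r ⊆ ⋃ k, X k ∩ Metric.ball x r := ?_
    · refine IsMeagre.mono hsub ?_
      refine isMeagre_iUnion fun k => ?_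
      refine IsNowhereDense.isMeagre ?_
      refine h _ ((hX k).and (D.ball x r)) ?_
      rw [interior_inter, Metric.isOpen_ball.interior_eq, ← subset_empty_iff]
      rw [← hcon k]
      exact inter_subset_inter_right _ hB
    · intro y hy
      obtain ⟨k, hk⟩ := hcov y (hB hy)
      exact mem_iUnion.2 ⟨k, hk, hy⟩
  exact not_isMeagre_of_isOpen Metric.isOpen_ball ⟨x, Metric.mem_ball_self hr⟩ hm

theorem DI.step (h : DI St E) : DI St (E × ℝ) := by
  intro X hX hi
  by_contra hne
  obtain ⟨⟨x0, y0⟩, hxy⟩ := nonempty_iff_ne_empty.2 hne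
  obtain ⟨W, V, hW, hV, hx0, hy0, hWV⟩ := isOpen_prod_iff.1 isOpen_interior x0 y0 hxy
  obtain ⟨r, hr, hB⟩ := Metric.isOpen_iff.1 hV y0 hy0
  rw [Real.ball_eq_Ioo] at hB
  set a := y0 - r with ha
  set b := y0 + r with hb
  have hab : a < b := by linarith
  have hcl : ∀ x ∈ W, ∀ y, a < y → y < b → (x, y) ∈ closure X := fun x hx y h1 h2 =>
    interior_subset (hWV ⟨hx, hB ⟨h1, h2⟩⟩)
  let Y : (ℚ × ℚ) ⊕ ℕ → Set E := Sum.elim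
    (fun cd => {x | cd.1 < cd.2 ∧ ∀ y : ℝ, (cd.1 : ℝ) < y → y < cd.2 → (x, y) ∈ X})
    (fun N => {x | ¬ ∃ v : Fin (N + 1) → ℝ, (∀ i j, i < j → v i < v j) ∧ ∀ i, (x, v i) ∈ X})
  have hY : ∀ k, D St (fun x => x ∈ Y k) := by
    rintro (⟨c, d⟩ | N)
    · have : D St (fun x => c < d ∧ ∀ y : ℝ, (c : ℝ) < y → y < d → (x, y) ∈ X) := by
        apply_rules [D.const, D.and, D.forall, D.imp, D.lt, hX.comp] <;> fun_prop
      exact this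
    · have : D St (fun x => ¬ ∃ v : Fin (N + 1) → ℝ, (∀ i j, i < j → v i < v j) ∧
          ∀ i, (x, v i) ∈ X) := by
        refine D.not (D.exists (D.and (D.allFin fun i => D.allFin fun j => ?_)
          (D.allFin fun i => ?_)))
        all_goals apply_rules [D.const, D.imp, D.lt, hX.comp] <;> fun_prop
      exact this
  obtain ⟨k, hk⟩ := h.plus hY hW ⟨x0, hx0⟩ (by
    intro x hx
    rcases D.omin_cases (St := St) (P := fun y => (x, y) ∈ X) (hX.comp (by fun_prop)) with
      ⟨c, d, hcd, h1⟩ | hfin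
    · exact ⟨Sum.inl (c, d), hcd, h1⟩
    · refine ⟨Sum.inr hfin.toFinset.card, ?_⟩
      rintro ⟨v, hv, hvX⟩
      have hmono : StrictMono v := fun i j hij => hv i j hij
      have := Finset.card_le_card_of_injOn (s := Finset.univ) (t := hfin.toFinset) v
        (by intro i _; simpa using hvX i) hmono.injective.injOn
      simp at this)
  rcases k with ⟨c, d⟩ | N
  · obtain ⟨x, hx, -⟩ := hk
    have hcd : c < d := (interior_subset hx).1
    obtain ⟨y, hy1, hy2⟩ := exists_between (show (c : ℝ) < d by exact_mod_cast hcd)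
    have : (x, y) ∈ interior X := by
      rw [mem_interior]
      refine ⟨interior (Y (Sum.inl (c, d))) ×ˢ Ioo (c : ℝ) d, ?_, isOpen_interior.prod isOpen_Ioo,
        ⟨hx, hy1, hy2⟩⟩
      rintro ⟨x', y'⟩ ⟨h1, h2, h3⟩
      exact (interior_subset h1).2 y' h2 h3
    rw [hi] at this
    exact this
  · set W' := interior (Y (Sum.inr N)) ∩ W with hW'
    let δ : ℝ := (b - a) / (N + 1)
    have hN : (0 : ℝ) < N + 1 := by positivity
    have hδ : 0 < δ := div_pos (by linarith) hN
    let Z : Fin (N + 1) → Set E := fun k =>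
      {x | ¬ ∃ y : ℝ, a + k * δ < y ∧ y < a + (k + 1) * δ ∧ (x, y) ∈ X}
    have hZ : ∀ k, D St (fun x => x ∈ Z k) := by
      intro k
      have : D St (fun x => ¬ ∃ y : ℝ, a + k * δ < y ∧ y < a + (k + 1) * δ ∧ (x, y) ∈ X) := by
        apply_rules [D.not, D.exists, D.and, D.lt, hX.comp] <;> fun_prop
      exact this
    by_cases hcov : ∀ x ∈ W', ∃ k, x ∈ Z k
    · obtain ⟨k, x, hx, hxW⟩ := h.plus hZ (isOpen_interior.inter hW) hk hcov
      have hk1 : (k : ℝ) + 1 ≤ N + 1 := by exact_mod_cast k.2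
      have hbd : δ * (N + 1) = b - a := div_mul_cancel₀ _ hN.ne'
      have hmem : (x, a + (k + 1 / 2) * δ) ∈ closure X := by
        refine hcl x hxW.2 _ ?_ ?_
        · have : 0 < ((k : ℝ) + 1 / 2) * δ := by positivity
          linarith
        · nlinarith
      obtain ⟨⟨x', y'⟩, h1, h2⟩ := mem_closure_iff.1 hmem
        (interior (Z k) ×ˢ Ioo (a + k * δ) (a + (k + 1) * δ)) (isOpen_interior.prod isOpen_Ioo)
        ⟨hx, by constructor <;> nlinarith⟩
      exact interior_subset h1.1 ⟨y', h1.2.1, h1.2.2, h2⟩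
    · push Not at hcov
      obtain ⟨x, hx, hxZ⟩ := hcov
      have hxZ' : ∀ k : Fin (N + 1), ∃ y : ℝ, a + k * δ < y ∧ y < a + (k + 1) * δ ∧ (x, y) ∈ X := by
        intro k; by_contra hcon; exact hxZ k hcon
      choose v hv1 hv2 hv3 using hxZ'
      refine interior_subset hx.1 ⟨v, ?_, hv3⟩
      intro i j hij
      have : (i : ℝ) + 1 ≤ j := by exact_mod_cast hij
      have h3 := hv1 j
      have h4 := hv2 i
      nlinarith

theorem DI.all (St : OMinimalRealExpansion) (E : Type) [MetricSpace E] [DSp E] : DI St E := by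
  refine DSp.induct St (fun E _ _ => DI St E) ?_ ?_ ?_ E
  · intro E F _ _ _ _ i h X hX hi
    have h1 := h (i.e ⁻¹' X) (hX.comp i.df) (by
      have := i.e.toHomeomorph.preimage_interior X
      rw [hi] at this
      simpa using this.symm)
    have h2 : i.e ⁻¹' (interior (closure X)) = interior (closure (i.e ⁻¹' X)) := by
      have := i.e.toHomeomorph.preimage_interior (closure X)
      have h3 := i.e.toHomeomorph.preimage_closure X
      simp only [IsometryEquiv.coe_toHomeomorph] at this h3
      rw [this, h3]
    rw [h1] at h2
    rw [← i.e.surjective.image_preimage (interior (closure X)), h2, image_empty]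
  · intro X hX hi
    rcases X.eq_empty_or_nonempty with rfl | ⟨x, hx⟩
    · simp
    · have : X = univ := by
        ext y; simp; convert hx
      rw [this] at hi; simp at hi
  · intro E _ _ h
    exact h.step

theorem DI_plus {κ : Type} [Countable κ] {X : κ → Set E}
    (hX : ∀ k, D St (fun x => x ∈ X k)) {U : Set E} (hU : IsOpen U) (hne : U.Nonempty)
    (hcov : ∀ x ∈ U, ∃ k, x ∈ X k) : ∃ k, (interior (X k) ∩ U).Nonempty :=
  (DI.all St E).plus hX hU hne hcov

/-- Maps to metric spaces with definable distance. -/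
def DMet (St : OMinimalRealExpansion) {Y : Type} [MetricSpace Y] (F : E → Y) : Prop :=
  D St (fun p : (E × E) × ℝ => dist (F p.1.1) (F p.1.2) < p.2)

theorem GC {Y : Type} [MetricSpace Y] [SecondCountableTopology Y] {F : E → Y}
    (hF : DMet St F) {U : Set E} (hU : IsOpen U) (hne : U.Nonempty) :
    ∃ x ∈ U, ContinuousAt F x := by
  obtain ⟨s, hs, hsd⟩ := TopologicalSpace.exists_countable_dense (Set.range F)
  have : Nonempty E := ⟨hne.some⟩
  have hq : ∃ q : ℕ → E, ∀ x, ∀ ε > 0, ∃ k, dist (F x) (F (q k)) < ε := by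
    have : Nonempty (Set.range F) := ⟨⟨F hne.some, hne.some, rfl⟩⟩
    obtain ⟨u, hu⟩ := hs.exists_eq_range hsd.nonempty
    choose q hq using fun k => (u k).2
    refine ⟨q, fun x ε hε => ?_⟩
    obtain ⟨z, hz, hzs⟩ := Metric.dense_iff.1 hsd ⟨F x, x, rfl⟩ ε hε
    rw [hu] at hzs
    obtain ⟨k, rfl⟩ := hzs
    refine ⟨k, ?_⟩
    rw [hq k, dist_comm]
    exact hz
  obtain ⟨q, hq⟩ := hq
  let A : ℕ → ℕ → Set E := fun j k => {x | dist (F x) (F (q k)) < 1 / ((j : ℝ) + 1)}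
  have hA : ∀ j k, D St (fun x => x ∈ A j k) := fun j k =>
    D.comp (f := fun x : E => ((x, q k), 1 / ((j : ℝ) + 1))) hF (by fun_prop)
  have hG : Dense (⋂ j, ⋃ k, interior (A j k)) := by
    refine dense_iInter_of_isOpen (fun j => isOpen_iUnion fun k => isOpen_interior) fun j => ?_
    rw [dense_iff_inter_open]
    intro V hV hVne
    obtain ⟨k, x, hx, hxV⟩ := DI_plus (hA j) hV hVne (fun x _ => hq x _ (by positivity))
    exact ⟨x, hxV, mem_iUnion.2 ⟨k, hx⟩⟩
  obtain ⟨x, hxU, hx⟩ := dense_iff_inter_open.1 hG U hU hne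
  refine ⟨x, hxU, ?_⟩
  rw [Metric.continuousAt_iff']
  intro ε hε
  obtain ⟨j, hj⟩ := exists_nat_one_div_lt (half_pos hε)
  obtain ⟨k, hk⟩ := mem_iUnion.1 (mem_iInter.1 hx j)
  filter_upwards [isOpen_interior.mem_nhds hk] with y hy
  have h1 : dist (F y) (F (q k)) < 1 / ((j : ℝ) + 1) := interior_subset (s := A j k) hy
  have h2 : dist (F x) (F (q k)) < 1 / ((j : ℝ) + 1) := interior_subset (s := A j k) hk
  have := dist_triangle_right (F y) (F x) (F (q k))
  linarith

theorem DMet.bad {Y : Type} [MetricSpace Y] {F : E → Y} (hF : DMet St F) :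
    D St (fun x => x ∈ {x | ¬ ContinuousAt F x}) := by
  have : D St (fun x => ¬ ∀ ε > (0 : ℝ), ∃ δ > (0 : ℝ), ∀ y, dist y x < δ → dist (F y) (F x) < ε) := by
    have h' : ∀ (G : Type) [MetricSpace G] [DSp G] (f g : G → E) (e : G → ℝ), DF St f → DF St g →
      DF St e → D St (fun p => dist (F (f p)) (F (g p)) < e p) := by
      intro G _ _ f g e hf hg he
      exact D.comp (f := fun x => ((f x, g x), e x)) hF (by fun_prop)
    apply_rules [D.not, D.exists, D.and, D.forall, D.imp, D.lt, h'] <;> fun_prop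
  refine this.congr fun x => ?_
  simp only [mem_ofPred_eq]
  rw [Metric.continuousAt_iff]

theorem DMet.bad_interior {Y : Type} [MetricSpace Y] [SecondCountableTopology Y] {F : E → Y}
    (hF : DMet St F) : interior {x | ¬ ContinuousAt F x} = ∅ := by
  by_contra h
  obtain ⟨x, hx, hc⟩ := GC hF isOpen_interior (nonempty_iff_ne_empty.2 h)
  exact interior_subset hx hc

theorem DF.dmet {f : E → F} (hf : DF St f) : DMet St f := by
  unfold DMet
  apply_rules [D.lt] <;> fun_prop

theorem DMet.comp {Y : Type} [MetricSpace Y] {F : E → Y} (hF : DMet St F) {f : G → E}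
    (hf : DF St f) : DMet St (fun x => F (f x)) :=
  D.comp (f := fun x : (G × G) × ℝ => ((f x.1.1, f x.1.2), x.2)) hF (by fun_prop)

end baire


open FirstOrder Set Filter Topology

set_option linter.unusedSectionVars false

section fc

variable {E F G H : Type} [MetricSpace E] [DSp E] [MetricSpace F] [DSp F] [MetricSpace G] [DSp G]
  [MetricSpace H] [DSp H] {St : OMinimalRealExpansion}

/-- Finite unions of definable sets with property `Q`. -/
inductive FC (St : OMinimalRealExpansion) (Q : Set E → Prop) : Set E → Prop
  | empty : FC St Q ∅
  | of {t : Set E} : D St (fun x => x ∈ t) → Q t → FC St Q t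
  | union {s t : Set E} : FC St Q s → FC St Q t → FC St Q (s ∪ t)

theorem FC.map {Q : Set F → Prop} {Q' : Set E → Prop} {X : Set F} (h : FC St Q X)
    (Φ : Set F → Set E) (h0 : Φ ∅ = ∅) (hu : ∀ s t, Φ (s ∪ t) = Φ s ∪ Φ t)
    (hQ : ∀ t, t ⊆ X → D St (fun x => x ∈ t) → Q t → FC St Q' (Φ t)) : FC St Q' (Φ X) := by
  induction h with
  | empty => rw [h0]; exact FC.empty
  | of ht hq => exact hQ _ subset_rfl ht hq
  | union _ _ ih1 ih2 =>
    rw [hu]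
    exact (ih1 fun t ht => hQ t (ht.trans subset_union_left)).union
      (ih2 fun t ht => hQ t (ht.trans subset_union_right))

theorem FC.bind {Q Q' : Set E → Prop} {X : Set E} (h : FC St Q X)
    (hQ : ∀ t, t ⊆ X → D St (fun x => x ∈ t) → Q t → FC St Q' t) : FC St Q' X :=
  h.map (fun s => s) rfl (fun _ _ => rfl) hQ

theorem FC.mono {Q Q' : Set E → Prop} {X : Set E} (h : FC St Q X)
    (hQ : ∀ t, t ⊆ X → D St (fun x => x ∈ t) → Q t → Q' t) : FC St Q' X :=
  h.bind fun t h1 h2 h3 => FC.of h2 (hQ t h1 h2 h3)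

theorem FC.congr {Q : Set E → Prop} {X Y : Set E} (h : FC St Q X) (e : Y = X) : FC St Q Y := e ▸ h

theorem FC.dset {Q : Set E → Prop} {X : Set E} (h : FC St Q X) : D St (fun x => x ∈ X) := by
  induction h with
  | empty => exact D.const False
  | of ht hq => exact ht
  | union _ _ ih1 ih2 => exact ih1.or ih2

theorem FC.iUnion {κ : Type} [Finite κ] {Q : Set E → Prop} {X : κ → Set E}
    (h : ∀ i, FC St Q (X i)) : FC St Q (⋃ i, X i) := by
  have := Fintype.ofFinite κ
  classical
  have key : ∀ s : Finset κ, FC St Q (⋃ i ∈ s, X i) := by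
    intro s
    induction s using Finset.induction_on with
    | empty => simpa using FC.empty
    | insert a s _ ih => rw [Finset.set_biUnion_insert]; exact (h a).union ih
  simpa using key Finset.univ

/-- pull back along a definable map, intersecting with a set. -/
theorem FC.preim {Q : Set F → Prop} {Q' : Set E → Prop} {X : Set F} (h : FC St Q X)
    (f : E → F) (S : Set E)
    (hQ : ∀ t, t ⊆ X → D St (fun x => x ∈ t) → Q t → FC St Q' (f ⁻¹' t ∩ S)) :
    FC St Q' (f ⁻¹' X ∩ S) :=
  h.map (fun s => f ⁻¹' s ∩ S) (by simp) (fun s t => by simp [union_inter_distrib_right]) hQ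

theorem FC.exists_finite {Q : Set E → Prop} {X : Set E} (h : FC St Q X) :
    ∃ (n : ℕ) (t : Fin n → Set E), (∀ i, D St (fun x => x ∈ t i)) ∧ (∀ i, Q (t i)) ∧
      X = ⋃ i, t i := by
  induction h with
  | empty => exact ⟨0, fun _ => ∅, fun i => i.elim0, fun i => i.elim0, by simp⟩
  | of ht hq => exact ⟨1, fun _ => _, fun _ => ht, fun _ => hq, by ext; simp⟩
  | union _ _ ih1 ih2 =>
    obtain ⟨n, t, h1, h2, h3⟩ := ih1
    obtain ⟨m, s, h4, h5, h6⟩ := ih2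
    refine ⟨n + m, Fin.append t s, ?_, ?_, ?_⟩
    · intro i; refine Fin.addCases (fun i => ?_) (fun i => ?_) i <;> simp [h1, h4]
    · intro i; refine Fin.addCases (fun i => ?_) (fun i => ?_) i <;> simp [h2, h5]
    · rw [h3, h6]
      ext x
      simp only [mem_union, mem_iUnion]
      constructor
      · rintro (⟨i, hi⟩ | ⟨i, hi⟩)
        · exact ⟨Fin.castAdd m i, by simpa using hi⟩
        · exact ⟨Fin.natAdd n i, by simpa using hi⟩
      · rintro ⟨i, hi⟩
        revert hi
        refine Fin.addCases (fun i => ?_) (fun i => ?_) i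
        · intro hi; left; exact ⟨i, by simpa using hi⟩
        · intro hi; right; exact ⟨i, by simpa using hi⟩

/-- functions with unique values can be chosen definable -/
theorem exists_DF_of_unique {P : E → F → Prop} (hP : D St (fun p : E × F => P p.1 p.2))
    (d : F) (hu : ∀ x y y', P x y → P x y' → y = y') :
    ∃ f : E → F, DF St f ∧ (∀ x y, P x y → f x = y) ∧ (∀ x, (∃ y, P x y) → P x (f x)) := by
  classical
  let f : E → F := fun x => if h : ∃ y, P x y then h.choose else d
  have h1 : ∀ x, (∃ y, P x y) → P x (f x) := by
    intro x h
    simp only [f, h, dif_pos]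
    exact h.choose_spec
  have h2 : ∀ x y, P x y → f x = y := fun x y h => hu x _ _ (h1 x ⟨y, h⟩) h
  refine ⟨f, ?_, h2, h1⟩
  have hE : D St (fun x => ∃ y, P x y) := D.exists hP
  have h3 : D St (fun p : E × F => P p.1 p.2 ∨ (¬ (∃ y, P p.1 y) ∧ p.2 = d)) := by
    refine hP.or (D.and (D.not hE.fst) (D.eq ?_ ?_)) <;> fun_prop
  refine DF.of_graph (D.congr h3 fun p => ?_)
  constructor
  · intro h
    by_cases hp : ∃ y, P p.1 y
    · left; rw [← h]; exact h1 _ hp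
    · right
      refine ⟨hp, ?_⟩
      rw [← h]; simp only [f, hp, dif_neg, not_false_eq_true]
  · rintro (h | ⟨h, h'⟩)
    · exact h2 _ _ h
    · simp only [f, h, dif_neg, not_false_eq_true]; exact h'.symm

theorem exists_enum {Z : Set (E × ℝ)} (hZ : D St (fun x => x ∈ Z)) (n : ℕ) :
    ∃ f : E → (Fin n → ℝ), DF St f ∧ ∀ x, {y | (x, y) ∈ Z}.Finite → {y | (x, y) ∈ Z}.ncard = n →
      StrictMono (f x) ∧ range (f x) = {y | (x, y) ∈ Z} := by
  let P : E → (Fin n → ℝ) → Prop := fun x v => (∀ i j, i < j → v i < v j) ∧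
    (∀ i, (x, v i) ∈ Z) ∧ ∀ y, (x, y) ∈ Z → ∃ i, v i = y
  have hP' : ∀ x v, P x v ↔ StrictMono v ∧ range v = {y | (x, y) ∈ Z} := by
    intro x v
    constructor
    · rintro ⟨h1, h2, h3⟩
      refine ⟨fun i j h => h1 i j h, ?_⟩
      ext y
      exact ⟨by rintro ⟨i, rfl⟩; exact h2 i, fun h => h3 y h⟩
    · rintro ⟨h1, h2⟩
      refine ⟨fun i j h => h1 h, fun i => ?_, fun y hy => ?_⟩
      · have : v i ∈ range v := ⟨i, rfl⟩
        rw [h2] at this; exact this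
      · have : y ∈ range v := by rw [h2]; exact hy
        exact this
  have hP : D St (fun p : E × (Fin n → ℝ) => P p.1 p.2) := by
    refine D.and (D.allFin fun i => D.allFin fun j => D.imp (D.const _) ?_) (D.and
      (D.allFin fun i => ?_) (D.forall (D.imp ?_ (D.exFin fun i => ?_))))
    all_goals apply_rules [D.lt, hZ.comp, D.eq] <;> fun_prop
  obtain ⟨f, hf, -, h2⟩ := exists_DF_of_unique hP 0 (fun x y y' h1 h2 => by
    rw [hP'] at h1 h2
    exact (h1.1.range_inj h2.1).1 (h1.2.trans h2.2.symm))
  refine ⟨f, hf, fun x hx hn => ?_⟩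
  rw [← hP']
  apply h2
  have hcard : hx.toFinset.card = n := by
    rw [← hn, ncard_eq_toFinset_card _ hx]
  refine ⟨hx.toFinset.orderEmbOfFin hcard, ?_⟩
  rw [hP']
  refine ⟨(hx.toFinset.orderEmbOfFin hcard).strictMono, ?_⟩
  rw [Finset.range_orderEmbOfFin]
  simp

/-- uniform finiteness -/
def UF (St : OMinimalRealExpansion) (E : Type) [MetricSpace E] [DSp E] : Prop :=
  ∀ Z : Set (E × ℝ), D St (fun x => x ∈ Z) → (∀ x, {y | (x, y) ∈ Z}.Finite) →
    ∃ N, ∀ x, {y | (x, y) ∈ Z}.ncard ≤ N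

/-- piecewise continuity -/
def PC (St : OMinimalRealExpansion) (E : Type) [MetricSpace E] [DSp E] : Prop :=
  ∀ (Y : Type) [MetricSpace Y] [SecondCountableTopology Y] (f : E → Y), DMet St f →
    ∀ X : Set E, D St (fun x => x ∈ X) → FC St (fun t => ContinuousOn f t) X

/-- reduction to smaller dimension -/
def Red (St : OMinimalRealExpansion) (m : ℕ) (t : Set E) : Prop :=
  ∃ (E' : Type) (_ : MetricSpace E') (_ : DSp E') (φ : E → E') (ψ : E' → E), ddim E' < m ∧
    DF St φ ∧ DF St ψ ∧ ContinuousOn φ t ∧ ContinuousOn ψ (φ '' t) ∧ ∀ x ∈ t, ψ (φ x) = x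

/-- thin sets -/
def THIN (St : OMinimalRealExpansion) (E : Type) [MetricSpace E] [DSp E] : Prop :=
  ∀ X : Set E, D St (fun x => x ∈ X) → interior X = ∅ → FC St (Red St (ddim E)) X

/-- finitely many connected pieces -/
def CONN (St : OMinimalRealExpansion) (E : Type) [MetricSpace E] [DSp E] : Prop :=
  ∀ X : Set E, D St (fun x => x ∈ X) → FC St (fun t => IsPreconnected t) X

theorem UF.graphs (h : UF St E) {Z : Set (E × ℝ)} (hZ : D St (fun x => x ∈ Z))
    (hfin : ∀ x, {y | (x, y) ∈ Z}.Finite) :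
    ∃ (κ : Type) (_ : Fintype κ) (g : κ → E → ℝ), (∀ i, DF St (g i)) ∧
      ∀ x y, (x, y) ∈ Z → ∃ i, y = g i x := by
  obtain ⟨N, hN⟩ := h Z hZ hfin
  choose f hf1 hf2 using fun n => exists_enum hZ n
  refine ⟨(n : Fin (N + 1)) × Fin n, inferInstance, fun i x => f i.1 x i.2, fun i => ?_, ?_⟩
  · have := hf1 i.1
    exact DF.eval _ this
  · intro x y hxy
    have h2 := (hf2 _ x (hfin x) rfl).2
    have : y ∈ range (f {y | (x, y) ∈ Z}.ncard x) := by rw [h2]; exact hxy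
    obtain ⟨i, hi⟩ := this
    exact ⟨⟨⟨_, Nat.lt_succ_of_le (hN x)⟩, i⟩, hi.symm⟩

theorem preconn_frontier {T : Type} [TopologicalSpace T] {s t : Set T} (hs : IsPreconnected s)
    (h : (s ∩ t).Nonempty) (hf : ∀ x ∈ s, x ∉ frontier t) : s ⊆ t := by
  have h1 : s ⊆ interior t ∪ (closure t)ᶜ := by
    intro x hx
    have := hf x hx
    rw [frontier, Set.mem_sdiff] at this
    simp only [mem_union, mem_compl_iff]
    tauto
  obtain ⟨x, hx, hxt⟩ := h
  have hx2 : x ∈ interior t := by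
    rcases h1 hx with h | h
    · exact h
    · exact absurd (subset_closure hxt) h
  refine (hs.subset_left_of_subset_union isOpen_interior isClosed_closure.isOpen_compl ?_ h1
    ⟨x, hx, hx2⟩).trans interior_subset
  rw [disjoint_compl_right_iff_subset]
  exact interior_subset.trans subset_closure

theorem frontier_finite {s : Set ℝ} (h : IsFiniteUnionOfPointsAndIntervals s) :
    (frontier s).Finite := by
  obtain ⟨k, f, hf, rfl⟩ := h
  refine Set.Finite.subset (s := ⋃ i, frontier (f i)) (finite_iUnion fun i => ?_) ?_
  · rcases hf i with ⟨a, ha⟩ | ⟨a, b, hab⟩ | ⟨a, ha⟩ | ⟨a, ha⟩ | ha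
    · rw [ha]; refine (finite_singleton a).subset ?_
      exact (frontier_subset_closure).trans (by simp)
    · rw [hab]
      by_cases h : a < b
      · rw [frontier_Ioo h]; exact toFinite _
      · rw [Ioo_eq_empty h]; simp
    · rw [ha, frontier_Iio]; exact finite_singleton _
    · rw [ha, frontier_Ioi]; exact finite_singleton _
    · rw [ha]; simp
  · intro x hx
    rw [frontier, Set.mem_sdiff, closure_iUnion_of_finite] at hx
    obtain ⟨i, hi⟩ := mem_iUnion.1 hx.1
    refine mem_iUnion.2 ⟨i, hi, fun h => hx.2 ?_⟩
    exact interior_mono (subset_iUnion f i) h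

/-- bands: sets with fibers parametrized by a fixed convex set -/
def Band (St : OMinimalRealExpansion) (t : Set (E × ℝ)) : Prop :=
  ∃ (C : Set E) (S : Set ℝ) (h k : E × ℝ → ℝ), D St (fun x => x ∈ C) ∧ D St (fun x => x ∈ S) ∧
    Convex ℝ S ∧ DF St h ∧ DF St k ∧ ContinuousOn h (C ×ˢ S) ∧
    (∀ x ∈ C, ∀ s ∈ S, k (x, h (x, s)) = s) ∧
    t = {p | p.1 ∈ C ∧ k p ∈ S ∧ h (p.1, k p) = p.2}

theorem Band.mem {C : Set E} {S : Set ℝ} {h k : E × ℝ → ℝ} 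
    (hk : ∀ x ∈ C, ∀ s ∈ S, k (x, h (x, s)) = s) {x : E} {s : ℝ} (hx : x ∈ C) (hs : s ∈ S) :
    (x, h (x, s)) ∈ {p : E × ℝ | p.1 ∈ C ∧ k p ∈ S ∧ h (p.1, k p) = p.2} := by
  refine ⟨hx, ?_, ?_⟩
  · rw [hk x hx s hs]; exact hs
  · simp [hk x hx s hs]

theorem Band.def {C : Set E} {S : Set ℝ} {h k : E × ℝ → ℝ} (hC : D St (fun x => x ∈ C))
    (hS : D St (fun x => x ∈ S)) (hh : DF St h) (hk : DF St k) :
    D St (fun p => p ∈ {p : E × ℝ | p.1 ∈ C ∧ k p ∈ S ∧ h (p.1, k p) = p.2}) := by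
  have : D St (fun p : E × ℝ => p.1 ∈ C ∧ k p ∈ S ∧ h (p.1, k p) = p.2) := by
    refine D.and hC.fst (D.and (hS.comp hk) (D.eq ?_ ?_)) <;> fun_prop
  exact this

theorem FC_band {C : Set E} {S : Set ℝ} {h k : E × ℝ → ℝ} (hC : D St (fun x => x ∈ C))
    (hS : D St (fun x => x ∈ S)) (hSc : Convex ℝ S) (hh : DF St h) (hk : DF St k)
    (hc : ContinuousOn h (C ×ˢ S)) (hkh : ∀ x ∈ C, ∀ s ∈ S, k (x, h (x, s)) = s) :
    FC St (Band St) {p : E × ℝ | p.1 ∈ C ∧ k p ∈ S ∧ h (p.1, k p) = p.2} :=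
  FC.of (Band.def hC hS hh hk) ⟨C, S, h, k, hC, hS, hSc, hh, hk, hc, hkh, rfl⟩

end fc


open FirstOrder Set Filter Topology

set_option linter.unusedSectionVars false

section induction

variable {E F G H : Type} [MetricSpace E] [DSp E] [MetricSpace F] [DSp F] [MetricSpace G] [DSp G]
  [MetricSpace H] [DSp H] {St : OMinimalRealExpansion}

theorem band_decomp (hUF : UF St E) (hPC : PC St E) {X : Set (E × ℝ)}
    (hX : D St (fun x => x ∈ X)) : FC St (Band St) X := by
  let Z : Set (E × ℝ) := {p | p.2 ∈ frontier {y | (p.1, y) ∈ X}}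
  have hZ : D St (fun p => p ∈ Z) := by
    have : D St (fun p : E × ℝ => (∀ ε > (0 : ℝ), ∃ y, (p.1, y) ∈ X ∧ dist p.2 y < ε) ∧
        (∀ ε > (0 : ℝ), ∃ y, (¬ (p.1, y) ∈ X) ∧ dist p.2 y < ε)) := by
      apply_rules [D.exists, D.and, D.not, D.forall, D.imp, D.lt, hX.comp] <;> fun_prop
    refine this.congr fun p => ?_
    change p.2 ∈ frontier _ ↔ _
    rw [frontier_eq_closure_inter_closure, mem_inter_iff, Metric.mem_closure_iff,
      Metric.mem_closure_iff]
    rfl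
  have hfin : ∀ x, {y | (x, y) ∈ Z}.Finite := fun x =>
    frontier_finite (D.omin (P := fun y => (x, y) ∈ X) (hX.comp (by fun_prop)))
  obtain ⟨κ, _, g, hg, hgZ⟩ := hUF.graphs hZ hfin
  have h1 := hPC (κ → ℝ) (fun x i => g i x) (DF.dmet (DF.pi hg)) univ (D.const True)
  have h2 := h1.preim (Q' := Band St) Prod.fst X (fun C _ hC hcont => ?_)
  · simpa using h2
  have hgc : ∀ i, ContinuousOn (g i) C := fun i => continuousOn_pi.1 hcont i
  have hgc' : ∀ i (S : Set ℝ) (C' : Set E), C' ⊆ C →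
      ContinuousOn (fun p : E × ℝ => g i p.1) (C' ×ˢ S) := fun i S C' hC' =>
    (hgc i).comp continuousOn_fst (fun p hp => hC' hp.1)
  have T1 : ∀ i, FC St (Band St) _ := fun i => FC_band (St := St) 
    (C := {x | x ∈ C ∧ (x, g i x) ∈ X}) (S := {x | x = 0})
    (h := fun p => g i p.1) (k := fun p => 0) (by
      have := hg i
      exact hC.and (hX.comp (by fun_prop))) (D.eq (by fun_prop) (by fun_prop))
    (by simp) (by have := hg i; fun_prop) (by fun_prop)
    (hgc' i _ _ fun x hx => hx.1) (fun x hx s hs => hs.symm)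
  have T2 : ∀ ij : κ × κ, FC St (Band St) _ := fun ij => FC_band (St := St) 
    (C := {x | x ∈ C ∧ g ij.1 x < g ij.2 x ∧ ∀ y, g ij.1 x < y → y < g ij.2 x → (x, y) ∈ X})
    (S := {x | 0 < x ∧ x < 1})
    (h := fun p => g ij.1 p.1 + p.2 * (g ij.2 p.1 - g ij.1 p.1))
    (k := fun p => (p.2 - g ij.1 p.1) / (g ij.2 p.1 - g ij.1 p.1)) (by
      have := hg ij.1
      have := hg ij.2
      refine hC.and (?_ : D St fun x => (g ij.1 x < g ij.2 x ∧ _))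
      apply_rules [D.and, D.forall, D.imp, D.lt, hX.comp] <;> fun_prop)
    (D.and (D.lt (by fun_prop) (by fun_prop)) (D.lt (by fun_prop) (by fun_prop)))
    (convex_Ioo (0 : ℝ) 1) (by have := hg ij.1; have := hg ij.2; fun_prop)
    (by have := hg ij.1; have := hg ij.2; fun_prop)
    (by
      have h1 := hgc' ij.1 {x | 0 < x ∧ x < 1} _ (fun (x : E) (hx : x ∈ {x | x ∈ C ∧ g ij.1 x < g ij.2 x ∧ ∀ y, g ij.1 x < y → y < g ij.2 x → (x, y) ∈ X}) => hx.1)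
      have h2 := hgc' ij.2 {x | 0 < x ∧ x < 1} _ (fun (x : E) (hx : x ∈ {x | x ∈ C ∧ g ij.1 x < g ij.2 x ∧ ∀ y, g ij.1 x < y → y < g ij.2 x → (x, y) ∈ X}) => hx.1)
      exact h1.add (continuousOn_snd.mul (h2.sub h1)))
    (fun x hx s hs => by
      have : g ij.2 x - g ij.1 x ≠ 0 := by have := hx.2.1; linarith
      simp only
      field_simp
      ring)
  have T3 : ∀ i, FC St (Band St) _ := fun i => FC_band (St := St) 
    (C := {x | x ∈ C ∧ ∀ y, g i x < y → (x, y) ∈ X}) (S := {x | 0 < x})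
    (h := fun p => g i p.1 + p.2) (k := fun p => p.2 - g i p.1) (by
      have := hg i
      refine hC.and (?_ : D St fun x => ∀ y, g i x < y → (x, y) ∈ X)
      apply_rules [D.forall, D.imp, D.lt, hX.comp] <;> fun_prop)
    (D.lt (by fun_prop) (by fun_prop))
    (convex_Ioi (0 : ℝ)) (by have := hg i; fun_prop) (by have := hg i; fun_prop)
    ((hgc' i _ _ fun x hx => hx.1).add continuousOn_snd) (fun x hx s hs => by simp)
  have T4 : ∀ i, FC St (Band St) _ := fun i => FC_band (St := St) 
    (C := {x | x ∈ C ∧ ∀ y, y < g i x → (x, y) ∈ X}) (S := {x | x < 0})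
    (h := fun p => g i p.1 + p.2) (k := fun p => p.2 - g i p.1) (by
      have := hg i
      refine hC.and (?_ : D St fun x => ∀ y, y < g i x → (x, y) ∈ X)
      apply_rules [D.forall, D.imp, D.lt, hX.comp] <;> fun_prop)
    (D.lt (by fun_prop) (by fun_prop))
    (convex_Iio (0 : ℝ)) (by have := hg i; fun_prop) (by have := hg i; fun_prop)
    ((hgc' i _ _ fun x hx => hx.1).add continuousOn_snd) (fun x hx s hs => by simp)
  have T5 : FC St (Band St) _ := FC_band (St := St) 
    (C := {x | x ∈ C ∧ ∀ y, (x, y) ∈ X}) (S := univ)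
    (h := fun p => p.2) (k := fun p => p.2) (by
      refine hC.and (?_ : D St fun x => ∀ y, (x, y) ∈ X)
      exact D.forall hX)
    (D.const True)
    (convex_univ) (by fun_prop) (by fun_prop)
    continuousOn_snd (fun x hx s hs => rfl)
  refine ((FC.iUnion T1).union ((FC.iUnion T2).union ((FC.iUnion T3).union
    ((FC.iUnion T4).union T5)))).congr ?_
  ext ⟨x, y⟩
  simp only [mem_inter_iff, mem_preimage, mem_union, mem_iUnion, mem_ofPred_eq, and_true]
  constructor
  · rintro ⟨hxC, hxy⟩
    by_cases hyZ : (x, y) ∈ Z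
    · obtain ⟨i, hi⟩ := hgZ x y hyZ
      left
      exact ⟨i, ⟨hxC, hi ▸ hxy⟩, trivial, hi.symm⟩
    right
    have key : ∀ s : Set ℝ, IsPreconnected s → y ∈ s → (∀ z ∈ s, (x, z) ∉ Z) → ∀ z ∈ s, (x, z) ∈ X :=
      fun s hs hy hz => preconn_frontier (t := {y | (x, y) ∈ X}) hs ⟨y, hy, hxy⟩ hz
    have hlow : (∃ i, g i x < y ∧ ∀ z, g i x < z → z ≤ y → (x, z) ∉ Z) ∨ ∀ z, z ≤ y → (x, z) ∉ Z := by
      rcases ({z | (x, z) ∈ Z ∧ z < y}).eq_empty_or_nonempty with h | h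
      · right
        intro z hz hzZ
        have : z ∈ {z | (x, z) ∈ Z ∧ z < y} := ⟨hzZ, lt_of_le_of_ne hz fun h => hyZ (h ▸ hzZ)⟩
        rw [h] at this; exact this
      · left
        obtain ⟨z, hz, hmax⟩ := exists_max_image _ id ((hfin x).subset (fun z hz => hz.1)) h
        obtain ⟨i, hi⟩ := hgZ x z hz.1
        refine ⟨i, hi ▸ hz.2, fun z' h1 h2 h3 => ?_⟩
        have := hmax z' ⟨h3, lt_of_le_of_ne h2 fun h => hyZ (h ▸ h3)⟩
        simp only [id] at this
        linarith
    have hup : (∃ i, y < g i x ∧ ∀ z, z < g i x → y ≤ z → (x, z) ∉ Z) ∨ ∀ z, y ≤ z → (x, z) ∉ Z := by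
      rcases ({z | (x, z) ∈ Z ∧ y < z}).eq_empty_or_nonempty with h | h
      · right
        intro z hz hzZ
        have : z ∈ {z | (x, z) ∈ Z ∧ y < z} := ⟨hzZ, lt_of_le_of_ne hz fun h => hyZ (h ▸ hzZ)⟩
        rw [h] at this; exact this
      · left
        obtain ⟨z, hz, hmax⟩ := exists_min_image _ id ((hfin x).subset (fun z hz => hz.1)) h
        obtain ⟨i, hi⟩ := hgZ x z hz.1
        refine ⟨i, hi ▸ hz.2, fun z' h1 h2 h3 => ?_⟩
        have := hmax z' ⟨h3, lt_of_le_of_ne h2 fun h => hyZ (h ▸ h3)⟩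
        simp only [id] at this
        linarith
    rcases hlow with ⟨i, hi1, hi2⟩ | hlow <;> rcases hup with ⟨j, hj1, hj2⟩ | hup
    · left
      have hij : 0 < g j x - g i x := by linarith
      refine ⟨(i, j), ⟨hxC, by linarith, fun z h1 h2 => key (Ioo (g i x) (g j x)) isPreconnected_Ioo
        ⟨hi1, hj1⟩ (fun z hz => ?_) z ⟨h1, h2⟩⟩, ⟨div_pos (by linarith) hij, ?_⟩, ?_⟩
      · rcases le_total z y with h | h
        · exact hi2 z hz.1 h
        · exact hj2 z hz.2 h
      · rw [div_lt_one hij]; linarith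
      · field_simp; ring
    · right; left
      refine ⟨i, ⟨hxC, fun z h1 => key (Ioi (g i x)) isPreconnected_Ioi hi1 (fun z hz => ?_) z h1⟩,
        by linarith, by ring⟩
      rcases le_total z y with h | h
      · exact hi2 z hz h
      · exact hup z h
    · right; right; left
      refine ⟨j, ⟨hxC, fun z h1 => key (Iio (g j x)) isPreconnected_Iio hj1 (fun z hz => ?_) z h1⟩,
        by linarith, by ring⟩
      rcases le_total z y with h | h
      · exact hlow z h
      · exact hj2 z hz h
    · right; right; right
      refine ⟨⟨hxC, fun z => key univ isPreconnected_univ trivial (fun z hz => ?_) z trivial⟩,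
        trivial⟩
      rcases le_total z y with h | h
      · exact hlow z h
      · exact hup z h
  · rintro (⟨i, ⟨h1, h2⟩, -, h3⟩ | ⟨⟨i, j⟩, ⟨h1, h2, h3⟩, ⟨h4, h5⟩, h6⟩ | ⟨i, ⟨h1, h2⟩, h3, h4⟩ |
      ⟨i, ⟨h1, h2⟩, h3, h4⟩ | ⟨⟨h1, h2⟩, -⟩)
    · exact ⟨h1, h3 ▸ h2⟩
    · have hij : 0 < g j x - g i x := by simp only at h2; linarith
      rw [div_pos_iff_of_pos_right hij] at h4
      rw [div_lt_one hij] at h5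
      exact ⟨h1, h3 y (by linarith) (by linarith)⟩
    · exact ⟨h1, h2 y (by linarith)⟩
    · exact ⟨h1, h2 y (by linarith)⟩
    · exact ⟨h1, h2 y⟩

/-- all the basic finiteness properties -/
structure Good (St : OMinimalRealExpansion) (E : Type) [MetricSpace E] [DSp E] : Prop where
  uf : UF St E
  pc : PC St E
  thin : THIN St E
  conn : CONN St E

theorem Good.thin_succ (h : Good St E) : THIN St (E × ℝ) := by
  intro X hX hi
  have hm : ddim (E × ℝ) = ddim E + 1 := by rw [ddim_prod, ddim_real]
  rw [hm]
  let B : Set E := {x | ∃ c d : ℝ, c < d ∧ ∀ y, c < y → y < d → (x, y) ∈ X}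
  have hB : D St (fun x => x ∈ B) := by
    have : D St (fun x => ∃ c d : ℝ, c < d ∧ ∀ y, c < y → y < d → (x, y) ∈ X) := by
      apply_rules [D.exists, D.and, D.not, D.forall, D.imp, D.lt, hX.comp] <;> fun_prop
    exact this
  have hBi : interior B = ∅ := by
    by_contra hne
    let Y : ℚ × ℚ → Set E := fun cd =>
      {x | cd.1 < cd.2 ∧ ∀ y : ℝ, (cd.1 : ℝ) < y → y < cd.2 → (x, y) ∈ X}
    have hY : ∀ k, D St (fun x => x ∈ Y k) := by
      rintro ⟨c, d⟩
      have : D St (fun x => c < d ∧ ∀ y : ℝ, (c : ℝ) < y → y < d → (x, y) ∈ X) := by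
        apply_rules [D.const, D.and, D.forall, D.imp, D.lt, hX.comp] <;> fun_prop
      exact this
    obtain ⟨⟨c, d⟩, x, hx, -⟩ := DI_plus hY isOpen_interior (nonempty_iff_ne_empty.2 hne) (by
      intro x hx
      obtain ⟨a, b, hab, h1⟩ := interior_subset hx
      obtain ⟨c, hc1, hc2⟩ := exists_rat_btwn hab
      obtain ⟨d, hd1, hd2⟩ := exists_rat_btwn hc2
      exact ⟨(c, d), by exact_mod_cast hd1, fun y h3 h4 => h1 y (by linarith) (by simp only at h4; linarith)⟩)
    have hcd : c < d := (interior_subset hx).1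
    obtain ⟨y, hy1, hy2⟩ := exists_between (show (c : ℝ) < d by exact_mod_cast hcd)
    have : (x, y) ∈ interior X := by
      rw [mem_interior]
      refine ⟨interior (Y (c, d)) ×ˢ Ioo (c : ℝ) d, ?_, isOpen_interior.prod isOpen_Ioo,
        ⟨hx, hy1, hy2⟩⟩
      rintro ⟨x', y'⟩ ⟨h1, h2, h3⟩
      exact (interior_subset h1).2 y' h2 h3
    rw [hi] at this
    exact this
  have h1 : FC St (Red St (ddim E + 1)) (Prod.fst ⁻¹' B ∩ X) := by
    refine (h.thin B hB hBi).preim Prod.fst X fun t _ ht => ?_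
    rintro ⟨E', _, _, φ, ψ, hE', hφ, hψ, hφc, hψc, hid⟩
    refine FC.of (ht.fst.and hX) ⟨E' × ℝ, inferInstance, inferInstance, fun p => (φ p.1, p.2),
      fun p => (ψ p.1, p.2), ?_, by fun_prop, by fun_prop, ?_, ?_, ?_⟩
    · rw [ddim_prod, ddim_real]; omega
    · exact (hφc.comp continuousOn_fst fun p hp => hp.1).prodMk continuousOn_snd
    · refine (hψc.comp continuousOn_fst ?_).prodMk continuousOn_snd
      rintro _ ⟨p, hp, rfl⟩
      exact ⟨p.1, hp.1, rfl⟩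
    · intro p hp
      simp [hid p.1 hp.1]
  let Z : Set (E × ℝ) := {p | p.1 ∉ B ∧ p ∈ X}
  have hZ : D St (fun p => p ∈ Z) := hB.not.fst.and hX
  have hfin : ∀ x, {y | (x, y) ∈ Z}.Finite := by
    intro x
    by_cases hx : x ∈ B
    · have : {y | (x, y) ∈ Z} = ∅ := by
        ext y; simp only [mem_ofPred_eq, mem_empty_iff_false, iff_false]
        rintro ⟨h1, -⟩; exact h1 hx
      rw [this]; exact finite_empty
    · rcases D.omin_cases (St := St) (P := fun y => (x, y) ∈ X) (hX.comp (by fun_prop)) with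
        ⟨c, d, hcd, h1⟩ | hfin
      · exact absurd ⟨c, d, by exact_mod_cast hcd, h1⟩ hx
      · exact hfin.subset fun y hy => hy.2
  obtain ⟨κ, _, g, hg, hgZ⟩ := h.uf.graphs hZ hfin
  have h2 : ∀ i : κ, FC St (Red St (ddim E + 1)) (Prod.fst ⁻¹' univ ∩ {p | p ∈ Z ∧ p.2 = g i p.1}) := by
    intro i
    have hgi := hg i
    refine (h.pc ℝ (g i) (hg i).dmet univ (D.const True)).preim Prod.fst _ fun C _ hC hcont => ?_
    refine FC.of (hC.fst.and (hZ.and (D.eq (by fun_prop) (by fun_prop)))) ⟨E, inferInstance, inferInstance,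
      fun p => p.1, fun x => (x, g i x), ?_, by fun_prop, by fun_prop, continuousOn_fst, ?_, ?_⟩
    · omega
    · refine continuousOn_id.prodMk (hcont.mono ?_)
      rintro _ ⟨p, hp, rfl⟩; exact hp.1
    · rintro ⟨x, y⟩ ⟨-, -, hxy⟩
      exact Prod.ext rfl hxy.symm
  refine (h1.union (FC.iUnion h2)).congr ?_
  ext ⟨x, y⟩
  simp only [preimage_univ, univ_inter, mem_union, mem_iUnion, mem_inter_iff, mem_preimage]
  constructor
  · intro hxy
    by_cases hx : x ∈ B
    · exact Or.inl ⟨hx, hxy⟩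
    · right
      obtain ⟨i, hi⟩ := hgZ x y ⟨hx, hxy⟩
      exact ⟨i, ⟨hx, hxy⟩, hi⟩
  · rintro (h | ⟨i, h, -⟩)
    · exact h.2
    · exact h.2

theorem D.image {φ : E → F} (hφ : DF St φ) {t : Set E} (ht : D St (fun x => x ∈ t)) :
    D St (fun y => y ∈ φ '' t) := by
  have : D St (fun y => ∃ x, x ∈ t ∧ φ x = y) := by
    apply_rules [D.exists, D.and, D.eq, ht.comp] <;> fun_prop
  exact this

theorem pc_of_thin (hthin : THIN St E)
    (ih : ∀ (E' : Type) [MetricSpace E'] [DSp E'], ddim E' < ddim E → Good St E') : PC St E := by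
  intro Y _ _ f hf X hX
  have hbad := hf.bad
  have h1 : FC St (fun t => ContinuousOn f t) ({x | ¬ ContinuousAt f x} ∩ X) := by
    refine (hthin _ hbad hf.bad_interior).preim id X fun t _ ht => ?_
    rintro ⟨E', _, _, φ, ψ, hE', hφ, hψ, hφc, hψc, hid⟩
    have := (ih E' hE').pc Y (fun w => f (ψ w)) (hf.comp hψ) (φ '' (t ∩ X)) (D.image hφ (ht.and hX))
    have h2 := this.preim (Q' := fun t => ContinuousOn f t) φ (t ∩ X) fun C _ hC hcont => ?_
    · refine h2.congr ?_
      ext x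
      simp only [preimage_id, mem_inter_iff, mem_preimage]
      exact ⟨fun h => ⟨⟨x, h, rfl⟩, h⟩, fun h => h.2⟩
    · refine FC.of ((hC.comp hφ).and (ht.and hX)) ?_
      have h3 : ContinuousOn (fun x => f (ψ (φ x))) (φ ⁻¹' C ∩ (t ∩ X)) :=
        ContinuousOn.comp (g := fun w => f (ψ w)) hcont (hφc.mono fun x hx => hx.2.1) fun x hx => hx.1
      exact h3.congr fun x hx => by simp only [hid x hx.2.1]
  have h2 : FC St (fun t => ContinuousOn f t) (X \ {x | ¬ ContinuousAt f x}) := by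
    refine FC.of (hX.and hbad.not) ?_
    intro x hx
    have : ContinuousAt f x := by
      by_contra hcon; exact hx.2 hcon
    exact this.continuousWithinAt
  refine (h1.union h2).congr ?_
  rw [inter_comm, inter_union_sdiff]

theorem Good.conn_succ (h : Good St E) : CONN St (E × ℝ) := by
  intro X hX
  refine (band_decomp h.uf h.pc hX).bind fun t _ ht => ?_
  rintro ⟨C, S, H, k, hC, hS, hconv, hh, hk, hcont, hkh, rfl⟩
  have := (h.conn C hC).preim (Q' := fun t => IsPreconnected t) Prod.fst
    {p : E × ℝ | p.1 ∈ C ∧ k p ∈ S ∧ H (p.1, k p) = p.2} fun C' hC'C hC' hconn => ?_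
  · refine this.congr ?_
    ext p; constructor
    · intro h; exact ⟨h.1, h⟩
    · intro h; exact h.2
  · refine FC.of (hC'.fst.and ht) ?_
    have h1 : IsPreconnected (C' ×ˢ S) := hconn.prod hconv.isPreconnected
    have h2 : ContinuousOn (fun p : E × ℝ => (p.1, H p)) (C' ×ˢ S) :=
      continuousOn_fst.prodMk (hcont.mono (prod_mono hC'C subset_rfl))
    convert h1.image _ h2 using 1
    ext p
    constructor
    · rintro ⟨h3, h4, h5, h6⟩
      exact ⟨(p.1, k p), ⟨h3, h5⟩, Prod.ext rfl h6⟩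
    · rintro ⟨⟨x, s⟩, ⟨h3, h4⟩, rfl⟩
      exact ⟨h3, Band.mem hkh (hC'C h3) h4⟩

theorem uf_of_thin (hthin : THIN St E) (hconn : CONN St E)
    (ih : ∀ (E' : Type) [MetricSpace E'] [DSp E'], ddim E' < ddim E → Good St E') : UF St E := by
  intro Z hZ hfin
  let P : Set E → Prop := fun t => ∃ N, ∀ x ∈ t, {y | (x, y) ∈ Z}.ncard ≤ N
  suffices hmain : P univ by
    obtain ⟨N, hN⟩ := hmain
    exact ⟨N, fun x => hN x trivial⟩
  have hPu : ∀ s t, P s → P t → P (s ∪ t) := by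
    rintro s t ⟨N, hN⟩ ⟨M, hM⟩
    refine ⟨max N M, ?_⟩
    rintro x (hx | hx)
    · exact (hN x hx).trans (le_max_left _ _)
    · exact (hM x hx).trans (le_max_right _ _)
  have hPFC : ∀ X, FC St P X → P X := by
    intro X hX
    induction hX with
    | empty => exact ⟨0, fun x hx => hx.elim⟩
    | of ht hq => exact hq
    | union _ _ ih1 ih2 => exact hPu _ _ ih1 ih2
  let G : Set E := {x | ∃ ε > (0 : ℝ), ∃ δ > (0 : ℝ), ∀ x', dist x' x < δ →
    (∀ y, (x, y) ∈ Z → ∃ y', ((x', y') ∈ Z ∧ dist y y' < ε) ∧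
      ∀ y'', (x', y'') ∈ Z → dist y y'' < ε → y'' = y') ∧
    (∀ y', (x', y') ∈ Z → ∃ y, ((x, y) ∈ Z ∧ dist y y' < ε) ∧
      ∀ y'', (x, y'') ∈ Z → dist y'' y' < ε → y'' = y)}
  have hG : D St (fun x => x ∈ G) := by
    refine (?_ : D St (fun x => ∃ ε > (0 : ℝ), ∃ δ > (0 : ℝ), ∀ x', dist x' x < δ →
      (∀ y, (x, y) ∈ Z → ∃ y', ((x', y') ∈ Z ∧ dist y y' < ε) ∧
      ∀ y'', (x', y'') ∈ Z → dist y y'' < ε → y'' = y') ∧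
    (∀ y', (x', y') ∈ Z → ∃ y, ((x, y) ∈ Z ∧ dist y y' < ε) ∧
      ∀ y'', (x, y'') ∈ Z → dist y'' y' < ε → y'' = y)))
    apply_rules [D.exists, D.and, D.forall, D.imp, D.lt, D.eq, hZ.comp] <;>
      first | fun_prop | (apply_rules [D.exists, D.and, D.forall, D.imp, D.lt, D.eq, hZ.comp] <;> fun_prop)
  have hGc : ∀ x ∈ G, ContinuousAt (fun x => {y | (x, y) ∈ Z}.ncard) x := by
    rintro x ⟨ε, hε, δ, hδ, h⟩
    refine ContinuousAt.congr (f := fun _ => {y | (x, y) ∈ Z}.ncard) continuousAt_const ?_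
    filter_upwards [Metric.ball_mem_nhds x hδ] with x' hx'
    obtain ⟨h1, h2⟩ := h x' hx'
    choose! f hf1 hf2 using h1
    choose! f' hf1' hf2' using h2
    refine ncard_congr (fun y _ => f y) (fun y hy => (hf1 y hy).1) ?_ ?_
    · intro y1 y2 hy1 hy2 heq
      have e1 := hf2' (f y1) (hf1 y1 hy1).1 y1 hy1 (hf1 y1 hy1).2
      have e2 := hf2' (f y1) (hf1 y1 hy1).1 y2 hy2 (by rw [heq]; exact (hf1 y2 hy2).2)
      rw [e1, e2]
    · intro y' hy'
      exact ⟨f' y', (hf1' y' hy').1, (hf2 _ (hf1' y' hy').1 y' hy' (hf1' y' hy').2).symm⟩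
  have hPG : P G := by
    refine hPFC _ ((hconn G hG).mono fun t htG _ ht => ?_)
    rcases t.eq_empty_or_nonempty with rfl | ⟨x, hx⟩
    · exact ⟨0, fun x hx => hx.elim⟩
    · refine ⟨{y | (x, y) ∈ Z}.ncard, fun x' hx' => le_of_eq ?_⟩
      exact ht.constant (f := fun x => {y | (x, y) ∈ Z}.ncard)
        (fun z hz => (hGc z (htG hz)).continuousWithinAt) hx' hx
  have hGi : interior Gᶜ = ∅ := by
    by_contra hne
    let A : ℕ → Set E := fun n => {x | ∃ v : Fin n → ℝ, (∀ i j, i < j → v i < v j) ∧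
      (∀ i, (x, v i) ∈ Z) ∧ ∀ y, (x, y) ∈ Z → ∃ i, v i = y}
    have hA : ∀ n, D St (fun x => x ∈ A n) := by
      intro n
      refine (?_ : D St (fun x => ∃ v : Fin n → ℝ, (∀ i j, i < j → v i < v j) ∧
        (∀ i, (x, v i) ∈ Z) ∧ ∀ y, (x, y) ∈ Z → ∃ i, v i = y))
      refine D.exists (D.and (D.allFin fun i => D.allFin fun j => D.imp (D.const _) ?_) (D.and
        (D.allFin fun i => ?_) (D.forall (D.imp ?_ (D.exFin fun i => ?_)))))
      all_goals apply_rules [D.lt, hZ.comp, D.eq] <;> fun_prop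
    have hAcard : ∀ n, ∀ x ∈ A n, {y | (x, y) ∈ Z}.ncard = n := by
      rintro n x ⟨v, h1, h2, h3⟩
      have hv : StrictMono v := fun i j h => h1 i j h
      have : {y | (x, y) ∈ Z} = range v := by
        ext y
        exact ⟨fun h => h3 y h, by rintro ⟨i, rfl⟩; exact h2 i⟩
      rw [this, ← image_univ, ncard_image_of_injective _ hv.injective]
      simp
    have hcov : ∀ x, x ∈ A {y | (x, y) ∈ Z}.ncard := by
      intro x
      obtain ⟨f, -, hf⟩ := exists_enum hZ {y | (x, y) ∈ Z}.ncard
      obtain ⟨h1, h2⟩ := hf x (hfin x) rfl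
      refine ⟨f x, fun i j h => h1 h, fun i => ?_, fun y hy => ?_⟩
      · have : f x i ∈ range (f x) := ⟨i, rfl⟩
        rw [h2] at this; exact this
      · have : y ∈ range (f x) := by rw [h2]; exact hy
        exact this
    obtain ⟨n, hn⟩ := DI_plus hA isOpen_interior (nonempty_iff_ne_empty.2 hne)
      (fun x _ => ⟨_, hcov x⟩)
    obtain ⟨f, hfD, hf⟩ := exists_enum hZ n
    obtain ⟨x, hx, hcx⟩ := GC hfD.dmet (isOpen_interior.inter isOpen_interior) hn
    have hf' : ∀ x ∈ interior (A n), StrictMono (f x) ∧ ∀ y, (x, y) ∈ Z ↔ ∃ i, f x i = y := by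
      intro x hx
      obtain ⟨h1, h2⟩ := hf x (hfin x) (hAcard n x (interior_subset hx))
      refine ⟨h1, fun y => ?_⟩
      have : y ∈ range (f x) ↔ y ∈ {y | (x, y) ∈ Z} := by rw [h2]
      exact this.symm
    refine interior_subset hx.2 ?_
    obtain ⟨hm, hZx⟩ := hf' x hx.1
    have hsep : ∃ ε > 0, ∀ i j, i ≠ j → 2 * ε ≤ dist (f x i) (f x j) := by
      by_cases hS : (Finset.univ.filter fun ij : Fin n × Fin n => ij.1 ≠ ij.2).Nonempty
      · obtain ⟨⟨i, j⟩, hij, hmin⟩ := Finset.exists_min_image _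
          (fun ij : Fin n × Fin n => dist (f x ij.1) (f x ij.2)) hS
        refine ⟨dist (f x i) (f x j) / 2, ?_, fun i' j' h => ?_⟩
        · have : i ≠ j := by simpa using hij
          have := dist_pos.2 (hm.injective.ne this)
          linarith
        · have := hmin (i', j') (by simpa using h)
          simp only at this
          linarith
      · refine ⟨1, one_pos, fun i j hij => absurd ⟨(i, j), by simpa using hij⟩ hS⟩
    obtain ⟨ε, hε, hsep⟩ := hsep
    obtain ⟨δ, hδ, hδ'⟩ := Metric.eventually_nhds_iff.1
      (((Metric.continuousAt_iff'.1 hcx) ε hε).and (isOpen_interior.mem_nhds hx.1))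
    refine ⟨ε, hε, δ, hδ, fun x' hx' => ?_⟩
    obtain ⟨hd, hA'⟩ := hδ' hx'
    obtain ⟨hm', hZx'⟩ := hf' x' hA'
    have hdi : ∀ i, dist (f x i) (f x' i) < ε := fun i => by
      rw [dist_comm]; exact (dist_le_pi_dist _ _ i).trans_lt hd
    have huniq : ∀ i j, dist (f x i) (f x' j) < ε → i = j := by
      intro i j h
      by_contra hne
      have h1 := hsep i j hne
      have h2 := dist_triangle_right (f x i) (f x j) (f x' j)
      have h3 := hdi j
      linarith
    constructor
    · intro y hy
      obtain ⟨i, rfl⟩ := (hZx y).1 hy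
      refine ⟨f x' i, ⟨(hZx' _).2 ⟨i, rfl⟩, hdi i⟩, ?_⟩
      intro y'' h1 h2
      obtain ⟨j, rfl⟩ := (hZx' _).1 h1
      rw [huniq i j h2]
    · intro y' hy'
      obtain ⟨i, rfl⟩ := (hZx' _).1 hy'
      refine ⟨f x i, ⟨(hZx _).2 ⟨i, rfl⟩, hdi i⟩, ?_⟩
      intro y'' h1 h2
      obtain ⟨j, rfl⟩ := (hZx _).1 h1
      rw [huniq j i h2]
  have hPGc : P Gᶜ := by
    refine hPFC _ ((hthin Gᶜ hG.not hGi).mono fun t _ ht => ?_)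
    rintro ⟨E', _, _, φ, ψ, hE', hφ, hψ, hφc, hψc, hid⟩
    have hc : D St (fun p : E' × ℝ => p ∈ {p : E' × ℝ | (ψ p.1, p.2) ∈ Z}) := by
      exact hZ.comp (f := fun p : E' × ℝ => (ψ p.1, p.2)) (by fun_prop)
    obtain ⟨N, hN⟩ := (ih E' hE').uf _ hc (fun w => hfin (ψ w))
    refine ⟨N, fun x hx => ?_⟩
    have := hN (φ x)
    simp only [mem_ofPred_eq, hid x hx] at this
    exact this
  have := hPu _ _ hPG hPGc
  rwa [union_compl_self] at this

theorem Good.transfer (i : DIso St E F) (hd : ddim E = ddim F) (h : Good St E) : Good St F := by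
  have hi := i.df
  have hi' := i.df'
  have hc := i.e.continuous
  have hc' := i.e.symm.continuous
  constructor
  · intro Z hZ hfin
    have hc : D St (fun p : E × ℝ => p ∈ {p : E × ℝ | (i.e p.1, p.2) ∈ Z}) :=
      hZ.comp (f := fun p : E × ℝ => (i.e p.1, p.2)) (by fun_prop)
    obtain ⟨N, hN⟩ := h.uf _ hc (fun x => hfin (i.e x))
    refine ⟨N, fun x => ?_⟩
    have := hN (i.e.symm x)
    simpa using this
  · intro Y _ _ f hf X hX
    have h1 := (h.pc Y (fun x => f (i.e x)) (hf.comp hi) (i.e ⁻¹' X) (hX.comp hi)).preim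
      (Q' := fun t => ContinuousOn f t) i.e.symm univ fun t _ ht hct => by
        refine FC.of ((ht.comp hi').and (D.const True)) ?_
        have : ContinuousOn (fun x => f (i.e (i.e.symm x))) (i.e.symm ⁻¹' t ∩ univ) :=
          ContinuousOn.comp (g := fun w => f (i.e w)) hct hc'.continuousOn fun x hx => hx.1
        exact this.congr fun x hx => by simp
    refine h1.congr ?_
    ext x; simp
  · intro X hX hInt
    have h1 := (h.thin (i.e ⁻¹' X) (hX.comp hi) (by
      have := i.e.toHomeomorph.preimage_interior X
      rw [hInt] at this
      simpa using this.symm)).preim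
      (Q' := Red St (ddim F)) i.e.symm univ fun t _ ht hred => by
        obtain ⟨E', _, _, φ, ψ, hE', hφ, hψ, hφc, hψc, hid⟩ := hred
        refine FC.of ((ht.comp hi').and (D.const True)) ⟨E', inferInstance, inferInstance,
          fun x => φ (i.e.symm x), fun w => i.e (ψ w), by omega, by fun_prop, by fun_prop,
          hφc.comp hc'.continuousOn fun x hx => hx.1, ?_, fun x hx => ?_⟩
        · refine hc.comp_continuousOn (hψc.mono ?_)
          rintro _ ⟨x, hx, rfl⟩
          exact ⟨_, hx.1, rfl⟩
        · simp only [hid _ hx.1]; simp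
    refine h1.congr ?_
    ext x; simp
  · intro X hX
    have h1 := (h.conn (i.e ⁻¹' X) (hX.comp hi)).preim
      (Q' := fun t => IsPreconnected t) i.e.symm univ fun t _ ht hct => by
        refine FC.of ((ht.comp hi').and (D.const True)) ?_
        convert hct.image _ hc.continuousOn using 1
        ext x
        simp only [inter_univ, mem_preimage, mem_image]
        exact ⟨fun h => ⟨_, h, by simp⟩, by rintro ⟨y, hy, rfl⟩; simpa using hy⟩
    refine h1.congr ?_
    ext x; simp

theorem Good.zero (h : ddim E = 0) : Good St E := by
  have hsub : Subsingleton E := by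
    have h1 : IsEmpty (DSp.ι E) := Fintype.card_eq_zero_iff.1 h
    exact (DSp.coord (E := E)).injective.subsingleton
  constructor
  · intro Z hZ hfin
    rcases isEmpty_or_nonempty E with hE | ⟨⟨x⟩⟩
    · exact ⟨0, fun x => hE.elim x⟩
    · exact ⟨{y | (x, y) ∈ Z}.ncard, fun x' => by rw [Subsingleton.elim x' x]⟩
  · intro Y _ _ f hf X hX
    exact FC.of hX (subsingleton_of_subsingleton.continuousOn f)
  · intro X hX hInt
    rcases X.eq_empty_or_nonempty with rfl | ⟨x, hx⟩
    · exact FC.empty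
    · have : X = univ := by
        ext y; simp only [mem_univ, iff_true]; rwa [Subsingleton.elim y x]
      rw [this, interior_univ] at hInt
      exact absurd (mem_univ x) (hInt ▸ notMem_empty x)
  · intro X hX
    exact FC.of hX subsingleton_of_subsingleton.isPreconnected

theorem Good.all (St : OMinimalRealExpansion) (E : Type) [MetricSpace E] [DSp E] : Good St E := by
  have key : ∀ m, ∀ (E : Type) [MetricSpace E] [DSp E], ddim E = m → Good St E := by
    intro m
    induction m using Nat.strong_induction_on with
    | _ m ih =>
      intro E _ _ hE
      rcases m with _ | m
      · exact Good.zero hE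
      · obtain ⟨i⟩ := exists_iso_succ (St := St) E hE
        have hd : ddim ((Fin m → ℝ) × ℝ) = m + 1 := by rw [ddim_prod, ddim_real, ddim_fin]
        have ih' : ∀ (E' : Type) [MetricSpace E'] [DSp E'], ddim E' < ddim ((Fin m → ℝ) × ℝ) →
          Good St E' := fun E' _ _ hE' => ih _ (hd ▸ hE') E' rfl
        have h0 : Good St (Fin m → ℝ) := ih m (by omega) _ (ddim_fin m)
        exact Good.transfer i (hd.trans hE.symm) ⟨uf_of_thin h0.thin_succ h0.conn_succ ih',
          pc_of_thin h0.thin_succ ih', h0.thin_succ, h0.conn_succ⟩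
  exact key _ E rfl

/-- Piecewise continuity theorem. -/
theorem piecewise_cont {Y : Type} [MetricSpace Y] [SecondCountableTopology Y] {f : E → Y}
    (hf : DMet St f) {X : Set E} (hX : D St (fun x => x ∈ X)) :
    FC St (fun t => ContinuousOn f t) X := (Good.all St E).pc Y f hf X hX

theorem band_all {X : Set (E × ℝ)} (hX : D St (fun x => x ∈ X)) : FC St (Band St) X :=
  band_decomp (Good.all St E).uf (Good.all St E).pc hX

end induction


open FirstOrder Set Filter Topology

set_option linter.unusedSectionVars false

section paths

variable {A B E F G H : Type} [MetricSpace A] [DSp A] [MetricSpace B] [DSp B]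
  [MetricSpace E] [DSp E] [MetricSpace F] [DSp F] [MetricSpace G] [DSp G]
  [MetricSpace H] [DSp H] {St : OMinimalRealExpansion}

/-- clamp to the unit interval -/
noncomputable def clamp (u : ℝ) : ℝ := max 0 (min u 1)

theorem clamp_mem (u : ℝ) : clamp u ∈ Icc (0 : ℝ) 1 := by
  unfold clamp
  exact ⟨le_max_left _ _, max_le zero_le_one (min_le_right _ _)⟩

theorem clamp_of_mem {u : ℝ} (h : u ∈ Icc (0 : ℝ) 1) : clamp u = u := by
  unfold clamp
  rw [min_eq_left h.2, max_eq_right h.1]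

@[simp] theorem clamp_zero : clamp 0 = 0 := clamp_of_mem (by simp)
@[simp] theorem clamp_one : clamp 1 = 1 := clamp_of_mem (by simp)

@[fun_prop]
theorem continuous_clamp : Continuous clamp := by
  unfold clamp; fun_prop

@[fun_prop]
theorem DF.clamp {f : E → ℝ} (hf : DF St f) : DF St (fun x => clamp (f x)) := by
  unfold _root_.clamp; fun_prop

/-- total paths inside a set -/
def PathIn (γ : ℝ → E) (S : Set E) (z z' : E) : Prop :=
  Continuous γ ∧ γ 0 = z ∧ γ 1 = z' ∧ ∀ u, γ u ∈ S

/-- concatenation -/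
noncomputable def cat (α β : ℝ → E) : ℝ → E := fun u => if u ≤ 1 / 2 then α (2 * u) else β (2 * u - 1)

theorem cat_continuous {α β : ℝ → E} (hα : Continuous α) (hβ : Continuous β) (h : α 1 = β 0) :
    Continuous (cat α β) := by
  unfold cat
  refine Continuous.if_le (by fun_prop) (by fun_prop) (by fun_prop) (by fun_prop) ?_
  intro u hu
  rw [hu]; norm_num [h]

theorem cat_zero (α β : ℝ → E) : cat α β 0 = α 0 := by simp [cat]
theorem cat_one (α β : ℝ → E) : cat α β 1 = β 1 := by simp [cat]; norm_num

theorem PathIn.cat {α β : ℝ → E} {S : Set E} {x y z : E} (hα : PathIn α S x y)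
    (hβ : PathIn β S y z) : PathIn (cat α β) S x z := by
  refine ⟨cat_continuous hα.1 hβ.1 (hα.2.2.1.trans hβ.2.1.symm), ?_, ?_, fun u => ?_⟩
  · rw [cat_zero, hα.2.1]
  · rw [cat_one, hβ.2.2.1]
  · unfold _root_.cat
    split_ifs
    · exact hα.2.2.2 _
    · exact hβ.2.2.2 _

theorem PathIn.symm {α : ℝ → E} {S : Set E} {x y : E} (hα : PathIn α S x y) :
    PathIn (fun u => α (1 - u)) S y x := by
  refine ⟨hα.1.comp (by fun_prop), ?_, ?_, fun u => hα.2.2.2 _⟩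
  · simp [hα.2.2.1]
  · simp [hα.2.1]

theorem PathIn.const {S : Set E} {x : E} (hx : x ∈ S) : PathIn (fun _ => x) S x x :=
  ⟨continuous_const, rfl, rfl, fun _ => hx⟩

theorem DF.cat {f g : F × ℝ → E} (hf : DF St f) (hg : DF St g) :
    DF St (fun p : F × ℝ => cat (fun u => f (p.1, u)) (fun u => g (p.1, u)) p.2) := by
  unfold _root_.cat
  exact DF.ite' (D.le (by fun_prop) (by fun_prop)) (by fun_prop) (by fun_prop)

/-- fiberwise definable paths -/
def FP (St : OMinimalRealExpansion) (t : Set (A × E)) : Prop :=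
  ∃ c : (A × (E × E)) × ℝ → E, DF St c ∧ ∀ a z z', (a, z) ∈ t → (a, z') ∈ t →
    PathIn (fun u => c ((a, (z, z')), u)) {w | (a, w) ∈ t} z z'

/-- all definable families decompose into path families -/
def FPall (St : OMinimalRealExpansion) (E : Type) [MetricSpace E] [DSp E] : Prop :=
  ∀ (A : Type) [MetricSpace A] [DSp A] (Z : Set (A × E)), D St (fun x => x ∈ Z) → FC St (FP St) Z

theorem fp_transfer (i : DIso St E F) (h : FPall St E) : FPall St F := by
  intro A _ _ Z hZ
  have hi := i.df
  have hi' := i.df'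
  have key : ∀ t : Set (A × E), D St (fun x => x ∈ t) → FP St t →
      FC St (FP St) ((fun p : A × F => (p.1, i.e.symm p.2)) ⁻¹' t ∩ univ) := by
    intro t ht hFP
    obtain ⟨c, hc, hp⟩ := hFP
    have hd : D St (fun p : A × F => (p.1, i.e.symm p.2) ∈ t) :=
      ht.comp (f := fun p : A × F => (p.1, i.e.symm p.2)) (by fun_prop)
    refine FC.of (hd.and (D.const True))
      ⟨fun p => i.e (c ((p.1.1, (i.e.symm p.1.2.1, i.e.symm p.1.2.2)), p.2)), by fun_prop, ?_⟩
    intro a z z' hz hz'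
    obtain ⟨h1, h2, h3, h4⟩ := hp a _ _ hz.1 hz'.1
    refine ⟨i.e.continuous.comp h1, ?_, ?_, fun u => ⟨?_, trivial⟩⟩
    · simp only [h2, IsometryEquiv.apply_symm_apply]
    · simp only [h3, IsometryEquiv.apply_symm_apply]
    · have := h4 u
      simp only [mem_ofPred_eq] at this
      simp only [mem_preimage, IsometryEquiv.symm_apply_apply]
      exact this
  have hd : D St (fun p : A × E => (p.1, i.e p.2) ∈ Z) :=
    hZ.comp (f := fun p : A × E => (p.1, i.e p.2)) (by fun_prop)
  have h1 := h A {p | (p.1, i.e p.2) ∈ Z} hd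
  have := h1.preim (Q' := FP St) (fun p : A × F => (p.1, i.e.symm p.2)) univ fun t _ => key t
  refine this.congr ?_
  ext p; simp

theorem fp_base : FPall St (Fin 0 → ℝ) := by
  intro A _ _ Z hZ
  refine FC.of hZ ⟨fun p => p.1.2.1, by fun_prop, ?_⟩
  intro a z z' hz hz'
  exact ⟨continuous_const, rfl, Subsingleton.elim _ _, fun u => hz⟩

theorem fp_step (h : FPall St E) : FPall St (E × ℝ) := by
  intro A _ _ Z hZ
  have hd : D St (fun p : (A × E) × ℝ => (p.1.1, (p.1.2, p.2)) ∈ Z) :=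
    hZ.comp (f := fun p : (A × E) × ℝ => (p.1.1, (p.1.2, p.2))) (by fun_prop)
  have hb := band_all (E := A × E) (X := {p | (p.1.1, (p.1.2, p.2)) ∈ Z}) hd
  have key : ∀ t : Set ((A × E) × ℝ), D St (fun x => x ∈ t) → Band St t →
      FC St (FP St) ((fun p : A × (E × ℝ) => ((p.1, p.2.1), p.2.2)) ⁻¹' t ∩ univ) := by
    intro t ht hband
    obtain ⟨C, S, H, k, hC, hS, hconv, hh, hk, hcont, hkh, rfl⟩ := hband
    have hd2 : D St (fun p : A × (E × ℝ) => ((p.1, p.2.1), p.2.2) ∈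
        {p : (A × E) × ℝ | p.1 ∈ C ∧ k p ∈ S ∧ H (p.1, k p) = p.2}) :=
      ht.comp (f := fun p : A × (E × ℝ) => ((p.1, p.2.1), p.2.2)) (by fun_prop)
    have key2 : ∀ C' : Set (A × E), C' ⊆ C → D St (fun x => x ∈ C') → FP St C' →
        FC St (FP St) ((fun p : A × (E × ℝ) => (p.1, p.2.1)) ⁻¹' C' ∩
          {p | ((p.1, p.2.1), p.2.2) ∈ {p : (A × E) × ℝ | p.1 ∈ C ∧ k p ∈ S ∧ H (p.1, k p) = p.2}}) := by
      intro C' hC'C hC' hFP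
      obtain ⟨c, hc, hp⟩ := hFP
      have hd3 : D St (fun p : A × (E × ℝ) => (p.1, p.2.1) ∈ C') :=
        hC'.comp (f := fun p : A × (E × ℝ) => (p.1, p.2.1)) (by fun_prop)
      refine FC.of (hd3.and hd2) ?_
      refine ⟨fun p => (c ((p.1.1, (p.1.2.1.1, p.1.2.2.1)), p.2),
        H ((p.1.1, c ((p.1.1, (p.1.2.1.1, p.1.2.2.1)), p.2)),
          (1 - clamp p.2) * k ((p.1.1, p.1.2.1.1), p.1.2.1.2) +
            clamp p.2 * k ((p.1.1, p.1.2.2.1), p.1.2.2.2))), by fun_prop, ?_⟩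
      rintro a ⟨x, y⟩ ⟨x', y'⟩ ⟨hz1, hz2⟩ ⟨hz1', hz2'⟩
      simp only [mem_ofPred_eq, mem_preimage] at hz1 hz2 hz1' hz2'
      obtain ⟨h1, h2, h3, h4⟩ := hp a _ _ hz1 hz1'
      have hSmem : ∀ u, (1 - clamp u) * k ((a, x), y) + clamp u * k ((a, x'), y') ∈ S := by
        intro u
        have hu := clamp_mem u
        have := hconv hz2.2.1 hz2'.2.1 (show 0 ≤ 1 - clamp u by linarith [hu.2]) hu.1 (by ring)
        simpa using this
      refine ⟨?_, ?_, ?_, fun u => ?_⟩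
      · refine h1.prodMk ?_
        dsimp only
        refine hcont.comp_continuous ((continuous_const.prodMk h1).prodMk (by fun_prop)) ?_
        intro u
        exact ⟨hC'C (h4 u), hSmem u⟩
      · simp only [clamp_zero, sub_zero, one_mul, zero_mul, add_zero, h2]
        rw [hz2.2.2]
      · simp only [clamp_one, sub_self, one_mul, zero_mul, zero_add, h3]
        rw [hz2'.2.2]
      · exact ⟨h4 u, Band.mem hkh (hC'C (h4 u)) (hSmem u)⟩
    have h2 := (h A C hC).preim (Q' := FP St) (fun p : A × (E × ℝ) => (p.1, p.2.1))
      {p | ((p.1, p.2.1), p.2.2) ∈ {p : (A × E) × ℝ | p.1 ∈ C ∧ k p ∈ S ∧ H (p.1, k p) = p.2}} key2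
    refine h2.congr ?_
    ext p
    simp only [preimage_ofPred_eq, mem_inter_iff, mem_ofPred_eq, mem_univ, mem_preimage]
    tauto
  have := hb.preim (Q' := FP St) (fun p : A × (E × ℝ) => ((p.1, p.2.1), p.2.2)) univ
    fun t _ => key t
  refine this.congr ?_
  ext p; simp

theorem fp_all (Z : Set (A × E)) (hZ : D St (fun x => x ∈ Z)) : FC St (FP St) Z := by
  have : FPall St E := DSp.induct St (fun E _ _ => FPall St E)
    (fun _ _ _ _ _ _ i h => fp_transfer i h) fp_base (fun _ _ _ h => fp_step h) E
  exact this A Z hZ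

/-- Definable choice, real fibers. -/
theorem choice_real {Z : Set (E × ℝ)} (hZ : D St (fun p => p ∈ Z)) :
    ∃ f : E → ℝ, DF St f ∧ ∀ x, (∃ y, (x, y) ∈ Z) → (x, f x) ∈ Z := by
  have h := band_all hZ
  induction h with
  | empty => exact ⟨fun _ => 0, by fun_prop, fun x ⟨y, hy⟩ => hy.elim⟩
  | of ht hq =>
    obtain ⟨C, S, H, k, hC, hS, hconv, hh, hk, hcont, hkh, rfl⟩ := hq
    rcases S.eq_empty_or_nonempty with rfl | ⟨s, hs⟩
    · exact ⟨fun _ => 0, by fun_prop, fun x ⟨y, hy⟩ => hy.2.1.elim⟩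
    · exact ⟨fun x => H (x, s), by fun_prop, fun x ⟨y, hy⟩ => Band.mem hkh hy.1 hs⟩
  | @union s t h1 h2 ih1 ih2 =>
    obtain ⟨f, hf, hf'⟩ := ih1 h1.dset
    obtain ⟨g, hg, hg'⟩ := ih2 h2.dset
    classical
    have hs := h1.dset
    have hD : D St (fun x => ∃ y, (x, y) ∈ s) := D.exists hs
    refine ⟨fun x => if ∃ y, (x, y) ∈ s then f x else g x, DF.ite' hD hf hg, fun x => ?_⟩
    rintro ⟨y, hy⟩
    by_cases hx : ∃ y, (x, y) ∈ s
    · simp only [if_pos hx]; exact Or.inl (hf' x hx)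
    · simp only [if_neg hx]
      rcases hy with hy | hy
      · exact absurd ⟨y, hy⟩ hx
      · exact Or.inr (hg' x ⟨y, hy⟩)

theorem choice_all (St : OMinimalRealExpansion) (F : Type) [MetricSpace F] [DSp F] :
    ∀ (E : Type) [MetricSpace E] [DSp E] (P : E × F → Prop), D St P →
      ∃ f : E → F, DF St f ∧ ∀ x, (∃ y, P (x, y)) → P (x, f x) := by
  refine DSp.induct St (fun F _ _ => ∀ (E : Type) [MetricSpace E] [DSp E] (P : E × F → Prop),
    D St P → ∃ f : E → F, DF St f ∧ ∀ x, (∃ y, P (x, y)) → P (x, f x)) ?_ ?_ ?_ F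
  · intro F F' _ _ _ _ i h E _ _ P hP
    have hi := i.df
    obtain ⟨f, hf, hf'⟩ := h E (fun p => P (p.1, i.e p.2)) (hP.comp (by fun_prop))
    refine ⟨fun x => i.e (f x), by fun_prop, fun x ⟨y, hy⟩ => hf' x ⟨i.e.symm y, by simpa using hy⟩⟩
  · intro E _ _ P hP
    refine ⟨fun _ => 0, by fun_prop, fun x ⟨y, hy⟩ => ?_⟩
    rwa [Subsingleton.elim (0 : Fin 0 → ℝ) y]
  · intro F _ _ h E _ _ P hP
    obtain ⟨f, hf, hf'⟩ := h E (fun p => ∃ s : ℝ, P (p.1, (p.2, s)))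
      (D.exists (hP.comp (f := fun p : (E × F) × ℝ => (p.1.1, (p.1.2, p.2))) (by fun_prop)))
    obtain ⟨g, hg, hg'⟩ := choice_real (Z := {p : E × ℝ | P (p.1, (f p.1, p.2))})
      (hP.comp (f := fun p : E × ℝ => (p.1, (f p.1, p.2))) (by fun_prop))
    refine ⟨fun x => (f x, g x), by fun_prop, ?_⟩
    rintro x ⟨⟨y, s⟩, hy⟩
    exact hg' x (hf' x ⟨y, s, hy⟩)

/-- Definable choice. -/
theorem choice {P : E → F → Prop} (hP : D St (fun p : E × F => P p.1 p.2)) :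
    ∃ f : E → F, DF St f ∧ ∀ x, (∃ y, P x y) → P x (f x) :=
  choice_all St F E (fun p => P p.1 p.2) hP

/-- definable predicates do not oscillate near `0+` -/
theorem D.germ {P : ℝ → Prop} (hP : D St P) :
    (∀ᶠ x in 𝓝[>] (0 : ℝ), P x) ∨ ∀ᶠ x in 𝓝[>] (0 : ℝ), ¬ P x := by
  obtain ⟨k, f, hf, hs⟩ := hP.omin
  have h1 : ∀ i, (∀ᶠ x in 𝓝[>] (0 : ℝ), x ∈ f i) ∨ ∀ᶠ x in 𝓝[>] (0 : ℝ), x ∉ f i := by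
    intro i
    have hpos : ∀ a : ℝ, 0 < a → ∀ᶠ x in 𝓝[>] (0 : ℝ), x < a := fun a ha =>
      (eventually_lt_nhds ha).filter_mono nhdsWithin_le_nhds
    have hz : ∀ᶠ x in 𝓝[>] (0 : ℝ), 0 < x := eventually_mem_nhdsWithin
    rcases hf i with ⟨a, ha⟩ | ⟨a, b, hab⟩ | ⟨a, ha⟩ | ⟨a, ha⟩ | ha
    · right
      rw [ha]
      rcases le_or_gt a 0 with h | h
      · filter_upwards [hz] with x hx hxa
        rw [mem_singleton_iff] at hxa; linarith
      · filter_upwards [hpos a h] with x hx hxa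
        rw [mem_singleton_iff] at hxa; linarith
    · rw [hab]
      rcases le_or_gt a 0 with h | h
      · rcases le_or_gt b 0 with h' | h'
        · right; filter_upwards [hz] with x hx hxa; linarith [hxa.2]
        · left; filter_upwards [hz, hpos b h'] with x hx hxa; exact ⟨by linarith, hxa⟩
      · right; filter_upwards [hpos a h] with x hx hxa; linarith [hxa.1]
    · rw [ha]
      rcases le_or_gt a 0 with h | h
      · right; filter_upwards [hz] with x hx hxa; have : x < a := hxa; linarith
      · left; filter_upwards [hpos a h] with x hx; exact hx
    · rw [ha]
      rcases le_or_gt a 0 with h | h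
      · left; filter_upwards [hz] with x hx; exact lt_of_le_of_lt h hx
      · right; filter_upwards [hpos a h] with x hx hxa; have : a < x := hxa; linarith
    · left; rw [ha]; simp
  have hPx : ∀ x, P x ↔ ∃ i, x ∈ f i := fun x => by
    have : x ∈ {x | P x} ↔ x ∈ ⋃ i, f i := by rw [hs]
    simpa using this
  by_cases h : ∃ i, ∀ᶠ x in 𝓝[>] (0 : ℝ), x ∈ f i
  · obtain ⟨i, hi⟩ := h
    left
    filter_upwards [hi] with x hx
    exact (hPx x).2 ⟨i, hx⟩
  · right
    have h := not_exists.1 h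
    have h2 : ∀ i, ∀ᶠ x in 𝓝[>] (0 : ℝ), x ∉ f i := fun i => (h1 i).resolve_left (by
      intro h'; exact (h i) h')
    filter_upwards [eventually_all.2 h2] with x hx hPx'
    obtain ⟨i, hi⟩ := (hPx x).1 hPx'
    exact hx i hi

theorem FC.germ {Q : Set ℝ → Prop} {X : Set ℝ} (h : FC St Q X)
    (hX : ∀ᶠ x in 𝓝[>] (0 : ℝ), x ∈ X) : ∃ t, Q t ∧ ∀ᶠ x in 𝓝[>] (0 : ℝ), x ∈ t := by
  induction h with
  | empty =>
    obtain ⟨x, hx⟩ := hX.exists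
    exact hx.elim
  | of ht hq => exact ⟨_, hq, hX⟩
  | @union s t h1 h2 ih1 ih2 =>
    rcases D.germ h1.dset with h | h
    · exact ih1 h
    · refine ih2 ?_
      filter_upwards [h, hX] with x h3 h4
      exact h4.resolve_left h3

/-- definable maps on the line are continuous on some `(0, η)` -/
theorem DMet.germ {Y : Type} [MetricSpace Y] [SecondCountableTopology Y] {f : ℝ → Y}
    (hf : DMet St f) : ∃ η > 0, ContinuousOn f (Ioo 0 η) := by
  obtain ⟨t, ht, h⟩ := (piecewise_cont hf (X := univ) (D.const True)).germ (by simp)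
  obtain ⟨η, hη, hsub⟩ := mem_nhdsGT_iff_exists_Ioo_subset.1 h
  exact ⟨η, hη, ht.mono hsub⟩

/-- Uniform curve selection. -/
theorem curve_selection {T : Set (B × E)} (hT : D St (fun p => p ∈ T)) {cen : B → E}
    (hcen : DF St cen) : ∃ g : B × ℝ → E, DF St g ∧ ∀ b, (∀ ε > 0, ∃ z, (b, z) ∈ T ∧ dist z (cen b) < ε) →
      Continuous (fun u => g (b, u)) ∧ (g (b, 0) = cen b) ∧ ∀ u, 0 < u → (b, g (b, u)) ∈ T := by
  obtain ⟨f, hf, hf'⟩ := choice (St := St) (E := B × ℝ) (F := E)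
    (P := fun p z => (p.1, z) ∈ T ∧ dist z (cen p.1) < p.2) (by
      apply_rules [D.and, D.lt, hT.comp] <;> fun_prop)
  obtain ⟨η, hη, hη'⟩ := choice (St := St) (E := B) (F := ℝ)
    (P := fun b η => 0 < η ∧ ∀ x, 0 < x → x < η → ∀ ε > 0, ∃ δ > 0, ∀ y, dist y x < δ →
      dist (f (b, y)) (f (b, x)) < ε) (by
      apply_rules [D.and, D.exists, D.imp, D.forall, D.lt] <;> fun_prop)
  classical
  refine ⟨fun p => if 0 < clamp p.2 then f (p.1, clamp p.2 * (η p.1 / 2)) else cen p.1,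
    DF.ite' (D.lt (by fun_prop) (by fun_prop)) (by fun_prop) (by fun_prop), fun b hb => ?_⟩
  have hfb : ∀ s, 0 < s → (b, f (b, s)) ∈ T ∧ dist (f (b, s)) (cen b) < s := by
    intro s hs
    exact hf' (b, s) (hb s hs)
  have hηb := hη' b (by
    obtain ⟨η₀, h0, h1⟩ := DMet.germ (St := St) (f := fun s => f (b, s)) (DF.dmet (by fun_prop))
    refine ⟨η₀, h0, fun x hx1 hx2 => ?_⟩
    have := (h1 x ⟨hx1, hx2⟩).continuousAt (isOpen_Ioo.mem_nhds ⟨hx1, hx2⟩)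
    exact Metric.continuousAt_iff.1 this)
  obtain ⟨h0, h1⟩ := hηb
  have hcont : ∀ x, 0 < x → x < η b → ContinuousAt (fun s => f (b, s)) x := fun x hx1 hx2 =>
    Metric.continuousAt_iff.2 (h1 x hx1 hx2)
  refine ⟨?_, by simp, fun u hu => ?_⟩
  · have key : ContinuousOn (fun v => if 0 < v then f (b, v * (η b / 2)) else cen b) (Icc 0 1) := by
      intro v hv
      rcases hv.1.eq_or_lt with rfl | hv0
      · refine ContinuousAt.continuousWithinAt ?_ |>.mono (subset_univ (Icc (0:ℝ) 1))
        rw [Metric.continuousAt_iff]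
        intro ε hε
        refine ⟨ε / (η b / 2), by positivity, fun x hx => ?_⟩
        simp only [lt_irrefl, if_false]
        split_ifs with h
        · refine (hfb _ (by positivity)).2.trans ?_
          rw [Real.dist_eq, sub_zero, abs_of_pos h, lt_div_iff₀ (by positivity)] at hx
          exact hx
        · simpa using hε
      · have h2 : ContinuousAt (fun v => f (b, v * (η b / 2))) v := by
          refine ContinuousAt.comp (g := fun s => f (b, s)) (f := fun v => v * (η b / 2))
            (hcont _ (by positivity) ?_) (by fun_prop)
          have := hv.2
          nlinarith
        refine (h2.congr ?_).continuousWithinAt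
        filter_upwards [lt_mem_nhds hv0] with x hx
        rw [if_pos hx]
    exact key.comp_continuous continuous_clamp clamp_mem
  · have : 0 < clamp u := by
      unfold clamp
      exact lt_max_of_lt_right (lt_min hu one_pos)
    simp only [this, if_true]
    exact (hfb _ (by positivity)).1

end paths


open FirstOrder Set Filter Topology

set_option linter.unusedSectionVars false

section lemmaB

variable {A B E F G H : Type} [MetricSpace A] [DSp A] [MetricSpace B] [DSp B]
  [MetricSpace E] [DSp E] [MetricSpace F] [DSp F] [MetricSpace G] [DSp G]
  [MetricSpace H] [DSp H] {St : OMinimalRealExpansion}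

theorem reach_aux {Z : Set (A × E)} (hZ : D St (fun p => p ∈ Z)) {Y : Set (A × E)}
    (h : FC St (FP St) Y) (hYZ : Y ⊆ Z) :
    ∃ (N : Set (A × (E × E))) (c : (A × (E × E)) × ℝ → E), D St (fun p => p ∈ N) ∧ DF St c ∧
      (∀ a w z, (a, (w, z)) ∈ N → PathIn (fun u => c ((a, (w, z)), u)) {x | (a, x) ∈ Z} w z) ∧
      ∀ a w, (a, w) ∈ Z → ∃ δ > 0, ∀ z, (a, z) ∈ Y → dist z w < δ → (a, (w, z)) ∈ N := by
  induction h with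
  | empty =>
    exact ⟨∅, fun p => p.1.2.1, D.const False, by fun_prop, fun a w z h => h.elim,
      fun a w _ => ⟨1, one_pos, fun z h => h.elim⟩⟩
  | @of t ht hq =>
    obtain ⟨c, hc, hp⟩ := hq
    obtain ⟨g, hg, hg'⟩ := curve_selection (St := St) (B := A × E) (E := E)
      (T := {p | (p.1.1, p.2) ∈ t}) (cen := fun b => b.2)
      (ht.comp (f := fun p : (A × E) × E => (p.1.1, p.2)) (by fun_prop)) (by fun_prop)
    have hN : D St (fun p : A × (E × E) => (p.1, p.2.1) ∈ Z ∧ (p.1, p.2.2) ∈ t ∧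
        ∀ ε : ℝ, 0 < ε → ∃ z', (p.1, z') ∈ t ∧ dist z' p.2.1 < ε) := by
      apply_rules [D.exists, D.and, D.not, D.forall, D.imp, D.lt, D.le, D.eq, ht.comp, hZ.comp] <;> fun_prop
    refine ⟨_, fun p : (A × (E × E)) × ℝ => cat (fun u => g ((p.1.1, p.1.2.1), clamp u))
      (fun u => c ((p.1.1, (g ((p.1.1, p.1.2.1), 1), p.1.2.2)), u)) p.2, hN, ?_, ?_, ?_⟩
    · exact DF.cat (St := St) (F := A × (E × E)) (f := fun p => g ((p.1.1, p.1.2.1), clamp p.2))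
        (g := fun p => c ((p.1.1, (g ((p.1.1, p.1.2.1), 1), p.1.2.2)), p.2))
        (by fun_prop) (by fun_prop)
    · rintro a w z ⟨h1, h2, h3⟩
      obtain ⟨g1, g2, g3⟩ := hg' (a, w) h3
      have hpath : PathIn (fun u => g ((a, w), clamp u)) {x | (a, x) ∈ Z} w (g ((a, w), 1)) := by
        refine ⟨g1.comp continuous_clamp, ?_, ?_, fun u => ?_⟩
        · simp only [clamp_zero]; exact g2
        · simp only [clamp_one]
        · rcases (clamp_mem u).1.eq_or_lt with h | h
          · simp only [← h]
            show (a, g ((a, w), 0)) ∈ Z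
            rw [g2]; exact h1
          · exact hYZ (g3 _ h)
      have hp2 := hp a (g ((a, w), 1)) z (g3 1 one_pos) h2
      exact hpath.cat ⟨hp2.1, hp2.2.1, hp2.2.2.1, fun u => hYZ (hp2.2.2.2 u)⟩
    · intro a w haw
      by_cases hcl : ∀ ε : ℝ, 0 < ε → ∃ z', (a, z') ∈ t ∧ dist z' w < ε
      · exact ⟨1, one_pos, fun z hz _ => ⟨haw, hz, hcl⟩⟩
      · push Not at hcl
        obtain ⟨ε, hε, h⟩ := hcl
        exact ⟨ε, hε, fun z hz hd => absurd hd (not_lt.2 (h z hz))⟩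
  | @union s t h1 h2 ih1 ih2 =>
    obtain ⟨N, c, hN, hc, hp, hδ⟩ := ih1 (subset_union_left.trans hYZ)
    obtain ⟨N', c', hN', hc', hp', hδ'⟩ := ih2 (subset_union_right.trans hYZ)
    classical
    refine ⟨N ∪ N', fun p => if p.1 ∈ N then c p else c' p, hN.or hN',
      DF.ite' (hN.comp (f := fun p : (A × (E × E)) × ℝ => p.1) (by fun_prop)) hc hc', ?_, ?_⟩
    · intro a w z h
      by_cases hm : (a, (w, z)) ∈ N
      · simp only [hm, if_true]; exact hp a w z hm
      · simp only [hm, if_false]; exact hp' a w z (h.resolve_left hm)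
    · intro a w haw
      obtain ⟨δ, hd, h⟩ := hδ a w haw
      obtain ⟨δ', hd', h'⟩ := hδ' a w haw
      refine ⟨min δ δ', lt_min hd hd', fun z hz hzw => ?_⟩
      rcases hz with hz | hz
      · exact Or.inl (h z hz (hzw.trans_le (min_le_left _ _)))
      · exact Or.inr (h' z hz (hzw.trans_le (min_le_right _ _)))

/-- Uniform definable local contraction-type paths. -/
theorem local_paths {X : Set E} (hX : D St (fun p => p ∈ X)) :
    ∃ (M : Set (E × E)) (c : (E × E) × ℝ → E), D St (fun p => p ∈ M) ∧ DF St c ∧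
      (∀ q w, (q, w) ∈ M → PathIn (fun u => c ((q, w), u)) X q w) ∧
      (∀ q w, Continuous (fun u => c ((q, w), u))) ∧
      (∀ q u, c ((q, q), u) = q) ∧
      ∀ p ∈ X, ∀ ε > 0, ∃ δ > 0, ∀ q ∈ X, ∀ w ∈ X, dist q p < δ → dist w p < δ →
        (q, w) ∈ M ∧ ∀ u, dist (c ((q, w), u)) p < ε := by
  classical
  have hZ : D St (fun p : (E × ℝ) × E => p.2 ∈ X ∧ dist p.2 p.1.1 < p.1.2) := by
    apply_rules [D.and, D.lt, hX.comp] <;> fun_prop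
  obtain ⟨N, c, hN, hc, hp, hδ⟩ := reach_aux (A := E × ℝ) (E := E)
    (Z := {p | p.2 ∈ X ∧ dist p.2 p.1.1 < p.1.2}) hZ (fp_all _ hZ) subset_rfl
  let R : E × E → E × ℝ → Prop := fun x a => (a, (a.1, x.1)) ∈ N ∧ (a, (a.1, x.2)) ∈ N
  have hR : D St (fun p : (E × E) × (E × ℝ) => R p.1 p.2) := by
    simp only [R]
    apply_rules [D.and, hN.comp] <;> fun_prop
  have hRdist : ∀ x a, R x a → x.1 ∈ X ∧ x.2 ∈ X ∧ a.1 ∈ X ∧ dist x.1 a.1 < a.2 ∧ dist x.2 a.1 < a.2 := by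
    intro x a h
    have h1 := hp _ _ _ h.1
    have h2 := hp _ _ _ h.2
    have h3 := h1.2.2.2 1
    have h4 := h2.2.2.2 1
    have h5 := h1.2.2.2 0
    rw [h1.2.2.1] at h3
    rw [h2.2.2.1] at h4
    rw [h1.2.1] at h5
    exact ⟨h3.1, h4.1, h5.1, h3.2, h4.2⟩
  obtain ⟨a, ha, ha'⟩ := choice (St := St) (E := E × E) (F := E × ℝ)
    (P := fun x a => R x a ∧ ∀ b : E × ℝ, R x b → a.2 < 2 * b.2) (by
      apply_rules [D.exists, D.and, D.not, D.forall, D.imp, D.lt, D.le, D.eq, hN.comp] <;>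
        fun_prop)
  have hsel : ∀ q w, q ≠ w → (∃ b, R (q, w) b) →
      R (q, w) (a (q, w)) ∧ ∀ b, R (q, w) b → (a (q, w)).2 < 2 * b.2 := by
    intro q w hqw ⟨b, hb⟩
    apply ha' (q, w)
    have hpos : 0 < dist q w := dist_pos.2 hqw
    let S : Set ℝ := {r | ∃ p, R (q, w) (p, r)}
    have hlow : ∀ r ∈ S, dist q w / 2 ≤ r := by
      rintro r ⟨p, hr⟩
      obtain ⟨-, -, -, h1, h2⟩ := hRdist _ _ hr
      have := dist_triangle_right q w p
      simp only at h1 h2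
      linarith
    have hne : S.Nonempty := ⟨b.2, b.1, hb⟩
    have hinf : dist q w / 2 ≤ sInf S := le_csInf hne hlow
    obtain ⟨r, ⟨p, hr⟩, hlt⟩ := exists_lt_of_csInf_lt hne (show sInf S < 2 * sInf S by linarith)
    refine ⟨(p, r), hr, fun b hb => ?_⟩
    have : sInf S ≤ b.2 := csInf_le ⟨_, hlow⟩ ⟨b.1, hb⟩
    simp only
    linarith
  have hK : D St (fun x : E × E => x.1 ≠ x.2 ∧ ∃ b, R x b) := by
    apply_rules [D.exists, D.and, D.not, D.eq] <;> fun_prop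
  have hM : D St (fun x : E × E => x.1 ∈ X ∧ (x.1 = x.2 ∨ ∃ b, R x b)) := by
    apply_rules [D.exists, D.and, D.or, D.eq, hX.comp] <;> fun_prop
  let d : (E × E) × ℝ → E := fun p => if p.1.1 ≠ p.1.2 ∧ ∃ b, R p.1 b then
    cat (fun u => c ((a p.1, ((a p.1).1, p.1.1)), 1 - u)) (fun u => c ((a p.1, ((a p.1).1, p.1.2)), u)) p.2
    else p.1.1
  have hdd : DF St d := by
    refine DF.ite' (hK.comp (f := fun p : (E × E) × ℝ => p.1) (by fun_prop)) ?_ (by fun_prop)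
    exact DF.cat (St := St) (F := E × E) (f := fun p => c ((a p.1, ((a p.1).1, p.1.1)), 1 - p.2))
        (g := fun p => c ((a p.1, ((a p.1).1, p.1.2)), p.2)) (by fun_prop) (by fun_prop)
  have hdpos : ∀ q w, q ≠ w → (∃ b, R (q, w) b) →
      PathIn (fun u => d ((q, w), u)) {z | z ∈ X ∧ dist z (a (q, w)).1 < (a (q, w)).2} q w := by
    intro q w hqw hb
    have h := (hsel q w hqw hb).1
    have : (fun u => d ((q, w), u)) = cat (fun u => c ((a (q, w), ((a (q, w)).1, q)), 1 - u))
        (fun u => c ((a (q, w), ((a (q, w)).1, w)), u)) := by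
      funext u
      simp only [d]
      rw [if_pos ⟨hqw, hb⟩]
    rw [this]
    exact (hp _ _ _ h.1).symm.cat (hp _ _ _ h.2)
  have hdneg : ∀ q w, ¬ (q ≠ w ∧ ∃ b, R (q, w) b) → ∀ u, d ((q, w), u) = q := by
    intro q w h u
    simp only [d]
    rw [if_neg h]
  refine ⟨_, d, hM, hdd, ?_, ?_, ?_, ?_⟩
  · rintro q w ⟨h1, h2⟩
    by_cases hK : q ≠ w ∧ ∃ b, R (q, w) b
    · obtain ⟨p1, p2, p3, p4⟩ := hdpos q w hK.1 hK.2
      exact ⟨p1, p2, p3, fun u => (p4 u).1⟩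
    · have hqw : q = w := by
        rcases h2 with h2 | h2
        · exact h2
        · by_contra h; exact hK ⟨h, h2⟩
      have : (fun u => d ((q, w), u)) = fun _ => q := funext (hdneg q w hK)
      rw [this, ← hqw]
      exact PathIn.const h1
  · intro q w
    by_cases hK : q ≠ w ∧ ∃ b, R (q, w) b
    · exact (hdpos q w hK.1 hK.2).1
    · have : (fun u => d ((q, w), u)) = fun _ => q := funext (hdneg q w hK)
      rw [this]; exact continuous_const
  · intro q u
    exact hdneg q q (by simp) u
  · intro p hpX ε hε
    obtain ⟨δ, hδ0, h⟩ := hδ (p, ε / 5) p ⟨hpX, by simp; positivity⟩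
    refine ⟨min δ (ε / 5), by positivity, fun q hq w hw hqp hwp => ?_⟩
    have hqR : ((p, ε / 5), (p, q)) ∈ N := h q ⟨hq, hqp.trans_le (min_le_right _ _)⟩ (hqp.trans_le (min_le_left _ _))
    have hwR : ((p, ε / 5), (p, w)) ∈ N := h w ⟨hw, hwp.trans_le (min_le_right _ _)⟩ (hwp.trans_le (min_le_left _ _))
    have hR0 : R (q, w) (p, ε / 5) := ⟨hqR, hwR⟩
    refine ⟨⟨hq, Or.inr ⟨_, hR0⟩⟩, fun u => ?_⟩
    have hqε := hqp.trans_le (min_le_right _ _)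
    by_cases hK : q ≠ w ∧ ∃ b, R (q, w) b
    · have h1 := (hdpos q w hK.1 hK.2).2.2.2 u
      have h2 := hsel q w hK.1 hK.2
      have h3 := h2.2 _ hR0
      obtain ⟨-, -, -, h4, -⟩ := hRdist _ _ h2.1
      simp only at h3 h4
      have h5 := h1.2
      have t1 := dist_triangle (d ((q, w), u)) (a (q, w)).1 p
      have t2 := dist_triangle (a (q, w)).1 q p
      rw [dist_comm (a (q, w)).1 q] at t2
      simp only at h5
      linarith
    · rw [hdneg q w hK u]
      linarith

end lemmaB


open FirstOrder Set Filter Topology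

set_option linter.unusedSectionVars false

section homotopy

variable {E : Type} [MetricSpace E] [DSp E] {St : OMinimalRealExpansion} {X : Set E}

/-- definable homotopy rel endpoints inside `X` (paths are total, only `[0,1]` matters) -/
def DH (St : OMinimalRealExpansion) (X : Set E) (α β : ℝ → E) : Prop :=
  ∃ H : ℝ × ℝ → E, DF St H ∧ Continuous H ∧ (∀ p, H p ∈ X) ∧
    (∀ u ∈ Icc (0 : ℝ) 1, H (0, u) = α u) ∧ (∀ u ∈ Icc (0 : ℝ) 1, H (1, u) = β u) ∧
    (∀ s, H (s, 0) = α 0) ∧ ∀ s, H (s, 1) = α 1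

/-- definable paths in `X` -/
def IsP (St : OMinimalRealExpansion) (X : Set E) (α : ℝ → E) : Prop :=
  DF St α ∧ Continuous α ∧ ∀ u, α u ∈ X

theorem zero_mem01 : (0 : ℝ) ∈ Icc (0 : ℝ) 1 := by simp
theorem one_mem01 : (1 : ℝ) ∈ Icc (0 : ℝ) 1 := by simp

theorem DH.congr {α β α' β' : ℝ → E} (h : DH St X α β) (hα : EqOn α' α (Icc 0 1))
    (hβ : EqOn β' β (Icc 0 1)) : DH St X α' β' := by
  obtain ⟨H, h1, h2, h3, h4, h5, h6, h7⟩ := h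
  refine ⟨H, h1, h2, h3, fun u hu => (h4 u hu).trans (hα hu).symm,
    fun u hu => (h5 u hu).trans (hβ hu).symm, fun s => (h6 s).trans (hα zero_mem01).symm,
    fun s => (h7 s).trans (hα one_mem01).symm⟩

theorem DH.ends {α β : ℝ → E} (h : DH St X α β) : β 0 = α 0 ∧ β 1 = α 1 := by
  obtain ⟨H, h1, h2, h3, h4, h5, h6, h7⟩ := h
  exact ⟨(h5 0 zero_mem01).symm.trans (h6 1), (h5 1 one_mem01).symm.trans (h7 1)⟩

theorem DH.symm {α β : ℝ → E} (h : DH St X α β) : DH St X β α := by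
  obtain ⟨e1, e2⟩ := h.ends
  obtain ⟨H, h1, h2, h3, h4, h5, h6, h7⟩ := h
  refine ⟨fun p => H (1 - p.1, p.2), by fun_prop, by fun_prop, fun p => h3 _, ?_, ?_, ?_, ?_⟩
  · intro u hu; simp only [sub_zero]; exact h5 u hu
  · intro u hu; simp only [sub_self]; exact h4 u hu
  · intro s; rw [e1]; exact h6 _
  · intro s; rw [e2]; exact h7 _

theorem DH.trans {α β γ : ℝ → E} (h : DH St X α β) (h' : DH St X β γ) : DH St X α γ := by
  obtain ⟨e1, e2⟩ := h.ends
  obtain ⟨H, h1, h2, h3, h4, h5, h6, h7⟩ := h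
  obtain ⟨K, k1, k2, k3, k4, k5, k6, k7⟩ := h'
  refine ⟨fun p => if p.1 ≤ 1 / 2 then H (2 * p.1, clamp p.2) else K (2 * p.1 - 1, clamp p.2),
    DF.ite' (D.le (by fun_prop) (by fun_prop)) (by fun_prop) (by fun_prop), ?_, ?_, ?_, ?_, ?_, ?_⟩
  · refine Continuous.if_le (by fun_prop) (by fun_prop) (by fun_prop) (by fun_prop) ?_
    intro p hp
    simp only [hp]
    norm_num
    rw [h5 _ (clamp_mem _), k4 _ (clamp_mem _)]
  · intro p; dsimp only; split_ifs
    · exact h3 _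
    · exact k3 _
  · intro u hu; norm_num; rw [clamp_of_mem hu]; exact h4 u hu
  · intro u hu; norm_num; rw [clamp_of_mem hu]; exact k5 u hu
  · intro s; simp only [clamp_zero]; split_ifs
    · exact h6 _
    · rw [k6, e1]
  · intro s; simp only [clamp_one]; split_ifs
    · exact h7 _
    · rw [k7, e2]

theorem DH.cat {α α' β β' : ℝ → E} (h : DH St X α α') (h' : DH St X β β') (he : α 1 = β 0) :
    DH St X (cat α β) (cat α' β') := by
  obtain ⟨H, h1, h2, h3, h4, h5, h6, h7⟩ := h
  obtain ⟨K, k1, k2, k3, k4, k5, k6, k7⟩ := h'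
  refine ⟨fun p => if p.2 ≤ 1 / 2 then H (p.1, 2 * p.2) else K (p.1, 2 * p.2 - 1),
    DF.ite' (D.le (by fun_prop) (by fun_prop)) (by fun_prop) (by fun_prop), ?_, ?_, ?_, ?_, ?_, ?_⟩
  · refine Continuous.if_le (by fun_prop) (by fun_prop) (by fun_prop) (by fun_prop) ?_
    intro p hp
    simp only [hp]
    norm_num
    rw [h7, k6, he]
  · intro p; dsimp only; split_ifs
    · exact h3 _
    · exact k3 _
  · intro u hu; simp only [_root_.cat]; split_ifs with hh
    · exact h4 _ ⟨by linarith [hu.1], by linarith⟩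
    · exact k4 _ ⟨by linarith [hu.1], by linarith [hu.2]⟩
  · intro u hu; simp only [_root_.cat]; split_ifs with hh
    · exact h5 _ ⟨by linarith [hu.1], by linarith⟩
    · exact k5 _ ⟨by linarith [hu.1], by linarith [hu.2]⟩
  · intro s; rw [cat_zero]; norm_num; exact h6 s
  · intro s; rw [cat_one]; norm_num; exact k7 s

/-- straight-line homotopy in the source -/
theorem DH.conv {K : ℝ × ℝ → E} (hK : DF St K) (hc : Continuous K) (hX : ∀ p, K p ∈ X)
    {a b a' b' : ℝ → ℝ} (ha : DF St a) (hb : DF St b) (ha' : DF St a') (hb' : DF St b')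
    (ca : Continuous a) (cb : Continuous b) (ca' : Continuous a') (cb' : Continuous b')
    (e1 : a 0 = a' 0) (e2 : a 1 = a' 1) (e3 : b 0 = b' 0) (e4 : b 1 = b' 1) :
    DH St X (fun u => K (a u, b u)) (fun u => K (a' u, b' u)) := by
  refine ⟨fun p => K ((1 - p.1) * a p.2 + p.1 * a' p.2, (1 - p.1) * b p.2 + p.1 * b' p.2),
    by fun_prop, by fun_prop, fun p => hX _, ?_, ?_, ?_, ?_⟩
  · intro u _; simp
  · intro u _; simp
  · intro s
    dsimp only
    rw [← e1, ← e3]; ring_nf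
  · intro s
    dsimp only
    rw [← e2, ← e4]; ring_nf

theorem DH.conv1 {K : ℝ → E} (hK : IsP St X K)
    {a a' : ℝ → ℝ} (ha : DF St a) (ha' : DF St a')
    (ca : Continuous a) (ca' : Continuous a')
    (e1 : a 0 = a' 0) (e2 : a 1 = a' 1) :
    DH St X (fun u => K (a u)) (fun u => K (a' u)) := by
  obtain ⟨h1, h2, h3⟩ := hK
  exact DH.conv (K := fun p => K p.1) (by fun_prop) (by fun_prop) (fun p => h3 _) ha ha ha' ha
    ca ca ca' ca e1 e2 rfl rfl

theorem DH.refl {α : ℝ → E} (h : IsP St X α) : DH St X α α :=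
  DH.conv1 h (a := fun u => u) (a' := fun u => u) (by fun_prop) (by fun_prop) (by fun_prop)
    (by fun_prop) rfl rfl

theorem DF.cat1 {α β : ℝ → E} (ha : DF St α) (hb : DF St β) : DF St (_root_.cat α β) := by
  unfold _root_.cat
  exact DF.ite' (D.le (by fun_prop) (by fun_prop)) (by fun_prop) (by fun_prop)

theorem IsP.cat {α β : ℝ → E} (ha : IsP St X α) (hb : IsP St X β) (h : α 1 = β 0) :
    IsP St X (cat α β) := by
  refine ⟨ha.1.cat1 hb.1, cat_continuous ha.2.1 hb.2.1 h, fun u => ?_⟩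
  unfold _root_.cat
  split_ifs
  · exact ha.2.2 _
  · exact hb.2.2 _

theorem IsP.comp {α : ℝ → E} (h : IsP St X α) {f : ℝ → ℝ} (hf : DF St f) (hc : Continuous f) :
    IsP St X (fun u => α (f u)) := by
  obtain ⟨h1, h2, h3⟩ := h
  exact ⟨by fun_prop, by fun_prop, fun u => h3 _⟩

theorem DH.assoc {α β γ : ℝ → E} (ha : IsP St X α) (hb : IsP St X β) (hg : IsP St X γ)
    (h1 : α 1 = β 0) (h2 : β 1 = γ 0) :
    DH St X (_root_.cat (_root_.cat α β) γ) (_root_.cat α (_root_.cat β γ)) := by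
  have hP : IsP St X (_root_.cat (_root_.cat α β) γ) := (ha.cat hb h1).cat hg (by rw [cat_one, h2])
  have := DH.conv1 hP (a := fun u => u) (a' := fun u => max (max (u / 2) (u - 1 / 4)) (2 * u - 1))
    (by fun_prop) (by fun_prop) (by fun_prop) (by fun_prop) (by norm_num) (by norm_num)
  refine this.congr (fun u _ => rfl) (fun u hu => ?_)
  simp only [_root_.cat]
  rcases le_or_gt u (1 / 2) with hu1 | hu1
  · have : max (max (u / 2) (u - 1 / 4)) (2 * u - 1) = u / 2 := by
      rw [max_eq_left (a := u / 2), max_eq_left] <;> linarith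
    rw [this, if_pos hu1, if_pos (by linarith), if_pos (by linarith)]
    congr 1; ring
  · rcases le_or_gt u (3 / 4) with hu2 | hu2
    · have : max (max (u / 2) (u - 1 / 4)) (2 * u - 1) = u - 1 / 4 := by
        rw [max_eq_right (a := u / 2), max_eq_left] <;> linarith
      rw [this, if_neg (by linarith), if_pos (by linarith), if_pos (by linarith),
        if_neg (by linarith)]
      congr 1; ring
    · have : max (max (u / 2) (u - 1 / 4)) (2 * u - 1) = 2 * u - 1 := by
        rw [max_eq_right (a := u / 2), max_eq_right] <;> linarith
      rw [this, if_neg (by linarith), if_neg (by linarith), if_neg (by linarith)]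

theorem DH.cat_const {α : ℝ → E} (ha : IsP St X α) :
    DH St X (_root_.cat α (fun _ => α 1)) α := by
  have := DH.conv1 ha (a := fun u => min (2 * u) 1) (a' := fun u => u)
    (by fun_prop) (by fun_prop) (by fun_prop) (by fun_prop) (by norm_num) (by norm_num)
  refine this.congr (fun u hu => ?_) (fun u _ => rfl)
  simp only [_root_.cat]
  split_ifs with h
  · rw [min_eq_left (by linarith)]
  · rw [min_eq_right (by linarith)]

/-- transporting homotopies along families -/
theorem DH.family {K K' : ℝ × ℝ → E} (hK : DF St K) (hc : Continuous K) (hX : ∀ p, K p ∈ X)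
    (hK' : DF St K') (hc' : Continuous K') (hX' : ∀ p, K' p ∈ X)
    (e0 : ∀ s, K (s, 0) = K' (s, 0)) (e1 : ∀ s, K (s, 1) = K' (s, 1))
    (h : DH St X (fun u => K (0, u)) (fun u => K' (0, u))) :
    DH St X (fun u => K (1, u)) (fun u => K' (1, u)) := by
  have key : ∀ K : ℝ × ℝ → E, DF St K → Continuous K → (∀ p, K p ∈ X) →
      DH St X (fun u => K (1, u)) (_root_.cat (_root_.cat (fun u => K (1 - u, 0)) (fun u => K (0, u)))
        (fun u => K (u, 1))) := by
    intro K hK hc hX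
    have := DH.conv hK hc hX (a := fun _ => 1) (b := fun u => u)
      (a' := _root_.cat (_root_.cat (fun u => 1 - u) (fun _ => 0)) (fun u => u))
      (b' := _root_.cat (_root_.cat (fun u => 0) (fun u => u)) (fun _ => 1))
      (by fun_prop) (by fun_prop)
      (DF.cat1 (DF.cat1 (by fun_prop) (by fun_prop)) (by fun_prop))
      (DF.cat1 (DF.cat1 (by fun_prop) (by fun_prop)) (by fun_prop))
      (by fun_prop) (by fun_prop)
      (cat_continuous (cat_continuous (by fun_prop) (by fun_prop) (by simp)) (by fun_prop)
        (by simp [cat_one]))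
      (cat_continuous (cat_continuous (by fun_prop) (by fun_prop) (by simp)) (by fun_prop)
        (by simp [cat_one]))
      (by simp [cat_zero]) (by simp [cat_one]) (by simp [cat_zero]) (by simp [cat_one])
    refine this.congr (fun u _ => rfl) (fun u _ => ?_)
    simp only [_root_.cat]
    split_ifs <;> rfl
  refine (key K hK hc hX).trans (DH.trans ?_ (key K' hK' hc' hX').symm)
  have f1 : (fun u => K' (1 - u, 0)) = fun u => K (1 - u, 0) := funext fun u => (e0 _).symm
  have f2 : (fun u => K' (u, 1)) = fun u => K (u, 1) := funext fun u => (e1 _).symm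
  rw [f1, f2]
  refine DH.cat (DH.cat (DH.refl ?_) h ?_) (DH.refl ?_) ?_
  · exact ⟨by fun_prop, by fun_prop, fun _ => hX _⟩
  · simp
  · exact ⟨by fun_prop, by fun_prop, fun _ => hX _⟩
  · simp [cat_one]

/-- subpaths -/
noncomputable def sub (γ : ℝ → E) (a b : ℝ) : ℝ → E := fun u => γ (a + u * (b - a))

theorem IsP.sub {γ : ℝ → E} (h : IsP St X γ) (a b : ℝ) : IsP St X (sub γ a b) :=
  h.comp (f := fun u => a + u * (b - a)) (by fun_prop) (by fun_prop)

theorem DH.sub_cat {γ : ℝ → E} (h : IsP St X γ) (a b c : ℝ) :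
    DH St X (_root_.cat (_root_.sub γ a b) (_root_.sub γ b c)) (_root_.sub γ a c) := by
  have := DH.conv1 h (a := _root_.cat (fun u => a + u * (b - a)) (fun u => b + u * (c - b)))
    (a' := fun u => a + u * (c - a)) (DF.cat1 (by fun_prop) (by fun_prop)) (by fun_prop)
    (cat_continuous (by fun_prop) (by fun_prop) (by simp)) (by fun_prop) (by simp [cat_zero])
    (by simp [cat_one])
  refine this.congr (fun u hu => ?_) (fun u _ => rfl)
  simp only [_root_.cat, _root_.sub]
  split_ifs <;> rfl

end homotopy


open FirstOrder Set Filter Topology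

set_option linter.unusedSectionVars false

section germs

variable {T E : Type} [MetricSpace T] [DSp T] [MetricSpace E] [DSp E]
  {St : OMinimalRealExpansion} {X : Set E}

theorem DH.of_families {Ω : Set T} {α κ : T × ℝ → E} (hα : DF St α) (hκ : DF St κ)
    (hΩα : ∀ τ ∈ Ω, Continuous (fun u => α (τ, u)) ∧ ∀ u, α (τ, u) ∈ X)
    (hΩκ : ∀ τ ∈ Ω, Continuous (fun u => κ (τ, u)) ∧ ∀ u, κ (τ, u) ∈ X)
    (he : ∀ τ ∈ Ω, α (τ, 0) = κ (τ, 0) ∧ α (τ, 1) = κ (τ, 1))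
    (Φ : T → C(unitInterval, E × E))
    (hΦ : ∀ τ ∈ Ω, ∀ u : unitInterval, Φ τ u = (α (τ, u), κ (τ, u)))
    (hΦD : DMet St Φ) (p : T) (x0 : E) (hx0 : x0 ∈ X)
    (hlim : ∀ ε > 0, ∃ δ > 0, ∀ τ ∈ Ω, dist τ p < δ → ∀ u ∈ Icc (0 : ℝ) 1,
      dist (α (τ, u)) x0 < ε ∧ dist (κ (τ, u)) x0 < ε)
    {t : Set T} (ht : D St (fun x => x ∈ t)) (htΩ : t ⊆ Ω) (hc : ContinuousOn Φ t)
    {c : (T × T) × ℝ → T} (hcD : DF St c)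
    (hcP : ∀ z ∈ t, ∀ z' ∈ t, PathIn (fun u => c ((z, z'), u)) t z z')
    (hcl : ∀ ε > 0, ∃ z ∈ t, dist z p < ε) :
    ∀ τ ∈ t, DH St X (fun u => α (τ, u)) (fun u => κ (τ, u)) := by
  classical
  obtain ⟨g, hg, hg'⟩ := curve_selection (St := St) (B := Fin 0 → ℝ) (E := T)
    (T := {q | q.2 ∈ t}) (cen := fun _ => p)
    (ht.comp (f := fun q : (Fin 0 → ℝ) × T => q.2) (by fun_prop)) (by fun_prop)
  obtain ⟨g1, g2, g3⟩ := hg' 0 hcl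
  have g3 : ∀ u, 0 < u → g (0, u) ∈ t := g3
  have hcu : Continuous (fun q : ℝ × ℝ => (⟨clamp q.2, clamp_mem q.2⟩ : unitInterval)) :=
    Continuous.subtype_mk (by fun_prop) _
  have hpos : ∀ s, ¬ 0 < clamp s → clamp s = 0 := fun s h => le_antisymm (not_lt.1 h) (clamp_mem s).1
  -- step 1
  have step1 : DH St X (fun u => α (g (0, 1), u)) (fun u => κ (g (0, 1), u)) := by
    have hcont : Continuous (fun q : ℝ × ℝ => if 0 < clamp q.1 then
        (α (g (0, clamp q.1), clamp q.2), κ (g (0, clamp q.1), clamp q.2)) else (x0, x0)) := by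
      rw [continuous_iff_continuousAt]
      rintro ⟨s, u⟩
      by_cases hs : 0 < clamp s
      · have hev : ∀ᶠ q : ℝ × ℝ in 𝓝 (s, u), 0 < clamp q.1 :=
          (continuous_clamp.comp continuous_fst).continuousAt.eventually (lt_mem_nhds hs)
        have h1 : ContinuousAt (fun q : ℝ × ℝ => Φ (g (0, clamp q.1))) (s, u) := by
          refine Tendsto.comp (hc _ (g3 _ hs)) ?_
          refine tendsto_nhdsWithin_iff.2 ⟨?_, ?_⟩
          · exact (g1.comp (continuous_clamp.comp continuous_fst)).continuousAt
          · filter_upwards [hev] with q hq using g3 _ hq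
        have h2 : ContinuousAt (fun q : ℝ × ℝ => (Φ (g (0, clamp q.1)))
            (⟨clamp q.2, clamp_mem q.2⟩ : unitInterval)) (s, u) :=
          ContinuousAt.comp (x := (s, u)) (f := fun q : ℝ × ℝ => (Φ (g (0, clamp q.1)),
              (⟨clamp q.2, clamp_mem q.2⟩ : unitInterval)))
            (g := fun q : C(unitInterval, E × E) × unitInterval => q.1 q.2)
            (ContinuousEval.continuous_eval (F := C(unitInterval, E × E))).continuousAt
            (h1.prodMk hcu.continuousAt)
        refine h2.congr ?_
        filter_upwards [hev] with q hq
        rw [if_pos hq, hΦ _ (htΩ (g3 _ hq))]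
      · rw [Metric.continuousAt_iff]
        intro ε hε
        obtain ⟨δ, hδ, h⟩ := hlim ε hε
        have h1 : ContinuousAt (fun q : ℝ × ℝ => g (0, clamp q.1)) (s, u) :=
          (g1.comp (continuous_clamp.comp continuous_fst)).continuousAt
        obtain ⟨η, hη, h2⟩ := Metric.continuousAt_iff.1 h1 δ hδ
        refine ⟨η, hη, fun q hq => ?_⟩
        have h3 := h2 hq
        simp only [hpos s hs] at h3
        rw [g2] at h3
        rw [if_neg hs]
        split_ifs with hq0
        · have := h _ (htΩ (g3 _ hq0)) h3 (clamp q.2) (clamp_mem _)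
          exact max_lt this.1 this.2
        · simpa using hε
    have e1 : DF St (fun q : ℝ × ℝ => if 0 < clamp q.1 then α (g (0, clamp q.1), clamp q.2) else x0) :=
      DF.ite' (D.lt (by fun_prop) (by fun_prop)) (by fun_prop) (by fun_prop)
    have e2 : DF St (fun q : ℝ × ℝ => if 0 < clamp q.1 then κ (g (0, clamp q.1), clamp q.2) else x0) :=
      DF.ite' (D.lt (by fun_prop) (by fun_prop)) (by fun_prop) (by fun_prop)
    have := DH.family (St := St) (X := X) e1 ?_ ?_ e2 ?_ ?_ ?_ ?_ ?_
    · refine this.congr (fun u hu => ?_) (fun u hu => ?_)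
      · simp [clamp_of_mem hu]
      · simp [clamp_of_mem hu]
    · refine (continuous_fst.comp hcont).congr fun q => ?_
      simp only [Function.comp_apply]
      split_ifs <;> rfl
    · intro q; split_ifs with h
      · exact (hΩα _ (htΩ (g3 _ h))).2 _
      · exact hx0
    · refine (continuous_snd.comp hcont).congr fun q => ?_
      simp only [Function.comp_apply]
      split_ifs <;> rfl
    · intro q; split_ifs with h
      · exact (hΩκ _ (htΩ (g3 _ h))).2 _
      · exact hx0
    · intro s; simp only [clamp_zero]; split_ifs with h
      · exact (he _ (htΩ (g3 _ h))).1
      · rfl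
    · intro s; simp only [clamp_one]; split_ifs with h
      · exact (he _ (htΩ (g3 _ h))).2
      · rfl
    · simp only [clamp_zero, lt_irrefl, if_false]
      exact DH.refl ⟨by fun_prop, by fun_prop, fun _ => hx0⟩
  -- step 2
  intro τ hτ
  obtain ⟨p1, p2, p3, p4⟩ := hcP (g (0, 1)) (g3 1 one_pos) τ hτ
  have hcont : Continuous (fun q : ℝ × ℝ =>
      (α (c ((g (0, 1), τ), q.1), clamp q.2), κ (c ((g (0, 1), τ), q.1), clamp q.2))) := by
    have h1 : Continuous (fun q : ℝ × ℝ => Φ (c ((g (0, 1), τ), q.1))) :=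
      hc.comp_continuous (p1.comp continuous_fst) fun q => p4 _
    have h2 : Continuous (fun q : ℝ × ℝ => (Φ (c ((g (0, 1), τ), q.1)))
        (⟨clamp q.2, clamp_mem q.2⟩ : unitInterval)) :=
      (ContinuousEval.continuous_eval (F := C(unitInterval, E × E))).comp (h1.prodMk hcu)
    refine h2.congr fun q => ?_
    rw [hΦ _ (htΩ (p4 _))]
  have := DH.family (St := St) (X := X) (K := fun q : ℝ × ℝ => α (c ((g (0, 1), τ), q.1), clamp q.2))
    (K' := fun q : ℝ × ℝ => κ (c ((g (0, 1), τ), q.1), clamp q.2)) (by fun_prop)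
    (continuous_fst.comp hcont) (fun q => (hΩα _ (htΩ (p4 _))).2 _) (by fun_prop)
    (continuous_snd.comp hcont) (fun q => (hΩκ _ (htΩ (p4 _))).2 _)
    (fun s => by simp only [clamp_zero]; exact (he _ (htΩ (p4 _))).1)
    (fun s => by simp only [clamp_one]; exact (he _ (htΩ (p4 _))).2) ?_
  · refine this.congr (fun u hu => ?_) (fun u hu => ?_)
    · simp only [clamp_of_mem hu, p3]
    · simp only [clamp_of_mem hu, p3]
  · refine step1.congr (fun u hu => ?_) (fun u hu => ?_)
    · simp only [clamp_of_mem hu, p2]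
    · simp only [clamp_of_mem hu, p2]

theorem DH.local_families {Ω : Set T} (hΩ : D St (fun x => x ∈ Ω)) {α κ : T × ℝ → E}
    (hα : DF St α) (hκ : DF St κ)
    (hΩα : ∀ τ ∈ Ω, Continuous (fun u => α (τ, u)) ∧ ∀ u, α (τ, u) ∈ X)
    (hΩκ : ∀ τ ∈ Ω, Continuous (fun u => κ (τ, u)) ∧ ∀ u, κ (τ, u) ∈ X)
    (he : ∀ τ ∈ Ω, α (τ, 0) = κ (τ, 0) ∧ α (τ, 1) = κ (τ, 1))
    (p : T) (x0 : E) (hx0 : x0 ∈ X)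
    (hlim : ∀ ε > 0, ∃ δ > 0, ∀ τ ∈ Ω, dist τ p < δ → ∀ u ∈ Icc (0 : ℝ) 1,
      dist (α (τ, u)) x0 < ε ∧ dist (κ (τ, u)) x0 < ε) :
    ∃ δ > 0, ∀ τ ∈ Ω, dist τ p < δ → DH St X (fun u => α (τ, u)) (fun u => κ (τ, u)) := by
  classical
  let Φ : T → C(unitInterval, E × E) := fun τ =>
    if h : τ ∈ Ω then ⟨fun u => (α (τ, u), κ (τ, u)),
      ((hΩα τ h).1.prodMk (hΩκ τ h).1).comp continuous_subtype_val⟩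
    else ContinuousMap.const _ (x0, x0)
  let φ : T × ℝ → E × E := fun q => if q.1 ∈ Ω then (α (q.1, q.2), κ (q.1, q.2)) else (x0, x0)
  have hφ : DF St φ :=
    DF.ite' (hΩ.comp (f := fun q : T × ℝ => q.1) (by fun_prop)) (by fun_prop) (by fun_prop)
  have hΦφ : ∀ τ (u : unitInterval), Φ τ u = φ (τ, u) := by
    intro τ u
    simp only [Φ, φ]
    split_ifs <;> rfl
  have hΦD : DMet St Φ := by
    have : D St (fun q : (T × T) × ℝ => 0 < q.2 ∧ ∀ u : ℝ, 0 ≤ u → u ≤ 1 →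
        dist (φ (q.1.1, u)) (φ (q.1.2, u)) < q.2) := by
      apply_rules [D.and, D.forall, D.imp, D.lt, D.le] <;> fun_prop
    refine D.congr this fun q => ?_
    constructor
    · intro h
      have h0 := dist_nonneg.trans_lt h
      refine ⟨h0, fun u hu hu' => ?_⟩
      have := (ContinuousMap.dist_lt_iff h0).1 h ⟨u, hu, hu'⟩
      rwa [hΦφ, hΦφ] at this
    · rintro ⟨h0, h⟩
      refine (ContinuousMap.dist_lt_iff h0).2 fun u => ?_
      rw [hΦφ, hΦφ]
      exact h u u.2.1 u.2.2
  have hfc : FC St (fun t => ContinuousOn Φ t ∧ ∃ c : (T × T) × ℝ → T, DF St c ∧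
      ∀ z ∈ t, ∀ z' ∈ t, PathIn (fun u => c ((z, z'), u)) t z z') Ω := by
    refine (piecewise_cont hΦD hΩ).bind fun t _ ht hc => ?_
    have h1 := fp_all (St := St) (A := Fin 0 → ℝ) (E := T) {q | q.2 ∈ t}
      (ht.comp (f := fun q : (Fin 0 → ℝ) × T => q.2) (by fun_prop))
    have := h1.preim (Q' := fun t => ContinuousOn Φ t ∧ ∃ c : (T × T) × ℝ → T, DF St c ∧
      ∀ z ∈ t, ∀ z' ∈ t, PathIn (fun u => c ((z, z'), u)) t z z') (fun z : T => ((0 : Fin 0 → ℝ), z))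
      univ fun s hs hsD hfp => ?_
    · refine this.congr ?_
      ext z; simp
    · obtain ⟨c, hc1, hc2⟩ := hfp
      refine FC.of ((hsD.comp (f := fun z : T => ((0 : Fin 0 → ℝ), z)) (by fun_prop)).and
        (D.const True)) ⟨hc.mono fun z hz => hs hz.1, fun q => c ((0, q.1), q.2), by fun_prop, ?_⟩
      intro z hz z' hz'
      obtain ⟨q1, q2, q3, q4⟩ := hc2 0 z z' hz.1 hz'.1
      exact ⟨q1, q2, q3, fun u => ⟨q4 u, trivial⟩⟩
  have key : ∀ Y, FC St (fun t => ContinuousOn Φ t ∧ ∃ c : (T × T) × ℝ → T, DF St c ∧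
      ∀ z ∈ t, ∀ z' ∈ t, PathIn (fun u => c ((z, z'), u)) t z z') Y → Y ⊆ Ω →
      ∃ δ > 0, ∀ τ ∈ Y, dist τ p < δ → DH St X (fun u => α (τ, u)) (fun u => κ (τ, u)) := by
    intro Y hY
    induction hY with
    | empty => exact fun _ => ⟨1, one_pos, fun τ h => h.elim⟩
    | @of t ht hq =>
      intro htΩ
      obtain ⟨hc, c, hcD, hcP⟩ := hq
      by_cases hcl : ∀ ε > 0, ∃ z ∈ t, dist z p < ε
      · refine ⟨1, one_pos, fun τ hτ _ => ?_⟩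
        exact DH.of_families hα hκ hΩα hΩκ he Φ (fun τ hτ u => by
          rw [hΦφ]; simp only [φ]; rw [if_pos hτ]) hΦD p x0 hx0 hlim ht htΩ hc hcD hcP hcl τ hτ
      · push Not at hcl
        obtain ⟨ε, hε, h⟩ := hcl
        exact ⟨ε, hε, fun z hz hd => absurd hd (not_lt.2 (h z hz))⟩
    | @union s t h1 h2 ih1 ih2 =>
      intro htΩ
      obtain ⟨δ, hd, h⟩ := ih1 (subset_union_left.trans htΩ)
      obtain ⟨δ', hd', h'⟩ := ih2 (subset_union_right.trans htΩ)
      refine ⟨min δ δ', lt_min hd hd', fun z hz hzw => ?_⟩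
      rcases hz with hz | hz
      · exact h z hz (hzw.trans_le (min_le_left _ _))
      · exact h' z hz (hzw.trans_le (min_le_right _ _))
  exact key Ω hfc subset_rfl

/-- A system of local paths. -/
structure LP (St : OMinimalRealExpansion) (X : Set E) (M : Set (E × E)) (c : (E × E) × ℝ → E) :
    Prop where
  dM : D St (fun p => p ∈ M)
  dc : DF St c
  path : ∀ q w, (q, w) ∈ M → PathIn (fun u => c ((q, w), u)) X q w
  diag : ∀ q u, c ((q, q), u) = q
  small : ∀ p ∈ X, ∀ ε > 0, ∃ δ > 0, ∀ q ∈ X, ∀ w ∈ X, dist q p < δ → dist w p < δ →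
        (q, w) ∈ M ∧ ∀ u, dist (c ((q, w), u)) p < ε

theorem LP.isP {M : Set (E × E)} {c : (E × E) × ℝ → E} (h : LP St X M c) {q w : E}
    (hm : (q, w) ∈ M) : IsP St X (fun u => c ((q, w), u)) := by
  have := h.dc
  have h2 := h.path q w hm
  exact ⟨by fun_prop, h2.1, h2.2.2.2⟩

theorem LP.mem {M : Set (E × E)} {c : (E × E) × ℝ → E} (h : LP St X M c) {q w : E}
    (hm : (q, w) ∈ M) : q ∈ X ∧ w ∈ X := by
  have h2 := h.path q w hm
  constructor
  · have := h2.2.2.2 0; rwa [h2.2.1] at this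
  · have := h2.2.2.2 1; rwa [h2.2.2.1] at this

theorem LP.cocycle {M : Set (E × E)} {c : (E × E) × ℝ → E} (h : LP St X M c) {p : E} (hp : p ∈ X) :
    ∃ δ > 0, ∀ q ∈ X, ∀ w ∈ X, ∀ z ∈ X, dist q p < δ → dist w p < δ → dist z p < δ →
      (q, w) ∈ M ∧ (w, z) ∈ M ∧ (q, z) ∈ M ∧
      DH St X (cat (fun u => c ((q, w), u)) (fun u => c ((w, z), u))) (fun u => c ((q, z), u)) := by
  have hM := h.dM
  have hc := h.dc
  have hΩ : D St (fun x : E × (E × E) => (x.1, x.2.1) ∈ M ∧ (x.2.1, x.2.2) ∈ M ∧ (x.1, x.2.2) ∈ M) := by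
    apply_rules [D.and, hM.comp] <;> fun_prop
  obtain ⟨δ, hδ, hδ'⟩ := DH.local_families (St := St) (X := X) (T := E × (E × E))
    (Ω := {x : E × (E × E) | (x.1, x.2.1) ∈ M ∧ (x.2.1, x.2.2) ∈ M ∧ (x.1, x.2.2) ∈ M}) hΩ
    (α := fun q => cat (fun u => c ((q.1.1, q.1.2.1), u)) (fun u => c ((q.1.2.1, q.1.2.2), u)) q.2)
    (κ := fun q => c ((q.1.1, q.1.2.2), q.2))
    (DF.cat (F := E × (E × E)) (f := fun q => c ((q.1.1, q.1.2.1), q.2))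
      (g := fun q => c ((q.1.2.1, q.1.2.2), q.2)) (by fun_prop) (by fun_prop)) (by fun_prop)
    (by
      rintro ⟨q, w, z⟩ ⟨h1, h2, h3⟩
      have := (h.path _ _ h1).cat (h.path _ _ h2)
      exact ⟨this.1, this.2.2.2⟩)
    (by
      rintro ⟨q, w, z⟩ ⟨h1, h2, h3⟩
      have := h.path _ _ h3
      exact ⟨this.1, this.2.2.2⟩)
    (by
      rintro ⟨q, w, z⟩ ⟨h1, h2, h3⟩
      have t1 := (h.path _ _ h1).cat (h.path _ _ h2)
      have t2 := h.path _ _ h3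
      exact ⟨t1.2.1.trans t2.2.1.symm, t1.2.2.1.trans t2.2.2.1.symm⟩)
    (p, (p, p)) p hp (by
      intro ε hε
      obtain ⟨δ, hδ, h'⟩ := h.small p hp ε hε
      refine ⟨δ, hδ, ?_⟩
      rintro ⟨q, w, z⟩ ⟨h1, h2, h3⟩ hd u _
      have d1 : dist q p < δ := (le_max_left _ _).trans_lt hd
      have d2 : dist w p < δ := ((le_max_left _ _).trans (le_max_right _ _)).trans_lt hd
      have d3 : dist z p < δ := ((le_max_right _ _).trans (le_max_right _ _)).trans_lt hd
      have hq := (h.mem h1).1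
      have hw := (h.mem h2).1
      have hz := (h.mem h2).2
      refine ⟨?_, (h' q hq z hz d1 d3).2 u⟩
      simp only [cat]
      split_ifs
      · exact (h' q hq w hw d1 d2).2 _
      · exact (h' w hw z hz d2 d3).2 _)
  obtain ⟨δ', hδ0, h'⟩ := h.small p hp 1 one_pos
  refine ⟨min δ δ', lt_min hδ hδ0, fun q hq w hw z hz d1 d2 d3 => ?_⟩
  have m1 := (h' q hq w hw (d1.trans_le (min_le_right _ _)) (d2.trans_le (min_le_right _ _))).1
  have m2 := (h' w hw z hz (d2.trans_le (min_le_right _ _)) (d3.trans_le (min_le_right _ _))).1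
  have m3 := (h' q hq z hz (d1.trans_le (min_le_right _ _)) (d3.trans_le (min_le_right _ _))).1
  refine ⟨m1, m2, m3, ?_⟩
  exact hδ' (q, (w, z)) ⟨m1, m2, m3⟩ (max_lt (d1.trans_le (min_le_left _ _))
    (max_lt (d2.trans_le (min_le_left _ _)) (d3.trans_le (min_le_left _ _))))

theorem LP.along {M : Set (E × E)} {c : (E × E) × ℝ → E} (h : LP St X M c) {γ : ℝ → E}
    (hγ : IsP St X γ) (t : ℝ) :
    ∃ δ > 0, ∀ a b, dist a t < δ → dist b t < δ →
      (γ a, γ b) ∈ M ∧ DH St X (sub γ a b) (fun u => c ((γ a, γ b), u)) := by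
  have hM := h.dM
  have hc := h.dc
  obtain ⟨γ1, γ2, γ3⟩ := hγ
  have hΩ : D St (fun x : ℝ × ℝ => (γ x.1, γ x.2) ∈ M) := hM.comp (by fun_prop)
  obtain ⟨δ, hδ, hδ'⟩ := DH.local_families (St := St) (X := X) (T := ℝ × ℝ)
    (Ω := {x : ℝ × ℝ | (γ x.1, γ x.2) ∈ M}) hΩ
    (α := fun q => γ (q.1.1 + q.2 * (q.1.2 - q.1.1)))
    (κ := fun q => c ((γ q.1.1, γ q.1.2), q.2)) (by fun_prop) (by fun_prop)
    (fun τ _ => ⟨by fun_prop, fun _ => γ3 _⟩)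
    (by
      rintro ⟨a, b⟩ h1
      have := h.path _ _ h1
      exact ⟨this.1, this.2.2.2⟩)
    (by
      rintro ⟨a, b⟩ h1
      have := h.path _ _ h1
      have e0 := this.2.1
      have e1 := this.2.2.1
      simp only at e0 e1
      simp only [e0, e1, zero_mul, add_zero, one_mul, add_sub_cancel, and_self])
    (t, t) (γ t) (γ3 t) (by
      intro ε hε
      obtain ⟨δ, hδ, h'⟩ := h.small (γ t) (γ3 t) ε hε
      obtain ⟨η, hη, hη'⟩ := Metric.continuousAt_iff.1 (γ2.continuousAt (x := t)) (min δ ε) (by positivity)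
      refine ⟨η, hη, ?_⟩
      rintro ⟨a, b⟩ h1 hd u hu
      have d1 : dist a t < η := (le_max_left _ _).trans_lt hd
      have d2 : dist b t < η := (le_max_right _ _).trans_lt hd
      refine ⟨(hη' ?_).trans_le (min_le_right _ _), (h' _ (γ3 a) _ (γ3 b)
        ((hη' d1).trans_le (min_le_left _ _)) ((hη' d2).trans_le (min_le_left _ _))).2 u⟩
      rw [Real.dist_eq] at d1 d2 ⊢
      have : a + u * (b - a) - t = (1 - u) * (a - t) + u * (b - t) := by ring
      simp only
      rw [this, abs_lt]
      rw [abs_lt] at d1 d2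
      obtain ⟨u0, u1⟩ := hu
      constructor <;> rcases u0.eq_or_lt with rfl | u0 <;> nlinarith)
  obtain ⟨δ', hδ0, h'⟩ := h.small (γ t) (γ3 t) 1 one_pos
  obtain ⟨η, hη, hη'⟩ := Metric.continuousAt_iff.1 (γ2.continuousAt (x := t)) δ' hδ0
  refine ⟨min δ η, lt_min hδ hη, fun a b da db => ?_⟩
  have m := (h' _ (γ3 a) _ (γ3 b) (hη' (da.trans_le (min_le_right _ _)))
    (hη' (db.trans_le (min_le_right _ _)))).1
  exact ⟨m, hδ' (a, b) m (max_lt (da.trans_le (min_le_left _ _)) (db.trans_le (min_le_left _ _)))⟩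

end germs


open FirstOrder Set Filter Topology

set_option linter.unusedSectionVars false

section grid

variable {E : Type} [MetricSpace E] [DSp E]
  {St : OMinimalRealExpansion} {X : Set E} {M : Set (E × E)} {c : (E × E) × ℝ → E}

/-- concatenated chain of local paths -/
noncomputable def Row (c : (E × E) × ℝ → E) (a : ℕ → E) : ℕ → ℝ → E
  | 0 => fun _ => a 0
  | j + 1 => cat (Row c a j) (fun u => c ((a j, a (j + 1)), u))

theorem Row_isP (h : LP St X M c) (a : ℕ → E) (h0 : a 0 ∈ X) (k : ℕ)
    (hk : ∀ j < k, (a j, a (j + 1)) ∈ M) :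
    IsP St X (Row c a k) ∧ Row c a k 0 = a 0 ∧ Row c a k 1 = a k := by
  induction k with
  | zero => exact ⟨⟨DF.const' _, continuous_const, fun _ => h0⟩, rfl, rfl⟩
  | succ k ih =>
    obtain ⟨h1, h2, h3⟩ := ih fun j hj => hk j (hj.trans (Nat.lt_succ_self k))
    have hm := hk k (Nat.lt_succ_self k)
    have hp := h.path _ _ hm
    refine ⟨h1.cat (h.isP hm) (h3.trans hp.2.1.symm), ?_, ?_⟩
    · rw [Row, cat_zero, h2]
    · rw [Row, cat_one]; exact hp.2.2.1

/-- cocycle condition -/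
def Coc (St : OMinimalRealExpansion) (X : Set E) (M : Set (E × E)) (c : (E × E) × ℝ → E)
    (q w z : E) : Prop :=
  (q, w) ∈ M ∧ (w, z) ∈ M ∧ (q, z) ∈ M ∧
      DH St X (cat (fun u => c ((q, w), u)) (fun u => c ((w, z), u))) (fun u => c ((q, z), u))

theorem Row_step (h : LP St X M c) (a b : ℕ → E) (h0 : a 0 ∈ X) (hab : a 0 = b 0) (k : ℕ)
    (h1 : ∀ j < k, Coc St X M c (a j) (a (j + 1)) (b (j + 1)))
    (h2 : ∀ j < k, Coc St X M c (a j) (b j) (b (j + 1))) :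
    DH St X (cat (Row c a k) (fun u => c ((a k, b k), u))) (Row c b k) := by
  induction k with
  | zero =>
    refine (DH.refl (St := St) (X := X) (α := fun _ => a 0)
      ⟨DF.const' _, continuous_const, fun _ => h0⟩).congr (fun u _ => ?_) (fun u _ => ?_)
    · simp only [cat, Row, ← hab, h.diag]
      split_ifs <;> rfl
    · simp only [Row, hab]
  | succ k ih =>
    have ih := ih (fun j hj => h1 j (hj.trans (Nat.lt_succ_self k)))
      (fun j hj => h2 j (hj.trans (Nat.lt_succ_self k)))
    obtain ⟨m1, m2, m3, c1⟩ := h1 k (Nat.lt_succ_self k)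
    obtain ⟨n1, n2, n3, c2⟩ := h2 k (Nat.lt_succ_self k)
    obtain ⟨r1, r2, r3⟩ := Row_isP h a h0 k
      fun j hj => (h1 j (hj.trans (Nat.lt_succ_self k))).1
    have pm1 := h.path _ _ m1
    have pm2 := h.path _ _ m2
    have pn1 := h.path _ _ n1
    have pn2 := h.path _ _ n2
    have e1 : Row c a k 1 = c ((a k, a (k + 1)), 0) := r3.trans pm1.2.1.symm
    have e2 : c ((a k, a (k + 1)), 1) = c ((a (k + 1), b (k + 1)), 0) := pm1.2.2.1.trans pm2.2.1.symm
    have e3 : Row c a k 1 = c ((a k, b k), 0) := r3.trans pn1.2.1.symm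
    have e4 : c ((a k, b k), 1) = c ((b k, b (k + 1)), 0) := pn1.2.2.1.trans pn2.2.1.symm
    have s1 := DH.assoc r1 (h.isP m1) (h.isP m2) e1 e2
    have s2 : DH St X (cat (Row c a k) (cat (fun u => c ((a k, a (k + 1)), u))
        (fun u => c ((a (k + 1), b (k + 1)), u)))) (cat (Row c a k) (fun u => c ((a k, b (k + 1)), u))) :=
      DH.cat (DH.refl r1) c1 (by rw [cat_zero]; exact e1)
    have s3 : DH St X (cat (Row c a k) (cat (fun u => c ((a k, b k), u))
        (fun u => c ((b k, b (k + 1)), u)))) (cat (Row c a k) (fun u => c ((a k, b (k + 1)), u))) :=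
      DH.cat (DH.refl r1) c2 (by rw [cat_zero]; exact e3)
    have s4 := DH.assoc r1 (h.isP n1) (h.isP n2) e3 e4
    have s5 : DH St X (cat (cat (Row c a k) (fun u => c ((a k, b k), u)))
        (fun u => c ((b k, b (k + 1)), u))) (cat (Row c b k) (fun u => c ((b k, b (k + 1)), u))) :=
      DH.cat ih (DH.refl (h.isP n2)) (by rw [cat_one]; exact e4)
    exact s1.trans (s2.trans (s3.symm.trans (s4.symm.trans s5)))

theorem Row_path (h : LP St X M c) {γ : ℝ → E} (hγ : IsP St X γ) (t : ℕ → ℝ) (t0 : t 0 = 0) (k : ℕ)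
    (hk : ∀ j < k, (γ (t j), γ (t (j + 1))) ∈ M ∧
      DH St X (sub γ (t j) (t (j + 1))) (fun u => c ((γ (t j), γ (t (j + 1))), u))) :
    DH St X (sub γ 0 (t k)) (Row c (fun j => γ (t j)) k) := by
  induction k with
  | zero =>
    refine (DH.refl (hγ.sub 0 (t 0))).congr (fun u _ => rfl) (fun u _ => ?_)
    simp [Row, sub, t0]
  | succ k ih =>
    have ih := ih fun j hj => hk j (hj.trans (Nat.lt_succ_self k))
    refine (DH.sub_cat hγ 0 (t k) (t (k + 1))).symm.trans ?_
    refine DH.cat ih (hk k (Nat.lt_succ_self k)).2 ?_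
    simp [sub]

theorem grid_main (hX : D St (fun p => p ∈ X)) {σ₀ σ₁ : ℝ → E} (h₀ : IsP St X σ₀)
    (h₁ : IsP St X σ₁) (H : ℝ × ℝ → E) (hc : Continuous H) (hHX : ∀ p, H p ∈ X)
    (e0 : ∀ u, H (0, u) = σ₀ u) (e1 : ∀ u, H (1, u) = σ₁ u) (x y : E)
    (ex : ∀ s, H (s, 0) = x) (ey : ∀ s, H (s, 1) = y) : DH St X σ₀ σ₁ := by
  obtain ⟨M, c, b1, b2, b3, -, b5, b6⟩ := local_paths hX
  have h : LP St X M c := ⟨b1, b2, b3, b5, b6⟩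
  -- uniform cocycle
  have hcoc : ∃ δ > 0, ∀ P ∈ Icc (0 : ℝ × ℝ) 1, ∀ Q R S : ℝ × ℝ, dist Q P < δ → dist R P < δ →
      dist S P < δ → Coc St X M c (H Q) (H R) (H S) := by
    have loc : ∀ P : ℝ × ℝ, ∃ δ > 0, ∀ Q R S : ℝ × ℝ, dist Q P < δ → dist R P < δ →
      dist S P < δ → Coc St X M c (H Q) (H R) (H S) := by
      intro P
      obtain ⟨δ, hδ, h1⟩ := h.cocycle (hHX P)
      obtain ⟨η, hη, h2⟩ := Metric.continuousAt_iff.1 (hc.continuousAt (x := P)) δ hδ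
      exact ⟨η, hη, fun Q R S dQ dR dS => h1 _ (hHX _) _ (hHX _) _ (hHX _) (h2 dQ) (h2 dR) (h2 dS)⟩
    choose δ hδ hloc using loc
    obtain ⟨η, hη, hη'⟩ := lebesgue_number_lemma_of_metric (isCompact_Icc (a := (0 : ℝ × ℝ)) (b := 1))
      (c := fun P : ℝ × ℝ => Metric.ball P (δ P)) (fun _ => Metric.isOpen_ball)
      (fun P _ => mem_iUnion.2 ⟨P, Metric.mem_ball_self (hδ P)⟩)
    refine ⟨η, hη, fun P hP Q R S dQ dR dS => ?_⟩
    obtain ⟨P', hP'⟩ := hη' P hP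
    exact hloc P' Q R S (hP' dQ) (hP' dR) (hP' dS)
  have halong : ∀ γ : ℝ → E, IsP St X γ → ∃ δ > 0, ∀ a ∈ Icc (0 : ℝ) 1, ∀ b, dist b a < δ →
      (γ a, γ b) ∈ M ∧ DH St X (sub γ a b) (fun u => c ((γ a, γ b), u)) := by
    intro γ hγ
    choose δ hδ hloc using h.along hγ
    obtain ⟨η, hη, hη'⟩ := lebesgue_number_lemma_of_metric (isCompact_Icc (a := (0 : ℝ)) (b := 1))
      (c := fun P : ℝ => Metric.ball P (δ P)) (fun _ => Metric.isOpen_ball)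
      (fun P _ => mem_iUnion.2 ⟨P, Metric.mem_ball_self (hδ P)⟩)
    refine ⟨η, hη, fun a ha b hb => ?_⟩
    obtain ⟨P', hP'⟩ := hη' a ha
    exact hloc P' a b (hP' (Metric.mem_ball_self hη)) (hP' hb)
  obtain ⟨δ, hδ, hcoc⟩ := hcoc
  obtain ⟨δ0, hδ0, hal0⟩ := halong σ₀ h₀
  obtain ⟨δ1, hδ1, hal1⟩ := halong σ₁ h₁
  obtain ⟨n, hn⟩ := exists_nat_one_div_lt (show 0 < min δ (min δ0 δ1) by positivity)
  set N : ℕ := n + 1 with hN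
  have hNpos : (0 : ℝ) < N := by rw [hN]; positivity
  have hn' : 1 / (N : ℝ) < min δ (min δ0 δ1) := by rw [hN]; push_cast; exact hn
  have hnδ := hn'.trans_le (min_le_left _ _)
  have hnδ0 := hn'.trans_le ((min_le_right _ _).trans (min_le_left _ _))
  have hnδ1 := hn'.trans_le ((min_le_right _ _).trans (min_le_right _ _))
  let t : ℕ → ℝ := fun j => j / N
  have t0 : t 0 = 0 := by simp [t]
  have tN : t N = 1 := by simp only [t]; field_simp
  have ht : ∀ j ≤ N, t j ∈ Icc (0 : ℝ) 1 := by
    intro j hj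
    have : (j : ℝ) ≤ N := by exact_mod_cast hj
    exact ⟨by positivity, by simp only [t]; rw [div_le_one hNpos]; exact this⟩
  have hts : ∀ j, dist (t (j + 1)) (t j) = 1 / N := by
    intro j
    have : t (j + 1) - t j = 1 / N := by simp only [t]; push_cast; ring
    rw [Real.dist_eq, this, abs_of_pos (by positivity)]
  let v : ℕ → ℕ → E := fun i j => H (t i, t j)
  have p0 : DH St X (sub σ₀ 0 1) (Row c (v 0) N) := by
    have := Row_path h h₀ t t0 N fun j hj => hal0 (t j) (ht j hj.le) _ (by rw [hts]; exact hnδ0)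
    have hv : v 0 = fun j => σ₀ (t j) := by funext j; simp only [v, t0, e0]
    rwa [tN, ← hv] at this
  have p1 : DH St X (sub σ₁ 0 1) (Row c (v N) N) := by
    have := Row_path h h₁ t t0 N fun j hj => hal1 (t j) (ht j hj.le) _ (by rw [hts]; exact hnδ1)
    have hv : v N = fun j => σ₁ (t j) := by funext j; simp only [v, tN, e1]
    rwa [tN, ← hv] at this
  have hself : ∀ s : ℝ, ∀ j, dist s (t j) < δ ∨ True := fun _ _ => Or.inr trivial
  have step : ∀ i < N, DH St X (Row c (v i) N) (Row c (v (i + 1)) N) := by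
    intro i hi
    have hd : ∀ j, dist (t i, t j) (t i, t j) < δ ∧ dist (t i, t (j + 1)) (t i, t j) < δ ∧
        dist (t (i + 1), t j) (t i, t j) < δ ∧ dist (t (i + 1), t (j + 1)) (t i, t j) < δ := by
      intro j
      simp only [Prod.dist_eq, dist_self, hts]
      have : 0 < 1 / (N : ℝ) := by positivity
      refine ⟨by simpa using hδ, ?_, ?_, ?_⟩ <;> simp [max_lt_iff, hδ] <;> simpa using hnδ
    have hmem : ∀ j < N, (t i, t j) ∈ Icc (0 : ℝ × ℝ) 1 := fun j hj =>
      ⟨⟨(ht i hi.le).1, (ht j hj.le).1⟩, ⟨(ht i hi.le).2, (ht j hj.le).2⟩⟩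
    have c1 : ∀ j < N, Coc St X M c (v i j) (v i (j + 1)) (v (i + 1) (j + 1)) := fun j hj =>
      hcoc _ (hmem j hj) _ _ _ (hd j).1 (hd j).2.1 (hd j).2.2.2
    have c2 : ∀ j < N, Coc St X M c (v i j) (v (i + 1) j) (v (i + 1) (j + 1)) := fun j hj =>
      hcoc _ (hmem j hj) _ _ _ (hd j).1 (hd j).2.2.1 (hd j).2.2.2
    have hv0 : v i 0 = v (i + 1) 0 := by simp only [v, t0, ex]
    have hvN : v (i + 1) N = v i N := by simp only [v, tN, ey]
    have main := Row_step h (v i) (v (i + 1)) (hHX _) hv0 N c1 c2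
    obtain ⟨r1, r2, r3⟩ := Row_isP h (v i) (hHX _) N fun j hj => (c1 j hj).1
    refine DH.trans ?_ main
    have e : (fun u => c ((v i N, v (i + 1) N), u)) = fun _ => Row c (v i) N 1 := by
      funext u
      rw [hvN, h.diag, r3]
    rw [e]
    exact (DH.cat_const r1).symm
  have all : ∀ i ≤ N, DH St X (sub σ₀ 0 1) (Row c (v i) N) := by
    intro i
    induction i with
    | zero => exact fun _ => p0
    | succ i ih => exact fun hi => (ih (Nat.le_of_succ_le hi)).trans (step i hi)
  refine ((all N le_rfl).trans p1.symm).congr (fun u _ => ?_) (fun u _ => ?_) <;> simp [sub]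

end grid

section final

variable {St : OMinimalRealExpansion}

theorem DefSet.toD {α : Type} [Fintype α] {s : Set (α → ℝ)} (h : St.DefSet s) :
    D St (fun v : α → ℝ => v ∈ s) := h

theorem D.toDefSet {α : Type} [Fintype α] {s : Set (α → ℝ)} (h : D St (fun v : α → ℝ => v ∈ s)) :
    St.DefSet s := h

theorem path_isP {n : ℕ} {c : Set (Fin n → ℝ)} {x y : c} (σ : Path x y)
    (hσ : St.DefSet {v : Unit ⊕ Fin n → ℝ | ∃ t : unitInterval,
      v (Sum.inl ()) = (t : ℝ) ∧ ∀ j, ((σ t : Fin n → ℝ) j = v (Sum.inr j))}) :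
    IsP St c (fun u => (σ ⟨clamp u, clamp_mem u⟩ : Fin n → ℝ)) := by
  have hcu : Continuous (fun u : ℝ => (⟨clamp u, clamp_mem u⟩ : unitInterval)) :=
    Continuous.subtype_mk (by fun_prop) _
  refine ⟨?_, continuous_subtype_val.comp (σ.continuous.comp hcu), fun u => Subtype.coe_prop _⟩
  have hm : DF St (fun p : ℝ × (Fin n → ℝ) => (Sum.elim (fun _ => clamp p.1) p.2 : Unit ⊕ Fin n → ℝ)) := by
    refine DF.pi fun i => ?_
    rcases i with i | i
    · simp only [Sum.elim_inl]; fun_prop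
    · simp only [Sum.elim_inr]; fun_prop
  refine DF.of_graph (((DefSet.toD hσ).comp hm).congr fun p => ?_)
  simp only [mem_ofPred_eq, Sum.elim_inl, Sum.elim_inr]
  constructor
  · intro h
    exact ⟨⟨clamp p.1, clamp_mem _⟩, rfl, fun j => by rw [h]⟩
  · rintro ⟨t, h1, h2⟩
    have : (⟨clamp p.1, clamp_mem p.1⟩ : unitInterval) = t := Subtype.ext h1
    rw [this]
    exact funext h2

end final

theorem definable_paths_definably_homotopic
    (St : OMinimalRealExpansion) {n : ℕ} (c : Set (Fin n → ℝ)) [Group c]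
    (hdef : IsDefinableGroup St c) [ConnectedSpace c]
    (x y : c) (σ₀ σ₁ : Path x y)
    (hσ₀ : St.DefSet {v : Unit ⊕ Fin n → ℝ | ∃ t : unitInterval,
      v (Sum.inl ()) = (t : ℝ) ∧ ∀ j, ((σ₀ t : Fin n → ℝ) j = v (Sum.inr j))})
    (hσ₁ : St.DefSet {v : Unit ⊕ Fin n → ℝ | ∃ t : unitInterval,
      v (Sum.inl ()) = (t : ℝ) ∧ ∀ j, ((σ₁ t : Fin n → ℝ) j = v (Sum.inr j))})
    (hhom : σ₀.Homotopic σ₁) :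
    ∃ F : Path.Homotopy σ₀ σ₁,
      St.DefSet {v : Fin 2 ⊕ Fin n → ℝ | ∃ s t : unitInterval,
        v (Sum.inl 0) = (s : ℝ) ∧ v (Sum.inl 1) = (t : ℝ) ∧
        ∀ j, ((F (s, t) : Fin n → ℝ) j = v (Sum.inr j))} := by
  obtain ⟨F₀⟩ := hhom
  have hX : D St (fun p : Fin n → ℝ => p ∈ c) := hdef.1
  have i0 := path_isP σ₀ hσ₀
  have i1 := path_isP σ₁ hσ₁
  have hcu : Continuous (fun u : ℝ => (⟨clamp u, clamp_mem u⟩ : unitInterval)) :=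
    Continuous.subtype_mk (by fun_prop) _
  have z0 : (⟨clamp 0, clamp_mem 0⟩ : unitInterval) = 0 := Subtype.ext clamp_zero
  have z1 : (⟨clamp 1, clamp_mem 1⟩ : unitInterval) = 1 := Subtype.ext clamp_one
  have hcl : ∀ t : unitInterval, (⟨clamp t, clamp_mem t⟩ : unitInterval) = t :=
    fun t => Subtype.ext (clamp_of_mem t.2)
  obtain ⟨H, d1, d2, d3, d4, d5, d6, d7⟩ := grid_main (St := St) hX i0 i1
    (fun p => (F₀ (⟨clamp p.1, clamp_mem p.1⟩, ⟨clamp p.2, clamp_mem p.2⟩) : Fin n → ℝ))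
    (continuous_subtype_val.comp (F₀.continuous.comp
      ((hcu.comp continuous_fst).prodMk (hcu.comp continuous_snd))))
    (fun p => Subtype.coe_prop _)
    (fun u => by simp only [z0]; exact congrArg Subtype.val (F₀.apply_zero _))
    (fun u => by simp only [z1]; exact congrArg Subtype.val (F₀.apply_one _))
    (x : Fin n → ℝ) (y : Fin n → ℝ)
    (fun s => by simp only [z0, Path.Homotopy.source])
    (fun s => by simp only [z1, Path.Homotopy.target])
  refine ⟨⟨⟨⟨fun p => ⟨H (p.1, p.2), d3 _⟩, ?_⟩, ?_, ?_⟩, ?_⟩, ?_⟩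
  · exact Continuous.subtype_mk (d2.comp (by fun_prop)) _
  · intro t
    refine Subtype.ext ?_
    have := d4 t t.2
    simp only [hcl] at this
    simpa using this
  · intro t
    refine Subtype.ext ?_
    have := d5 t t.2
    simp only [hcl] at this
    simpa using this
  · rintro s t (rfl | ht)
    · refine Subtype.ext ?_
      have := d6 s
      simp only [z0] at this
      simpa using this
    · rw [mem_singleton_iff] at ht
      subst ht
      refine Subtype.ext ?_
      have := d7 s
      simp only [z1] at this
      simpa using this
  · apply D.toDefSet
    have hm : D St (fun v : Fin 2 ⊕ Fin n → ℝ => (0 ≤ v (Sum.inl 0) ∧ v (Sum.inl 0) ≤ 1) ∧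
        (0 ≤ v (Sum.inl 1) ∧ v (Sum.inl 1) ≤ 1) ∧
        H (v (Sum.inl 0), v (Sum.inl 1)) = fun j => v (Sum.inr j)) := by
      have : DF St (fun v : Fin 2 ⊕ Fin n → ℝ => (fun j => v (Sum.inr j) : Fin n → ℝ)) :=
        DF.pi fun j => by fun_prop
      apply_rules [D.and, D.le, D.eq] <;> fun_prop
    refine hm.congr fun v => ?_
    constructor
    · rintro ⟨s, t, h1, h2, h3⟩
      refine ⟨by rw [h1]; exact s.2, by rw [h2]; exact t.2, ?_⟩
      rw [h1, h2]
      exact funext h3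
    · rintro ⟨h1, h2, h3⟩
      refine ⟨⟨_, h1⟩, ⟨_, h2⟩, rfl, rfl, fun j => ?_⟩
      exact congrFun h3 j
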